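/- For every dimension n ≥ 1 there exists a constant C₀ > 0 as follows. Suppose T : C¹_c(ℝⁿ) → L²(ℝⁿ) is linear and has a formal adjoint T* : C¹_c(ℝⁿ) → L²(ℝⁿ), and suppose A > 0 is such that: (i) ‖Tω‖_{L²} ≤ A r^{n/2} and ‖T*ω‖_{L²} ≤ A r^{n/2} for every r > 0 and every r-bump function ω; (ii) there is a kernel K(x,y), C¹ off the diagonal of ℝⁿ × ℝⁿ, such that for every F ∈ C¹_c(ℝⁿ) and every x outside supp F one has (TF)(x) = ∫_{ℝⁿ} K(x,y)F(y) dy; (iii) |K(x,y)| ≤ A|x−y|^{−n} for all x ≠ y, and |∂_{x_i}K(x,y)| ≤ A|x−y|^{−(n+1)} and |∂_{y_i}K(x,y)| ≤ A|x−y|^{−(n+1)} for every i = 1,…,n and all x ≠ y. Then T extends to a bounded linear operator on L²(ℝⁿ) with operator norm ‖T‖ ≤ C₀ A. -/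

import Mathlib

open MeasureTheory Metric

noncomputable section

/-- An `r`-bump function on `ℝⁿ`: a `C¹` function supported in some ball of radius `r`,
with `‖ω‖_∞ ≤ 1` and `‖∂_jω‖_∞ ≤ 1/r` for each partial derivative. -/
def IsBump (n : ℕ) (r : ℝ) (ω : EuclideanSpace ℝ (Fin n) → ℂ) : Prop :=
  ContDiff ℝ 1 ω ∧
  (∃ c : EuclideanSpace ℝ (Fin n), tsupport ω ⊆ closedBall c r) ∧
  (∀ x, ‖ω x‖ ≤ 1) ∧
  (∀ i : Fin n, ∀ x, ‖fderiv ℝ ω x (EuclideanSpace.single i 1)‖ ≤ 1 / r)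

abbrev ZLat (n : ℕ) := Fin n → ℤ

def lnorm {n : ℕ} (m : ZLat n) : ℕ := Finset.univ.sup fun i => (m i).natAbs

lemma norm_eq_lnorm {n : ℕ} (m : ZLat n) : ‖m‖ = (lnorm m : ℝ) := by
  apply le_antisymm
  · rw [pi_norm_le_iff_of_nonneg (by positivity)]
    intro i
    have h : (m i).natAbs ≤ lnorm m := Finset.le_sup (f := fun i => (m i).natAbs) (Finset.mem_univ i)
    rw [Int.norm_eq_abs]
    have : |(m i : ℝ)| = ((m i).natAbs : ℝ) := by simp [Nat.cast_natAbs]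
    rw [this]
    exact_mod_cast h
  · have : ∀ i, (m i).natAbs ≤ ⌊‖m‖⌋₊ := by
      intro i
      apply Nat.le_floor
      have h := norm_le_pi_norm m i
      rw [Int.norm_eq_abs] at h
      have h2 : |(m i : ℝ)| = ((m i).natAbs : ℝ) := by simp [Nat.cast_natAbs]
      rwa [h2] at h
    have h3 : lnorm m ≤ ⌊‖m‖⌋₊ := Finset.sup_le fun i _ => this i
    exact (Nat.cast_le.mpr h3).trans (Nat.floor_le (norm_nonneg _))

lemma abs_coord_le {n : ℕ} (m : ZLat n) (i : Fin n) : |(m i : ℝ)| ≤ ‖m‖ := by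
  have h := norm_le_pi_norm m i
  rwa [Int.norm_eq_abs] at h

lemma one_le_norm_lat {n : ℕ} {m : ZLat n} (h : m ≠ 0) : 1 ≤ ‖m‖ := by
  have h1 : 0 < ‖m‖ := norm_pos_iff.mpr h
  rw [norm_eq_lnorm] at *
  exact_mod_cast h1

/-- box of lattice points with sup norm at most `s`. -/
def lbox (n s : ℕ) : Finset (ZLat n) := Fintype.piFinset fun _ => Finset.Icc (-(s : ℤ)) s

lemma mem_lbox {n s : ℕ} {m : ZLat n} : m ∈ lbox n s ↔ lnorm m ≤ s := by
  simp only [lbox, Fintype.mem_piFinset, Finset.mem_Icc, lnorm, Finset.sup_le_iff, Finset.mem_univ,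
    true_imp_iff]
  refine forall_congr' fun i => ?_
  omega

lemma card_lbox (n s : ℕ) : (lbox n s).card = (2 * s + 1) ^ n := by
  simp only [lbox, Fintype.card_piFinset, Int.card_Icc, Finset.prod_const, Finset.card_univ,
    Fintype.card_fin]
  congr 1
  omega

lemma pow_sub_le (x d : ℝ) (hx : 0 ≤ x) (hd : 0 ≤ d) (n : ℕ) :
    (x + d) ^ n - x ^ n ≤ n * d * (x + d) ^ (n - 1) := by
  induction n with
  | zero => simp
  | succ k ih =>
    rcases Nat.eq_zero_or_pos k with rfl | hk
    · simp
    · have e : (x + d) ^ (k + 1 - 1) = (x + d) * (x + d) ^ (k - 1) := by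
        rw [← pow_succ']; congr 1; omega
      have h2 : x ^ k ≤ (x + d) ^ k := pow_le_pow_left₀ hx (by linarith) k
      have e2 : (x + d) ^ k = (x + d) * (x + d) ^ (k - 1) := by
        rw [← pow_succ']; congr 1; omega
      rw [e, ← e2]
      have : (x + d) ^ (k + 1) - x ^ (k + 1) = (x + d) * ((x + d) ^ k - x ^ k) + d * x ^ k := by ring
      rw [this]
      have h3 : (x + d) * ((x + d) ^ k - x ^ k) ≤ (x + d) * (k * d * (x + d) ^ (k - 1)) :=
        mul_le_mul_of_nonneg_left ih (by linarith)
      have h4 : (x + d) * (k * d * (x + d) ^ (k - 1)) = k * d * (x + d) ^ k := by rw [e2]; ring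
      push_cast
      nlinarith [mul_le_mul_of_nonneg_left h2 hd]

lemma card_shell (n s : ℕ) (S : Finset (ZLat n)) (hS : ∀ m ∈ S, lnorm m = s) (hn : 1 ≤ n) :
    (S.card : ℝ) ≤ 2 * n * 2 ^ n * (s + 1 : ℝ) ^ (n - 1) := by
  rcases Nat.eq_zero_or_pos s with rfl | hs
  · have : S ⊆ lbox n 0 := fun m hm => mem_lbox.mpr (hS m hm).le
    have h := Finset.card_le_card this
    rw [card_lbox] at h
    simp at h
    have h1 : (S.card : ℝ) ≤ 1 := by exact_mod_cast h
    have hn' : (1 : ℝ) ≤ n := by exact_mod_cast hn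
    have h2 : (1 : ℝ) ≤ 2 ^ n := one_le_pow₀ (by norm_num)
    simp only [Nat.cast_zero, zero_add, one_pow, mul_one]
    nlinarith
  · have : S ⊆ lbox n s \ lbox n (s - 1) := by
      intro m hm
      rw [Finset.mem_sdiff, mem_lbox, mem_lbox, hS m hm]
      omega
    have h := Finset.card_le_card this
    have hsub : lbox n (s - 1) ⊆ lbox n s := by
      intro m; rw [mem_lbox, mem_lbox]; omega
    rw [Finset.card_sdiff_of_subset hsub, card_lbox, card_lbox] at h
    have hle : (2 * (s - 1) + 1) ^ n ≤ (2 * s + 1) ^ n := Nat.pow_le_pow_left (by omega) n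
    have h' : (S.card : ℝ) ≤ ((2 * s + 1) ^ n : ℕ) - ((2 * (s - 1) + 1) ^ n : ℕ) := by
      rw [← Nat.cast_sub hle]; exact_mod_cast h
    obtain ⟨t, rfl⟩ : ∃ t, s = t + 1 := ⟨s - 1, by omega⟩
    simp only [Nat.add_sub_cancel] at h'
    push_cast at h'
    have h3 := pow_sub_le (2 * (t : ℝ) + 1) 2 (by positivity) (by norm_num) n
    have e : (2 * (t : ℝ) + 1 + 2) = 2 * ((t : ℝ) + 1) + 1 := by ring
    rw [e] at h3
    have h4 : (2 * ((t : ℝ) + 1) + 1) ^ (n - 1) ≤ (2 * (((t : ℝ) + 1) + 1)) ^ (n - 1) :=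
      pow_le_pow_left₀ (by positivity) (by linarith) _
    rw [mul_pow] at h4
    have h5 : (2 : ℝ) ^ (n - 1) ≤ 2 ^ n := pow_le_pow_right₀ (by norm_num) (by omega)
    push_cast
    calc (S.card : ℝ) ≤ n * 2 * (2 * ((t : ℝ) + 1) + 1) ^ (n - 1) := h'.trans h3
      _ ≤ n * 2 * (2 ^ n * ((t : ℝ) + 1 + 1) ^ (n - 1)) := by
          gcongr
          exact h4.trans (by gcongr)
      _ = _ := by ring

/-- sum of a radial function over a set of lattice points. -/
lemma sum_radial_le (n : ℕ) (hn : 1 ≤ n) (g : ℕ → ℝ) (hg : ∀ s, 0 ≤ g s) (S : Finset (ZLat n))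
    (R : Finset ℕ) (hS : ∀ m ∈ S, lnorm m ∈ R) :
    ∑ m ∈ S, g (lnorm m) ≤ 2 * n * 2 ^ n * ∑ s ∈ R, (s + 1 : ℝ) ^ (n - 1) * g s := by
  classical
  rw [← Finset.sum_fiberwise_of_maps_to hS, Finset.mul_sum]
  refine Finset.sum_le_sum fun s _ => ?_
  have h1 : ∑ m ∈ S with lnorm m = s, g (lnorm m) = ((S.filter fun m => lnorm m = s).card : ℝ) * g s := by
    rw [Finset.sum_congr rfl (g := fun _ => g s)]
    · simp
    · intro m hm; rw [(Finset.mem_filter.mp hm).2]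
  rw [h1]
  have := card_shell n s (S.filter fun m => lnorm m = s) (fun m hm => (Finset.mem_filter.mp hm).2) hn
  calc _ ≤ _ := mul_le_mul_of_nonneg_right this (hg s)
    _ = _ := by ring

/-- cells of side `q`. -/
def fib {n : ℕ} (q : ℕ) (y : ZLat n) : Finset (ZLat n) :=
  Fintype.piFinset fun i => Finset.Ico ((q : ℤ) * y i) (q * y i + q)

def qd {n : ℕ} (q : ℕ) (x : ZLat n) : ZLat n := fun i => x i / (q : ℤ)

lemma mem_fib {n q : ℕ} (hq : 0 < q) {x y : ZLat n} : x ∈ fib q y ↔ qd q x = y := by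
  simp only [fib, Fintype.mem_piFinset, Finset.mem_Ico, qd, funext_iff]
  refine forall_congr' fun i => ?_
  have hq' : (0 : ℤ) < q := by exact_mod_cast hq
  rw [Int.ediv_eq_iff_of_pos hq']
  constructor
  · rintro ⟨h1, h2⟩; constructor <;> linarith
  · rintro ⟨h1, h2⟩; constructor <;> linarith

lemma card_fib {n : ℕ} (q : ℕ) (y : ZLat n) : (fib q y).card = q ^ n := by
  simp [fib, Fintype.card_piFinset]

lemma qd_qd {n : ℕ} (q r : ℕ) (x : ZLat n) : qd r (qd q x) = qd (q * r) x := by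
  funext i
  simp only [qd, Nat.cast_mul]
  rw [Int.ediv_ediv_of_nonneg]
  positivity

lemma qd_one {n : ℕ} (x : ZLat n) : qd 1 x = x := by
  funext i; simp [qd]

lemma fib_one {n : ℕ} (y : ZLat n) : fib 1 y = {y} := by
  ext x; rw [mem_fib one_pos, qd_one, Finset.mem_singleton]

/-- sums over cells of cells. -/
lemma sum_fib_fib {n : ℕ} {M : Type*} [AddCommMonoid M] {q r : ℕ} (hq : 0 < q) (hr : 0 < r)
    (F : ZLat n → M) (y : ZLat n) :
    ∑ x ∈ fib (q * r) y, F x = ∑ z ∈ fib r y, ∑ x ∈ fib q z, F x := by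
  classical
  rw [← Finset.sum_fiberwise_of_maps_to (s := fib (q * r) y) (t := fib r y) (g := qd q)]
  · refine Finset.sum_congr rfl fun z hz => Finset.sum_congr ?_ fun _ _ => rfl
    ext x
    rw [Finset.mem_filter, mem_fib (by positivity), mem_fib hq]
    rw [mem_fib hr] at hz
    constructor
    · exact fun h => h.2
    · intro h; refine ⟨?_, h⟩
      rw [← qd_qd, h, hz]
  · intro x hx
    rw [mem_fib (by positivity)] at hx
    rw [mem_fib hr, qd_qd, hx]

lemma fib_coord {n q : ℕ} {x y : ZLat n} (hx : x ∈ fib q y) (i : Fin n) :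
    (q : ℤ) * y i ≤ x i ∧ x i < q * y i + q := by
  simp only [fib, Fintype.mem_piFinset, Finset.mem_Ico] at hx
  exact hx i

/-- big boxes -/
def bx (n : ℕ) (R : ℕ) : Finset (ZLat n) := Fintype.piFinset fun _ => Finset.Ico (-(R : ℤ)) R

lemma qd_mem_bx {n q R : ℕ} (hq : 0 < q) (x : ZLat n) : qd q x ∈ bx n R ↔ x ∈ bx n (q * R) := by
  simp only [bx, Fintype.mem_piFinset, Finset.mem_Ico, qd]
  refine forall_congr' fun i => ?_
  have hq' : (0 : ℤ) < q := by exact_mod_cast hq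
  rw [Int.le_ediv_iff_mul_le hq', Int.ediv_lt_iff_lt_mul hq']
  push_cast
  constructor
  · rintro ⟨h1, h2⟩; constructor <;> linarith
  · rintro ⟨h1, h2⟩; constructor <;> linarith

lemma sum_bx_fib {n : ℕ} {M : Type*} [AddCommMonoid M] {q R : ℕ} (hq : 0 < q)
    (F : ZLat n → M) :
    ∑ x ∈ bx n (q * R), F x = ∑ y ∈ bx n R, ∑ x ∈ fib q y, F x := by
  classical
  rw [← Finset.sum_fiberwise_of_maps_to (s := bx n (q * R)) (t := bx n R) (g := qd q)]
  · refine Finset.sum_congr rfl fun z hz => Finset.sum_congr ?_ fun _ _ => rfl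
    ext x
    rw [Finset.mem_filter, mem_fib hq, ← qd_mem_bx hq]
    constructor
    · exact fun h => h.2
    · intro h; refine ⟨?_, h⟩
      rw [h]; exact hz
  · intro x hx
    exact (qd_mem_bx hq x).mpr hx

/-- translation of cells -/
lemma sum_fib_translate {n : ℕ} {M : Type*} [AddCommMonoid M] {q : ℕ}
    (F : ZLat n → M) (y y' : ZLat n) :
    ∑ x ∈ fib q y', F x = ∑ x ∈ fib q y, F (x + (q : ℤ) • (y' - y)) := by
  refine (Finset.sum_bij (fun x _ => x + (q : ℤ) • (y' - y)) ?_ ?_ ?_ ?_).symm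
  · intro x hx
    simp only [fib, Fintype.mem_piFinset, Finset.mem_Ico, Pi.add_apply, Pi.smul_apply, Pi.sub_apply,
      smul_eq_mul] at hx ⊢
    intro i
    have := hx i
    constructor <;> nlinarith [this.1, this.2]
  · intro a _ b _ h; exact add_right_cancel h
  · intro x hx
    refine ⟨x - (q : ℤ) • (y' - y), ?_, by simp⟩
    simp only [fib, Fintype.mem_piFinset, Finset.mem_Ico, Pi.sub_apply, Pi.smul_apply,
      smul_eq_mul] at hx ⊢
    intro i
    have := hx i
    constructor <;> nlinarith [this.1, this.2]
  · intro _ _; rfl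

/-- number of points of a cell leaving the cell after translation by `m`. -/
lemma card_exit {n : ℕ} (hn : 1 ≤ n) {q : ℕ} (hq : 0 < q) (y m : ZLat n) :
    (((fib q y).filter fun z => z + m ∉ fib q y).card : ℝ) ≤ n * ‖m‖ * (q : ℝ) ^ (n - 1) := by
  classical
  let A : Fin n → Finset (ZLat n) := fun i => Fintype.piFinset fun j =>
    if j = i then (Finset.Ico ((q : ℤ) * y j) (q * y j + q)).filter
      (fun t => ¬ ((q : ℤ) * y j ≤ t + m j ∧ t + m j < q * y j + q))
    else Finset.Ico ((q : ℤ) * y j) (q * y j + q)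
  have hsub : ((fib q y).filter fun z => z + m ∉ fib q y) ⊆ Finset.univ.biUnion A := by
    intro z hz
    rw [Finset.mem_filter] at hz
    obtain ⟨hz1, hz2⟩ := hz
    simp only [fib, Fintype.mem_piFinset, Finset.mem_Ico, Pi.add_apply, not_forall] at hz1 hz2
    obtain ⟨i, hi⟩ := hz2
    rw [Finset.mem_biUnion]
    refine ⟨i, Finset.mem_univ _, ?_⟩
    simp only [A, Fintype.mem_piFinset]
    intro j
    split_ifs with h
    · subst h
      rw [Finset.mem_filter, Finset.mem_Ico]
      exact ⟨hz1 j, hi⟩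
    · rw [Finset.mem_Ico]; exact hz1 j
  have hA : ∀ i, ((A i).card : ℝ) ≤ ‖m‖ * (q : ℝ) ^ (n - 1) := by
    intro i
    simp only [A, Fintype.card_piFinset]
    rw [← Finset.mul_prod_erase _ _ (Finset.mem_univ i)]
    have h1 : ∏ x ∈ Finset.univ.erase i, (if x = i then (Finset.Ico ((q : ℤ) * y x) (q * y x + q)).filter
      (fun t => ¬ ((q : ℤ) * y x ≤ t + m x ∧ t + m x < q * y x + q))
        else Finset.Ico ((q : ℤ) * y x) (q * y x + q)).card = q ^ (n - 1) := by
      rw [Finset.prod_congr rfl (g := fun _ => q)]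
      · simp [Finset.card_erase_of_mem]
      · intro j hj
        rw [if_neg (Finset.ne_of_mem_erase hj)]
        simp
    rw [h1, if_pos rfl]
    push_cast
    refine mul_le_mul_of_nonneg_right ?_ (by positivity)
    have h2 : (Finset.Ico ((q : ℤ) * y i) (q * y i + q)).filter
      (fun t => ¬ ((q : ℤ) * y i ≤ t + m i ∧ t + m i < q * y i + q)) ⊆
      if 0 ≤ m i then Finset.Ico ((q : ℤ) * y i + q - m i) (q * y i + q) else
        Finset.Ico ((q : ℤ) * y i) (q * y i - m i) := by
      intro t ht
      rw [Finset.mem_filter, Finset.mem_Ico] at ht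
      split_ifs with h <;> rw [Finset.mem_Ico] <;> omega
    have h3 := Finset.card_le_card h2
    refine le_trans ?_ (abs_coord_le m i)
    have h4 : ((m i).natAbs : ℝ) = |(m i : ℝ)| := by simp [Nat.cast_natAbs]
    rw [← h4]
    have h5 : ∀ k : ℕ, k ≤ (m i).natAbs → (k : ℝ) ≤ ((m i).natAbs : ℝ) := fun k h => by exact_mod_cast h
    apply h5
    refine h3.trans ?_
    split_ifs with h <;> rw [Int.card_Ico] <;> omega
  calc (((fib q y).filter fun z => z + m ∉ fib q y).card : ℝ) ≤ ((Finset.univ.biUnion A).card : ℝ) := by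
        exact_mod_cast Finset.card_le_card hsub
    _ ≤ ((∑ i, (A i).card : ℕ) : ℝ) := by exact_mod_cast Finset.card_biUnion_le
    _ = ∑ i, ((A i).card : ℝ) := by push_cast; rfl
    _ ≤ ∑ i : Fin n, ‖m‖ * (q : ℝ) ^ (n - 1) := Finset.sum_le_sum fun i _ => hA i
    _ = _ := by simp; ring

/-- general perimeter sum -/
lemma perimeter_sum {n : ℕ} (hn : 1 ≤ n) {q : ℕ} (hq : 0 < q) (y : ZLat n) (X M : Finset (ZLat n))
    (k : ZLat n → ℝ) (hk : ∀ m, 0 ≤ k m)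
    (hM : ∀ z ∈ fib q y, ∀ w ∈ X, w ∉ fib q y → w - z ∈ M) :
    ∑ z ∈ fib q y, ∑ w ∈ X with w ∉ fib q y, k (w - z) ≤
      ∑ m ∈ M, k m * min ((q : ℝ) ^ n) (n * ‖m‖ * (q : ℝ) ^ (n - 1)) := by
  classical
  have h1 : ∀ z ∈ fib q y, ∑ w ∈ X with w ∉ fib q y, k (w - z) ≤
      ∑ m ∈ M, if z + m ∉ fib q y then k m else 0 := by
    intro z hz
    rw [← Finset.sum_filter]
    have hinj : Set.InjOn (fun w => w - z) (X.filter fun w => w ∉ fib q y : Finset (ZLat n)) :=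
      fun a _ b _ h => sub_left_injective h
    rw [← Finset.sum_image (f := k) (g := fun w => w - z) hinj]
    refine Finset.sum_le_sum_of_subset_of_nonneg ?_ (fun _ _ _ => hk _)
    intro m hm
    rw [Finset.mem_image] at hm
    obtain ⟨w, hw, rfl⟩ := hm
    rw [Finset.mem_filter] at hw ⊢
    refine ⟨hM z hz w hw.1 hw.2, ?_⟩
    simpa using hw.2
  refine (Finset.sum_le_sum h1).trans ?_
  rw [Finset.sum_comm]
  refine Finset.sum_le_sum fun m _ => ?_
  rw [← Finset.sum_filter, Finset.sum_const, nsmul_eq_mul, mul_comm]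
  refine mul_le_mul_of_nonneg_left (le_min ?_ (card_exit hn hq y m)) (hk m)
  have := Finset.card_filter_le (fib q y) (fun z => z + m ∉ fib q y)
  rw [card_fib] at this
  exact_mod_cast this

lemma sum_radial_shift (n : ℕ) (hn : 1 ≤ n) (g : ℕ → ℝ) (hg : ∀ s, 0 ≤ g s) (S : Finset (ZLat n))
    (w : ZLat n) (R : Finset ℕ) (hS : ∀ m ∈ S, lnorm (m - w) ∈ R) :
    ∑ m ∈ S, g (lnorm (m - w)) ≤ 2 * n * 2 ^ n * ∑ s ∈ R, (s + 1 : ℝ) ^ (n - 1) * g s := by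
  classical
  have hinj : Set.InjOn (fun m => m - w) (S : Set (ZLat n)) := fun a _ b _ h => sub_left_injective h
  rw [← Finset.sum_image (f := fun m => g (lnorm m)) (g := fun m => m - w) hinj]
  apply sum_radial_le n hn g hg
  intro m hm
  obtain ⟨x, hx, rfl⟩ := Finset.mem_image.mp hm
  exact hS x hx

def kap (n : ℕ) (m : ZLat n) : ℝ := ((1 + ‖m‖) ^ (n + 1))⁻¹

lemma kap_nonneg (n : ℕ) (m : ZLat n) : 0 ≤ kap n m := by unfold kap; positivity

lemma kap_neg (n : ℕ) (z w : ZLat n) : kap n (z - w) = kap n (w - z) := by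
  unfold kap; rw [norm_sub_rev]

lemma summable_rpow_aux : Summable fun s : ℕ => ((s : ℝ) + 1) ^ (-(3/2) : ℝ) := by
  have := (summable_nat_add_iff (f := fun s : ℕ => (s : ℝ) ^ (-(3/2) : ℝ)) 1).mpr
    (Real.summable_nat_rpow.mpr (by norm_num))
  simpa using this

lemma pow_aux (n : ℕ) (hn : 1 ≤ n) (t : ℝ) (ht : 0 < t) :
    t ^ (n - 1) * (t ^ (n + 1))⁻¹ = (t ^ 2)⁻¹ := by
  have : t ^ (n + 1) = t ^ (n - 1) * t ^ 2 := by rw [← pow_add]; congr 1; omega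
  rw [this, mul_inv, ← mul_assoc, mul_inv_cancel₀ (by positivity), one_mul]

/-- the kernel `kap` with an additional square root weight is summable -/
lemma kap_sqrt_sum (n : ℕ) (hn : 1 ≤ n) : ∃ C : ℝ, 0 < C ∧ ∀ (S : Finset (ZLat n)) (w : ZLat n),
    ∑ z ∈ S, kap n (z - w) * √(1 + ‖z - w‖) ≤ C := by
  classical
  refine ⟨2 * n * 2 ^ n * ∑' s : ℕ, ((s : ℝ) + 1) ^ (-(3/2) : ℝ), ?_, ?_⟩
  · have hn' : (0 : ℝ) < n := by exact_mod_cast hn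
    have := summable_rpow_aux.tsum_pos (fun s => by positivity) 0 (by positivity)
    positivity
  · intro S w
    have h1 := sum_radial_shift n hn (fun s => ((1 + (s : ℝ)) ^ (n + 1))⁻¹ * √(1 + s))
      (fun s => by positivity) S w (S.image fun m => lnorm (m - w))
      (fun m hm => Finset.mem_image_of_mem _ hm)
    simp only [kap, norm_eq_lnorm]
    refine h1.trans ?_
    gcongr
    refine le_trans (le_of_eq ?_) (summable_rpow_aux.sum_le_tsum (S.image fun m => lnorm (m - w)) (fun s _ => by positivity))
    refine Finset.sum_congr rfl fun s _ => ?_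
    have hs : (0 : ℝ) < s + 1 := by positivity
    rw [add_comm (1 : ℝ), ← mul_assoc, pow_aux n hn _ hs, Real.sqrt_eq_rpow, ← Real.rpow_natCast,
      ← Real.rpow_neg hs.le, ← Real.rpow_add hs]
    norm_num

lemma kap_sum (n : ℕ) (hn : 1 ≤ n) : ∃ C : ℝ, 0 < C ∧ ∀ (S : Finset (ZLat n)) (w : ZLat n),
    ∑ z ∈ S, kap n (z - w) ≤ C := by
  obtain ⟨C, hC, h⟩ := kap_sqrt_sum n hn
  refine ⟨C, hC, fun S w => le_trans (Finset.sum_le_sum fun z _ => ?_) (h S w)⟩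
  have : 1 ≤ √(1 + ‖z - w‖) := Real.one_le_sqrt.mpr (by linarith [norm_nonneg (z - w)])
  nlinarith [kap_nonneg n (z - w)]

lemma kap_perim (n : ℕ) (hn : 1 ≤ n) : ∃ C : ℝ, 0 < C ∧ ∀ (j : ℕ) (y : ZLat n) (X : Finset (ZLat n)),
    ∑ z ∈ fib (2 ^ j) y, ∑ w ∈ X with w ∉ fib (2 ^ j) y, kap n (w - z) ≤
      C * (((2 : ℝ) ^ j) ^ n * (81 / 100 : ℝ) ^ j) := by
  classical
  obtain ⟨C, hC, h⟩ := kap_sqrt_sum n hn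
  refine ⟨n * C, by have : (0 : ℝ) < n := (by exact_mod_cast hn); positivity, fun j y X => ?_⟩
  let M : Finset (ZLat n) := Finset.image₂ (fun z w => w - z) (fib (2 ^ j) y) X
  have h1 := perimeter_sum hn (q := 2 ^ j) (by positivity) y X M (kap n) (kap_nonneg n)
    (fun z hz w hw _ => Finset.mem_image₂_of_mem hz hw)
  refine h1.trans ?_
  have h2 := h M 0
  simp only [sub_zero] at h2
  have hn' : (1 : ℝ) ≤ n := by exact_mod_cast hn
  have key : ∀ m : ZLat n, kap n m * min (((2 ^ j : ℕ) : ℝ) ^ n) (n * ‖m‖ * ((2 ^ j : ℕ) : ℝ) ^ (n - 1)) ≤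
      (kap n m * √(1 + ‖m‖)) * (n * (((2 : ℝ) ^ j) ^ n * (81 / 100 : ℝ) ^ j)) := by
    intro m
    rw [mul_assoc (kap n m)]
    refine mul_le_mul_of_nonneg_left ?_ (kap_nonneg n m)
    push_cast
    set q : ℝ := 2 ^ j with hq
    have hqpos : 0 < q := by positivity
    set θ : ℝ := (81 / 100 : ℝ) ^ j with hθ
    have hθq : 1 ≤ θ ^ 2 * q := by
      rw [hθ, hq, ← pow_mul, mul_comm j 2, pow_mul, ← mul_pow]
      exact one_le_pow₀ (by norm_num)
    have hθpos : 0 < θ := by positivity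
    set r := √(1 + ‖m‖) with hr
    have hr2 : r ^ 2 = 1 + ‖m‖ := Real.sq_sqrt (by positivity)
    have hr1 : 1 ≤ r := Real.one_le_sqrt.mpr (by linarith [norm_nonneg m])
    have e : q ^ n = q * q ^ (n - 1) := by rw [← pow_succ']; congr 1; omega
    have hpp : 0 < q ^ (n - 1) := by positivity
    by_cases hc : 1 ≤ r * θ
    · refine (min_le_left _ _).trans ?_
      have : 0 < q ^ n := by positivity
      have h3 : 1 ≤ r * (n * θ) := by nlinarith
      nlinarith
    · push Not at hc
      refine (min_le_right _ _).trans ?_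
      rw [e]
      have h4 : ‖m‖ ≤ r * θ * q := by
        have : r * r ≤ r * (θ * q) := by
          apply mul_le_mul_of_nonneg_left _ (by linarith)
          have : r * θ * (θ * q) ≤ θ * q := by
            apply mul_le_of_le_one_left (by positivity) hc.le
          nlinarith
        nlinarith
      have : n * ‖m‖ * q ^ (n - 1) ≤ n * (r * θ * q) * q ^ (n - 1) := by gcongr
      linarith
  refine (Finset.sum_le_sum fun m _ => key m).trans ?_
  rw [← Finset.sum_mul]
  have : (∑ m ∈ M, kap n m * √(1 + ‖m‖)) * (n * (((2 : ℝ) ^ j) ^ n * (81 / 100 : ℝ) ^ j)) ≤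
    C * (n * (((2 : ℝ) ^ j) ^ n * (81 / 100 : ℝ) ^ j)) := by gcongr
  linarith

lemma size_sum (n : ℕ) (hn : 1 ≤ n) (R : ℕ) (S : Finset (ZLat n)) (hS : ∀ m ∈ S, lnorm m ≤ R) :
    ∑ m ∈ S, ‖m‖ * ((1 + ‖m‖) ^ n)⁻¹ ≤ 2 * n * 2 ^ n * (R + 1) := by
  have h1 := sum_radial_le n hn (fun s => (s : ℝ) * ((1 + (s : ℝ)) ^ n)⁻¹)
      (fun s => by positivity) S (Finset.range (R + 1))
      (fun m hm => Finset.mem_range.mpr (by have := hS m hm; omega))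
  simp only [norm_eq_lnorm]
  refine h1.trans ?_
  gcongr
  refine (Finset.sum_le_sum (g := fun _ => (1 : ℝ)) fun s _ => ?_).trans (by simp)
  have hs : (0 : ℝ) < s + 1 := by positivity
  have e : ((s : ℝ) + 1) ^ n = (s + 1) * ((s : ℝ) + 1) ^ (n - 1) := by
    rw [← pow_succ']; congr 1; omega
  rw [add_comm (1 : ℝ), e]
  have : 0 < ((s : ℝ) + 1) ^ (n - 1) := by positivity
  field_simp
  linarith

lemma far_sum (n : ℕ) (hn : 1 ≤ n) (ρ : ℝ) (hρ : 1 ≤ ρ) (c : ZLat n) (Y : Finset (ZLat n))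
    (hY : ∀ y ∈ Y, ρ ≤ ‖y - c‖) :
    ∑ y ∈ Y, ρ / ‖y - c‖ ^ (n + 1) ≤ 2 * n * 2 ^ n * (2 ^ n * 2) := by
  classical
  have h1 := sum_radial_shift n hn (fun s => ρ / (s : ℝ) ^ (n + 1))
      (fun s => by positivity) Y c (Y.image fun m => lnorm (m - c))
      (fun m hm => Finset.mem_image_of_mem _ hm)
  simp only [norm_eq_lnorm]
  refine h1.trans ?_
  gcongr
  set R := Y.image fun m => lnorm (m - c)
  have hR : ∀ s ∈ R, ρ ≤ s := by
    intro s hs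
    obtain ⟨y, hy, rfl⟩ := Finset.mem_image.mp hs
    have := hY y hy
    rwa [norm_eq_lnorm] at this
  set a := ⌈ρ⌉₊ with ha
  have ha1 : 1 ≤ a := Nat.one_le_ceil_iff.mpr (by linarith)
  obtain ⟨b, hb⟩ : ∃ b, ∀ s ∈ R, s < b := ⟨R.sup id + 1, fun s hs => Nat.lt_succ_of_le (Finset.le_sup (f := id) hs)⟩
  have hsub : R ⊆ Finset.Ioo (a - 1) b := by
    intro s hs
    rw [Finset.mem_Ioo]
    have : a ≤ s := Nat.ceil_le.mpr (hR s hs)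
    exact ⟨by omega, hb s hs⟩
  have h2 : ∀ s ∈ R, ((s : ℝ) + 1) ^ (n - 1) * (ρ / (s : ℝ) ^ (n + 1)) ≤ 2 ^ n * ρ * ((s : ℝ) ^ 2)⁻¹ := by
    intro s hs
    have hs1 : (1 : ℝ) ≤ s := hρ.trans (hR s hs)
    have h3 : ((s : ℝ) + 1) ^ (n - 1) ≤ (2 * s) ^ (n - 1) := by gcongr; linarith
    have h4 : (2 : ℝ) ^ (n - 1) ≤ 2 ^ n := pow_le_pow_right₀ (by norm_num) (by omega)
    rw [mul_pow] at h3
    rw [← pow_aux n hn s (by linarith), div_eq_mul_inv]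
    calc ((s : ℝ) + 1) ^ (n - 1) * (ρ * ((s : ℝ) ^ (n + 1))⁻¹)
        ≤ (2 ^ n * (s : ℝ) ^ (n - 1)) * (ρ * ((s : ℝ) ^ (n + 1))⁻¹) := by
          gcongr
          exact h3.trans (by gcongr)
      _ = _ := by ring
  refine (Finset.sum_le_sum h2).trans ?_
  rw [← Finset.mul_sum, mul_assoc]
  gcongr
  have h5 : ∑ s ∈ R, ((s : ℝ) ^ 2)⁻¹ ≤ ∑ s ∈ Finset.Ioo (a - 1) b, ((s : ℝ) ^ 2)⁻¹ :=
    Finset.sum_le_sum_of_subset_of_nonneg hsub (fun _ _ _ => by positivity)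
  have h6 := sum_Ioo_inv_sq_le (α := ℝ) (a - 1) b
  have h7 : (((a - 1 : ℕ) : ℝ) + 1) = a := by
    rw [Nat.cast_sub ha1]; simp
  rw [h7] at h6
  have h8 : ρ ≤ a := Nat.le_ceil ρ
  have h9 : (0 : ℝ) < a := by linarith
  calc ρ * ∑ s ∈ R, ((s : ℝ) ^ 2)⁻¹ ≤ ρ * (2 / a) := by
        gcongr; exact h5.trans h6
    _ ≤ a * (2 / a) := by gcongr
    _ = 2 := by field_simp

/-- discrete bump -/
def chi {n : ℕ} (c : ZLat n) (ρ : ℝ) (y : ZLat n) : ℝ := max 0 (min 1 (2 - ‖y - c‖ / ρ))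

lemma chi_nonneg {n : ℕ} (c : ZLat n) (ρ : ℝ) (y : ZLat n) : 0 ≤ chi c ρ y := le_max_left _ _
lemma chi_le_one {n : ℕ} (c : ZLat n) (ρ : ℝ) (y : ZLat n) : chi c ρ y ≤ 1 :=
  max_le zero_le_one (min_le_left _ _)
lemma chi_eq_one {n : ℕ} {c : ZLat n} {ρ : ℝ} (hρ : 0 < ρ) {y : ZLat n} (h : ‖y - c‖ ≤ ρ) :
    chi c ρ y = 1 := by
  have : ‖y - c‖ / ρ ≤ 1 := (div_le_one hρ).mpr h
  unfold chi
  rw [min_eq_left (by linarith), max_eq_right zero_le_one]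

lemma chi_eq_zero {n : ℕ} {c : ZLat n} {ρ : ℝ} (hρ : 0 < ρ) {y : ZLat n} (h : 2 * ρ ≤ ‖y - c‖) :
    chi c ρ y = 0 := by
  have : 2 ≤ ‖y - c‖ / ρ := (le_div_iff₀ hρ).mpr h
  unfold chi
  exact max_eq_left ((min_le_right _ _).trans (by linarith))

lemma chi_norm_le {n : ℕ} (c : ZLat n) (ρ : ℝ) (y : ZLat n) : ‖(chi c ρ y : ℂ)‖ ≤ 1 := by
  rw [Complex.norm_real, Real.norm_of_nonneg (chi_nonneg _ _ _)]
  exact chi_le_one _ _ _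

/-- Discrete Calderon-Zygmund kernels with a one sided testing condition. -/
structure DCZ (n : ℕ) (C : ℝ) (a : ZLat n → ZLat n → ℂ) : Prop where
  size : ∀ x y, ‖a x y‖ ≤ C * ((1 + ‖x - y‖) ^ n)⁻¹
  reg : ∀ x x' y, 2 * ‖x - x'‖ + 10 ≤ ‖x - y‖ →
    ‖a x y - a x' y‖ ≤ C * ‖x - x'‖ / ‖x - y‖ ^ (n + 1)
  test : ∀ (c : ZLat n) (ρ : ℝ), 1 ≤ ρ → ∀ Y : Finset (ZLat n), (∀ y, ‖y - c‖ < 2 * ρ → y ∈ Y) →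
    ∀ S : Finset (ZLat n), ∑ x ∈ S, ‖∑ y ∈ Y, a x y * (chi c ρ y : ℂ)‖ ^ 2 ≤ C * ρ ^ n

lemma fib_dist {n q : ℕ} {z w x y : ZLat n} (hx : x ∈ fib q z) (hy : y ∈ fib q w) :
    ‖(x - y) - (q : ℤ) • (z - w)‖ ≤ q := by
  rw [pi_norm_le_iff_of_nonneg (by positivity)]
  intro i
  rw [Int.norm_eq_abs]
  have h1 := fib_coord hx i
  have h2 := fib_coord hy i
  simp only [Pi.sub_apply, Pi.smul_apply, smul_eq_mul]
  have : |x i - y i - (q : ℤ) * (z i - w i)| ≤ q := by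
    rw [abs_le]; constructor <;> nlinarith
  exact_mod_cast this

lemma norm_nsmul_lat {n : ℕ} (q : ℕ) (m : ZLat n) : ‖(q : ℤ) • m‖ = q * ‖m‖ := by
  rw [norm_smul]; simp

lemma fib_dist_le {n q : ℕ} {z w x y : ZLat n} (hx : x ∈ fib q z) (hy : y ∈ fib q w) :
    ‖x - y‖ ≤ q * (‖z - w‖ + 1) := by
  have h := fib_dist hx hy
  have h2 := norm_sub_norm_le (x - y) ((q : ℤ) • (z - w))
  rw [norm_nsmul_lat] at h2
  linarith

lemma fib_dist_ge {n q : ℕ} {z w x y : ZLat n} (hx : x ∈ fib q z) (hy : y ∈ fib q w) :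
    q * (‖z - w‖ - 1) ≤ ‖x - y‖ := by
  have h := fib_dist hx hy
  have h2 := norm_sub_norm_le ((q : ℤ) • (z - w)) (x - y)
  rw [norm_nsmul_lat, norm_sub_rev ((q : ℤ) • (z - w)) (x - y)] at h2
  linarith

lemma off_bound {n : ℕ} (hn : 1 ≤ n) {C : ℝ} (hC : 0 < C) {a : ZLat n → ZLat n → ℂ} (ha : DCZ n C a)
    {q : ℕ} (hq : 0 < q) (E : ℕ) (z : ZLat n) (Y : Finset (ZLat n))
    (hY : ∀ x ∈ fib q z, ∀ y ∈ Y, ‖y - x‖ ≤ E * q) :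
    ∑ x ∈ fib q z, ∑ y ∈ Y with y ∉ fib q z, ‖a x y‖ ≤
      C * n * (2 * n * 2 ^ n * (E + 1)) * (q : ℝ) ^ n := by
  classical
  let k : ZLat n → ℝ := fun m => C * ((1 + ‖m‖) ^ n)⁻¹
  have hE : ∀ m : ZLat n, ‖m‖ ≤ E * q → lnorm m ≤ E * q := by
    intro m hm; rw [norm_eq_lnorm] at hm; exact_mod_cast hm
  have h1 : ∑ x ∈ fib q z, ∑ y ∈ Y with y ∉ fib q z, ‖a x y‖ ≤
      ∑ x ∈ fib q z, ∑ y ∈ Y with y ∉ fib q z, k (y - x) := by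
    refine Finset.sum_le_sum fun x _ => Finset.sum_le_sum fun y _ => ?_
    have := ha.size x y
    rwa [norm_sub_rev] at this
  refine h1.trans ((perimeter_sum hn hq z Y (lbox n (E * q)) k (fun m => by positivity)
    (fun x hx y hy _ => mem_lbox.mpr (hE _ (hY x hx y hy)))).trans ?_)
  have h2 := size_sum n hn (E * q) (lbox n (E * q)) (fun m hm => mem_lbox.mp hm)
  have hq1 : (1 : ℝ) ≤ q := by exact_mod_cast hq
  calc ∑ m ∈ lbox n (E * q), k m * min ((q : ℝ) ^ n) (n * ‖m‖ * (q : ℝ) ^ (n - 1))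
      ≤ ∑ m ∈ lbox n (E * q), (C * n * (q : ℝ) ^ (n - 1)) * (‖m‖ * ((1 + ‖m‖) ^ n)⁻¹) := by
        refine Finset.sum_le_sum fun m _ => ?_
        calc _ ≤ k m * (n * ‖m‖ * (q : ℝ) ^ (n - 1)) :=
              mul_le_mul_of_nonneg_left (min_le_right _ _) (by positivity)
          _ = _ := by simp only [k]; ring
    _ = (C * n * (q : ℝ) ^ (n - 1)) * ∑ m ∈ lbox n (E * q), (‖m‖ * ((1 + ‖m‖) ^ n)⁻¹) := by
        rw [Finset.mul_sum]
    _ ≤ (C * n * (q : ℝ) ^ (n - 1)) * (2 * n * 2 ^ n * ((E * q : ℕ) + 1)) := by gcongr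
    _ ≤ (C * n * (q : ℝ) ^ (n - 1)) * (2 * n * 2 ^ n * ((E + 1) * q)) := by
        gcongr; push_cast; nlinarith
    _ = C * n * (2 * n * 2 ^ n * (E + 1)) * ((q : ℝ) ^ (n - 1) * q) := by ring
    _ = _ := by rw [← pow_succ]; congr 2; omega

lemma corner_mem {n q : ℕ} (hq : 0 < q) (z : ZLat n) : (q : ℤ) • z ∈ fib q z := by
  simp only [fib, Fintype.mem_piFinset, Finset.mem_Ico, Pi.smul_apply, smul_eq_mul]
  intro i; omega

lemma fib_norm_corner {n q : ℕ} (hq : 0 < q) {x z : ZLat n} (hx : x ∈ fib q z) :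
    ‖x - (q : ℤ) • z‖ ≤ q := by
  have := fib_dist_le hx (corner_mem hq z)
  simpa using this

lemma sq_sum_le_card {ι : Type*} (S : Finset ι) (f : ι → ℂ) :
    ‖∑ x ∈ S, f x‖ ^ 2 ≤ S.card * ∑ x ∈ S, ‖f x‖ ^ 2 := by
  calc ‖∑ x ∈ S, f x‖ ^ 2 ≤ (∑ x ∈ S, ‖f x‖) ^ 2 := by gcongr; exact norm_sum_le _ _
    _ ≤ _ := sq_sum_le_card_mul_sum_sq

lemma near_bound {n : ℕ} (hn : 1 ≤ n) {C : ℝ} (hC : 0 < C) (D : ℕ) : ∃ C' : ℝ, 0 < C' ∧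
    ∀ a : ZLat n → ZLat n → ℂ, DCZ n C a → ∀ q : ℕ, 0 < q → ∀ z w : ZLat n, ‖z - w‖ ≤ D →
      ‖∑ x ∈ fib q z, ∑ y ∈ fib q w, a x y‖ ≤ C' * (q : ℝ) ^ n := by
  classical
  have hn' : (0 : ℝ) < n := by exact_mod_cast hn
  refine ⟨(C + 1) + C * n * (2 * n * 2 ^ n * ((D + 3 : ℕ) + 1)), by positivity, ?_⟩
  intro a ha q hq z w hzw
  have hq1 : (1 : ℝ) ≤ q := by exact_mod_cast hq
  by_cases h : z = w
  · subst h
    set c := (q : ℤ) • z with hc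
    have hchi : ∀ y ∈ fib q z, chi c q y = 1 := fun y hy =>
      chi_eq_one (by linarith) (fib_norm_corner hq hy)
    let Y : Finset (ZLat n) := (lbox n (2 * q)).image (fun m => m + c)
    have hY : ∀ y, ‖y - c‖ ≤ 2 * q ↔ y ∈ Y := by
      intro y
      simp only [Y, Finset.mem_image]
      constructor
      · intro h
        refine ⟨y - c, mem_lbox.mpr ?_, by simp⟩
        rw [norm_eq_lnorm] at h; exact_mod_cast h
      · rintro ⟨m, hm, rfl⟩
        have := mem_lbox.mp hm
        rw [add_sub_cancel_right, norm_eq_lnorm]; exact_mod_cast this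
    have hsub : fib q z ⊆ Y := by
      intro y hy
      rw [← hY]
      linarith [fib_norm_corner hq hy]
    have hsplit : ∀ x, ∑ y ∈ fib q z, a x y =
        ∑ y ∈ Y, a x y * (chi c q y : ℂ) - ∑ y ∈ Y with y ∉ fib q z, a x y * (chi c q y : ℂ) := by
      intro x
      rw [eq_sub_iff_add_eq]
      have e1 : ∑ y ∈ fib q z, a x y = ∑ y ∈ Y with y ∈ fib q z, a x y * (chi c q y : ℂ) := by
        have : Y.filter (fun y => y ∈ fib q z) = fib q z := by
          ext y; rw [Finset.mem_filter]; exact ⟨fun h => h.2, fun h => ⟨hsub h, h⟩⟩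
        rw [this]
        exact Finset.sum_congr rfl fun y hy => by rw [hchi y hy]; simp
      rw [e1]
      exact Finset.sum_filter_add_sum_filter_not _ _ _
    simp_rw [hsplit]
    rw [Finset.sum_sub_distrib]
    refine (norm_sub_le _ _).trans ?_
    rw [add_mul]
    apply add_le_add
    · have h1 := ha.test c q hq1 Y (fun y hy => (hY y).mp hy.le) (fib q z)
      have h2 := sq_sum_le_card (fib q z) (fun x => ∑ y ∈ Y, a x y * (chi c q y : ℂ))
      rw [card_fib] at h2
      push_cast at h2
      have hqn : (0 : ℝ) < (q : ℝ) ^ n := by positivity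
      have h3 : ‖∑ x ∈ fib q z, ∑ y ∈ Y, a x y * (chi c q y : ℂ)‖ ^ 2 ≤ ((C + 1) * (q : ℝ) ^ n) ^ 2 := by
        calc _ ≤ _ := h2
          _ ≤ (q : ℝ) ^ n * (C * (q : ℝ) ^ n) := by gcongr
          _ = C * ((q : ℝ) ^ n) ^ 2 := by ring
          _ ≤ (C + 1) ^ 2 * ((q : ℝ) ^ n) ^ 2 := by gcongr; nlinarith
          _ = _ := by ring
      exact le_of_sq_le_sq h3 (by positivity)
    · refine le_trans ?_ (off_bound hn hC ha hq (D + 3) z Y ?_)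
      · refine (norm_sum_le _ _).trans (Finset.sum_le_sum fun x _ => (norm_sum_le _ _).trans
          (Finset.sum_le_sum fun y _ => ?_))
        rw [norm_mul]
        exact mul_le_of_le_one_right (norm_nonneg _) (chi_norm_le _ _ _)
      · intro x hx y hy
        have h1 := (hY y).mpr hy
        have h2 := fib_norm_corner hq hx
        have h3 : ‖y - x‖ ≤ ‖y - c‖ + ‖x - c‖ := by
          have := norm_sub_le (y - c) (x - c)
          simpa using this
        push_cast
        have : (0 : ℝ) ≤ D * q := by positivity
        linarith
  · have h1 : ‖∑ x ∈ fib q z, ∑ y ∈ fib q w, a x y‖ ≤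
        ∑ x ∈ fib q z, ∑ y ∈ fib q w with y ∉ fib q z, ‖a x y‖ := by
      refine (norm_sum_le _ _).trans (Finset.sum_le_sum fun x _ => (norm_sum_le _ _).trans ?_)
      rw [Finset.filter_true_of_mem]
      intro y hy hy2
      rw [mem_fib hq] at hy hy2
      exact h (hy2.symm.trans hy)
    refine (h1.trans (off_bound hn hC ha hq (D + 3) z _ ?_)).trans ?_
    · intro x hx y hy
      have := fib_dist_le hy hx
      rw [norm_sub_rev w z] at this
      push_cast
      nlinarith
    · gcongr; linarith

/-- level kernel -/
def lev {n : ℕ} (a : ZLat n → ZLat n → ℂ) (q : ℕ) (z w : ZLat n) : ℂ :=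
  ((q : ℂ) ^ n)⁻¹ * ∑ x ∈ fib q z, ∑ y ∈ fib q w, a x y

def tl {n : ℕ} (a : ZLat n → ZLat n → ℂ) (q : ℕ) (z w : ZLat n) : ℂ :=
  lev a q z w - (2 ^ n)⁻¹ * ∑ z' ∈ fib 2 (qd 2 z), lev a q z' w

lemma lev_near {n : ℕ} (hn : 1 ≤ n) {C : ℝ} (hC : 0 < C) (D : ℕ) : ∃ C' : ℝ, 0 < C' ∧
    ∀ a : ZLat n → ZLat n → ℂ, DCZ n C a → ∀ q : ℕ, 0 < q → ∀ z w : ZLat n, ‖z - w‖ ≤ D →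
      ‖lev a q z w‖ ≤ C' := by
  obtain ⟨C', hC', h⟩ := near_bound hn hC D
  refine ⟨C', hC', fun a ha q hq z w hzw => ?_⟩
  have h1 := h a ha q hq z w hzw
  have hq1 : (0 : ℝ) < q := by exact_mod_cast hq
  unfold lev
  rw [norm_mul, norm_inv, norm_pow, Complex.norm_natCast, inv_mul_le_iff₀ (by positivity)]
  linarith

lemma lev_far {n : ℕ} {C : ℝ} (hC : 0 < C)
    (a : ZLat n → ZLat n → ℂ) (ha : DCZ n C a) (q : ℕ) (hq : 0 < q) (z z' w : ZLat n)
    (hzw : 13 ≤ ‖z - w‖) (hzz : ‖z - z'‖ ≤ 1) :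
      ‖lev a q z w - lev a q z' w‖ ≤ C * 2 ^ (n + 1) * kap n (z - w) := by
  have hq1 : (1 : ℝ) ≤ q := by exact_mod_cast hq
  have hq0 : (0 : ℝ) < q := by linarith
  unfold lev
  rw [sum_fib_translate (fun x => ∑ y ∈ fib q w, a x y) z z', ← mul_sub, ← Finset.sum_sub_distrib,
    norm_mul, norm_inv, norm_pow, Complex.norm_natCast, inv_mul_le_iff₀ (by positivity)]
  simp_rw [← Finset.sum_sub_distrib]
  set B : ℝ := C * q * (2 ^ (n + 1) * kap n (z - w) * ((q : ℝ) ^ (n + 1))⁻¹) with hB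
  have key : ∀ x ∈ fib q z, ∀ y ∈ fib q w, ‖a x y - a (x + (q : ℤ) • (z' - z)) y‖ ≤ B := by
    intro x hx y hy
    have h1 := fib_dist_ge hx hy
    have h2 : ‖x - (x + (q : ℤ) • (z' - z))‖ ≤ q := by
      rw [sub_add_cancel_left, norm_neg, norm_nsmul_lat, norm_sub_rev]
      nlinarith
    have h3 := ha.reg x (x + (q : ℤ) • (z' - z)) y (by nlinarith)
    refine h3.trans ?_
    have h4 : q * ((1 + ‖z - w‖) / 2) ≤ ‖x - y‖ := by nlinarith
    have h5 : (q * ((1 + ‖z - w‖) / 2)) ^ (n + 1) ≤ ‖x - y‖ ^ (n + 1) := by gcongr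
    calc C * ‖x - (x + (q : ℤ) • (z' - z))‖ / ‖x - y‖ ^ (n + 1)
        ≤ C * q / (q * ((1 + ‖z - w‖) / 2)) ^ (n + 1) := by gcongr
      _ = B := by
        rw [hB, kap, mul_pow, div_pow]
        field_simp
  calc ‖∑ x ∈ fib q z, ∑ y ∈ fib q w, (a x y - a (x + (q : ℤ) • (z' - z)) y)‖
      ≤ ∑ x ∈ fib q z, ∑ y ∈ fib q w, B :=
        (norm_sum_le _ _).trans (Finset.sum_le_sum fun x hx => (norm_sum_le _ _).trans
          (Finset.sum_le_sum fun y hy => key x hx y hy))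
    _ = (q : ℝ) ^ n * ((q : ℝ) ^ n * B) := by
        simp only [Finset.sum_const, card_fib, nsmul_eq_mul]; push_cast; ring
    _ = (q : ℝ) ^ n * (C * 2 ^ (n + 1) * kap n (z - w)) := by
        rw [hB]; congr 1
        field_simp
        ring

lemma sib_norm {n : ℕ} {z z' : ZLat n} (h : z' ∈ fib 2 (qd 2 z)) : ‖z - z'‖ ≤ 1 := by
  have h1 : z ∈ fib 2 (qd 2 z) := (mem_fib two_pos).mpr rfl
  rw [pi_norm_le_iff_of_nonneg zero_le_one]
  intro i
  have h2 := fib_coord h1 i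
  have h3 := fib_coord h i
  rw [Int.norm_eq_abs, Pi.sub_apply]
  have : |z i - z' i| ≤ 1 := by rw [abs_le]; constructor <;> push_cast at h2 h3 <;> linarith
  exact_mod_cast this

lemma tl_bound {n : ℕ} (hn : 1 ≤ n) {C : ℝ} (hC : 0 < C) : ∃ C' : ℝ, 0 < C' ∧
    ∀ a : ZLat n → ZLat n → ℂ, DCZ n C a → ∀ q : ℕ, 0 < q → ∀ z w : ZLat n,
      ‖tl a q z w‖ ≤ C' * kap n (z - w) := by
  obtain ⟨C1, hC1, h⟩ := lev_near hn hC 14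
  refine ⟨C * 2 ^ (n + 1) + 2 * C1 * 14 ^ (n + 1), by positivity, fun a ha q hq z w => ?_⟩
  have key : ∀ z' ∈ fib 2 (qd 2 z), ‖lev a q z w - lev a q z' w‖ ≤
      (C * 2 ^ (n + 1) + 2 * C1 * 14 ^ (n + 1)) * kap n (z - w) := by
    intro z' hz'
    have hs := sib_norm hz'
    have hk := kap_nonneg n (z - w)
    by_cases hd : 13 ≤ ‖z - w‖
    · refine (lev_far hC a ha q hq z z' w hd hs).trans ?_
      gcongr
      have : 0 ≤ 2 * C1 * 14 ^ (n + 1) := by positivity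
      linarith
    · push Not at hd
      have h1 := h a ha q hq z w (by push_cast; linarith)
      have h2 : ‖z' - w‖ ≤ 14 := by
        have := norm_sub_le_norm_sub_add_norm_sub z' z w
        rw [norm_sub_rev z' z] at this
        linarith
      have h3 := h a ha q hq z' w (by exact_mod_cast h2)
      have h4 : 1 ≤ 14 ^ (n + 1) * kap n (z - w) := by
        unfold kap
        rw [← div_eq_mul_inv, le_div_iff₀ (by positivity), one_mul]
        gcongr; linarith
      calc _ ≤ ‖lev a q z w‖ + ‖lev a q z' w‖ := norm_sub_le _ _
        _ ≤ 2 * C1 * 1 := by linarith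
        _ ≤ 2 * C1 * (14 ^ (n + 1) * kap n (z - w)) := by gcongr
        _ ≤ _ := by
          have : 0 ≤ C * 2 ^ (n + 1) * kap n (z - w) := by positivity
          linarith
  have e : tl a q z w = (2 ^ n)⁻¹ * ∑ z' ∈ fib 2 (qd 2 z), (lev a q z w - lev a q z' w) := by
    rw [Finset.sum_sub_distrib, Finset.sum_const, card_fib, mul_sub, tl, nsmul_eq_mul]
    push_cast
    field_simp
  rw [e, norm_mul, norm_inv, norm_pow, Complex.norm_ofNat, inv_mul_le_iff₀ (by positivity)]
  refine (norm_sum_le _ _).trans ((Finset.sum_le_sum key).trans ?_)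
  rw [Finset.sum_const, card_fib, nsmul_eq_mul]
  push_cast
  exact le_refl _

def av {n : ℕ} (q : ℕ) (f : ZLat n → ℂ) (z : ZLat n) : ℂ := ((q : ℂ) ^ n)⁻¹ * ∑ x ∈ fib q z, f x

lemma av_mul {n : ℕ} {q r : ℕ} (hq : 0 < q) (hr : 0 < r) (f : ZLat n → ℂ) (y : ZLat n) :
    av (q * r) f y = av r (av q f) y := by
  unfold av
  rw [sum_fib_fib hq hr, ← Finset.mul_sum]
  push_cast
  rw [mul_pow, mul_inv]; ring

lemma av_one {n : ℕ} (f : ZLat n → ℂ) (y : ZLat n) : av 1 f y = f y := by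
  simp [av, fib_one]

lemma variance_id {ι : Type*} (S : Finset ι) (g : ι → ℂ) (m c : ℂ) (hm : (S.card : ℂ) * m = ∑ i ∈ S, g i) :
    ∑ i ∈ S, ‖g i - c‖ ^ 2 = ∑ i ∈ S, ‖g i‖ ^ 2 - S.card * ‖m‖ ^ 2 + S.card * ‖m - c‖ ^ 2 := by
  have e : ∀ z : ℂ, ‖z‖ ^ 2 = z.re ^ 2 + z.im ^ 2 := by
    intro z; rw [← Complex.normSq_eq_norm_sq, Complex.normSq_apply]; ring
  have h1 : (S.card : ℝ) * m.re = ∑ i ∈ S, (g i).re := by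
    have := congrArg Complex.re hm; simpa using this
  have h2 : (S.card : ℝ) * m.im = ∑ i ∈ S, (g i).im := by
    have := congrArg Complex.im hm; simpa using this
  simp_rw [e, Complex.sub_re, Complex.sub_im]
  have h3 : ∑ i ∈ S, (((g i).re - c.re) ^ 2 + ((g i).im - c.im) ^ 2) =
      ∑ i ∈ S, ((g i).re ^ 2 + (g i).im ^ 2) - 2 * c.re * ∑ i ∈ S, (g i).re
        - 2 * c.im * ∑ i ∈ S, (g i).im + S.card * (c.re ^ 2 + c.im ^ 2) := by
    rw [Finset.mul_sum, Finset.mul_sum, ← nsmul_eq_mul, ← Finset.sum_const, ← Finset.sum_sub_distrib,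
      ← Finset.sum_sub_distrib, ← Finset.sum_add_distrib]
    exact Finset.sum_congr rfl fun i _ => by ring
  rw [h3, ← h1, ← h2]; ring

lemma card_av {n q : ℕ} (hq : 0 < q) (f : ZLat n → ℂ) (y : ZLat n) :
    ((fib q y).card : ℂ) * av q f y = ∑ x ∈ fib q y, f x := by
  rw [card_fib, av]
  have : ((q : ℂ) ^ n) ≠ 0 := pow_ne_zero _ (by exact_mod_cast hq.ne')
  push_cast
  rw [mul_inv_cancel_left₀ this]

def vr {n : ℕ} (q : ℕ) (t : ZLat n → ℂ) (y : ZLat n) : ℝ :=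
  ∑ x ∈ fib q y, ‖t x‖ ^ 2 - (q : ℝ) ^ n * ‖av q t y‖ ^ 2

lemma vr_le {n q : ℕ} (hq : 0 < q) (t : ZLat n → ℂ) (y : ZLat n) (c : ℂ) :
    vr q t y ≤ ∑ x ∈ fib q y, ‖t x - c‖ ^ 2 := by
  rw [variance_id _ _ _ c (card_av hq t y), vr, card_fib]
  push_cast
  have : 0 ≤ (q : ℝ) ^ n * ‖av q t y - c‖ ^ 2 := by positivity
  linarith

lemma vr_nonneg {n q : ℕ} (hq : 0 < q) (t : ZLat n → ℂ) (y : ZLat n) : 0 ≤ vr q t y := by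
  have h := variance_id _ _ _ (av q t y) (card_av hq t y)
  rw [card_fib] at h
  have h2 : 0 ≤ ∑ x ∈ fib q y, ‖t x - av q t y‖ ^ 2 := by positivity
  rw [h] at h2
  simp at h2
  rw [vr]; linarith

lemma vr_one {n : ℕ} (t : ZLat n → ℂ) (y : ZLat n) : vr 1 t y = 0 := by
  simp [vr, av_one, fib_one]

lemma vr_succ {n q : ℕ} (hq : 0 < q) (t : ZLat n → ℂ) (y : ZLat n) :
    vr (q * 2) t y = ∑ z ∈ fib 2 y, vr q t z +
      (q : ℝ) ^ n * ∑ z ∈ fib 2 y, ‖av q t z - av (q * 2) t y‖ ^ 2 := by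
  have h := variance_id _ _ _ (av (q * 2) t y) (card_av two_pos (av q t) y)
  rw [← av_mul hq two_pos, card_fib] at h
  rw [h]
  unfold vr
  rw [sum_fib_fib hq two_pos, Finset.sum_sub_distrib, ← Finset.mul_sum]
  push_cast
  simp only [sub_self, norm_zero]
  rw [mul_pow]; ring

/-- Bellman function step. -/
lemma bellman_step {ι : Type*} (S : Finset ι) (C Q w : ℝ) (hC : 0 < C) (hQ : 0 < Q) (hw : 0 ≤ w)
    (P D : ι → ℝ) (hD : ∀ i ∈ S, 0 < D i) (hS : S.Nonempty)
    (htop : ∑ i ∈ S, D i + w ≤ 2 * C * Q) :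
    w * ((∑ i ∈ S, P i) / Q) ^ 2 ≤
      4 * C * C * (∑ i ∈ S, P i ^ 2 / D i - (∑ i ∈ S, P i) ^ 2 / (∑ i ∈ S, D i + w)) := by
  have h1 : (∑ i ∈ S, P i) ^ 2 / (∑ i ∈ S, D i) ≤ ∑ i ∈ S, P i ^ 2 / D i :=
    Finset.sq_sum_div_le_sum_sq_div S P hD
  have hE : 0 < ∑ i ∈ S, D i := Finset.sum_pos hD hS
  set E := ∑ i ∈ S, D i
  set p := ∑ i ∈ S, P i
  have h2 : p ^ 2 * w / (2 * C * Q) ^ 2 ≤ p ^ 2 / E - p ^ 2 / (E + w) := by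
    rw [div_sub_div _ _ (by positivity) (by positivity)]
    have : p ^ 2 * (E + w) - E * p ^ 2 = p ^ 2 * w := by ring
    rw [this]
    gcongr
    rw [sq]
    have : E ≤ 2 * C * Q := by linarith
    gcongr
  calc w * (p / Q) ^ 2 = 4 * C * C * (p ^ 2 * w / (2 * C * Q) ^ 2) := by field_simp; ring
    _ ≤ _ := by gcongr; linarith

lemma fib_nonempty {n q : ℕ} (hq : 0 < q) (y : ZLat n) : (fib q y).Nonempty := ⟨_, corner_mem hq y⟩

lemma pow_box {k N m : ℕ} (h : k < N) : 2 * (m * 2 ^ (N - (k + 1))) = m * 2 ^ (N - k) := by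
  have : N - k = N - (k + 1) + 1 := by omega
  rw [this]; ring

lemma pow_box' {k N m : ℕ} (h : k ≤ N) : 2 ^ k * (m * 2 ^ (N - k)) = m * 2 ^ N := by
  have : 2 ^ N = 2 ^ k * 2 ^ (N - k) := by rw [← pow_add]; congr 1; omega
  rw [this]; ring

lemma carleson {n : ℕ} {C : ℝ} (hC : 0 < C) (N : ℕ) (t : ZLat n → ℂ)
    (ht : ∀ k ≤ N, ∀ y ∈ bx n (1 * 2 ^ (N - k)), vr (2 ^ k) t y ≤ C * ((2 : ℝ) ^ k) ^ n) (f : ZLat n → ℂ) :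
    ∑ k ∈ Finset.range N, ((2 : ℝ) ^ k) ^ n * ∑ z ∈ bx n (1 * 2 ^ (N - k)),
      ‖av (2 ^ k) t z - av (2 ^ (k + 1)) t (qd 2 z)‖ ^ 2 * ‖av (2 ^ (k + 1)) f (qd 2 z)‖ ^ 2 ≤
      4 * C * ∑ x ∈ bx n (1 * 2 ^ N), ‖f x‖ ^ 2 := by
  let P : ℕ → ZLat n → ℝ := fun k y => ∑ x ∈ fib (2 ^ k) y, ‖f x‖
  let D : ℕ → ZLat n → ℝ := fun k y => C * ((2 : ℝ) ^ k) ^ n + vr (2 ^ k) t y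
  have hD : ∀ k y, 0 < D k y := fun k y => by
    have := vr_nonneg (n := n) (pow_pos two_pos k) t y
    have h2 : 0 < C * ((2 : ℝ) ^ k) ^ n := by positivity
    simp only [D]; linarith
  let Ψ : ℕ → ℝ := fun k => ∑ y ∈ bx n (1 * 2 ^ (N - k)), P k y ^ 2 / D k y
  have step : ∀ k ∈ Finset.range N, ((2 : ℝ) ^ k) ^ n * ∑ z ∈ bx n (1 * 2 ^ (N - k)),
      ‖av (2 ^ k) t z - av (2 ^ (k + 1)) t (qd 2 z)‖ ^ 2 * ‖av (2 ^ (k + 1)) f (qd 2 z)‖ ^ 2 ≤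
      4 * C * C * (Ψ k - Ψ (k + 1)) := by
    intro k hk
    have hkN := Finset.mem_range.mp hk
    simp only [Ψ]
    rw [← pow_box hkN, sum_bx_fib two_pos, sum_bx_fib two_pos, ← Finset.sum_sub_distrib,
      Finset.mul_sum, Finset.mul_sum]
    apply Finset.sum_le_sum
    intro y hy
    have hqn : (0 : ℝ) < ((2 : ℝ) ^ (k + 1)) ^ n := by positivity
    have hv := vr_succ (n := n) (pow_pos two_pos k) t y
    rw [← pow_succ] at hv
    push_cast at hv
    set w := ((2 : ℝ) ^ k) ^ n * ∑ z ∈ fib 2 y, ‖av (2 ^ k) t z - av (2 ^ (k + 1)) t y‖ ^ 2 with hwdef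
    have hw : 0 ≤ w := by positivity
    have hsum : D (k + 1) y = ∑ z ∈ fib 2 y, D k z + w := by
      simp only [D]
      rw [hv, Finset.sum_add_distrib, Finset.sum_const, card_fib, nsmul_eq_mul]
      push_cast
      rw [pow_succ, mul_pow]; ring
    have hP : P (k + 1) y = ∑ z ∈ fib 2 y, P k z := by
      simp only [P]; rw [pow_succ, sum_fib_fib (pow_pos two_pos k) two_pos]
    have hb := bellman_step (fib 2 y) C (((2 : ℝ) ^ (k + 1)) ^ n) w hC hqn hw (P k) (D k)
      (fun i _ => hD k i) (fib_nonempty two_pos y) (by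
        rw [← hsum]; simp only [D]; have := ht (k + 1) hkN y hy; linarith)
    rw [← hsum, ← hP] at hb
    refine le_trans ?_ hb
    have e : ∀ z ∈ fib 2 y, ‖av (2 ^ k) t z - av (2 ^ (k + 1)) t (qd 2 z)‖ ^ 2 *
        ‖av (2 ^ (k + 1)) f (qd 2 z)‖ ^ 2 = ‖av (2 ^ k) t z - av (2 ^ (k + 1)) t y‖ ^ 2 *
        ‖av (2 ^ (k + 1)) f y‖ ^ 2 := by
      intro z hz; rw [(mem_fib two_pos).mp hz]
    rw [Finset.sum_congr rfl e, ← Finset.sum_mul, ← mul_assoc, ← hwdef]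
    gcongr
    unfold av
    rw [norm_mul, norm_inv, norm_pow]
    push_cast
    rw [norm_pow, Complex.norm_ofNat, div_eq_inv_mul]
    gcongr
    exact norm_sum_le _ _
  refine (Finset.sum_le_sum step).trans ?_
  rw [← Finset.mul_sum, Finset.sum_range_sub', mul_assoc (4 * C)]
  gcongr
  have h0 : C * Ψ 0 = ∑ x ∈ bx n (1 * 2 ^ N), ‖f x‖ ^ 2 := by
    simp only [Ψ, P, D, pow_zero, one_pow, mul_one, fib_one, vr_one, Finset.sum_singleton, add_zero, Nat.sub_zero]
    rw [← Finset.sum_div]; field_simp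
  have hN : 0 ≤ Ψ N := Finset.sum_nonneg fun y _ => div_nonneg (sq_nonneg _) (hD _ _).le
  nlinarith

lemma osc_bound {n : ℕ} (hn : 1 ≤ n) {C : ℝ} (hC : 0 < C) : ∃ C' : ℝ, 0 < C' ∧
    ∀ a : ZLat n → ZLat n → ℂ, DCZ n C a → ∀ N, ∀ k ≤ N, ∀ y ∈ bx n (1 * 2 ^ (N - k)),
    vr (2 ^ k) (fun x => ∑ w ∈ bx n (26 * 2 ^ N), a x w) y ≤ C' * ((2 : ℝ) ^ k) ^ n := by
  classical
  refine ⟨2 * (C * 12 ^ n) + 2 * (C * (2 * n * 2 ^ n * (2 ^ n * 2))) ^ 2, by positivity, ?_⟩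
  intro a ha N k hk y hy
  set X := bx n (26 * 2 ^ N)
  have hq0 : 0 < 2 ^ k := by positivity
  set q := 2 ^ k with hqdef
  have hq1 : (1 : ℝ) ≤ q := by exact_mod_cast hq0
  have hqr : (2 : ℝ) ^ k = q := by rw [hqdef]; push_cast; rfl
  rw [hqr]
  set c := (q : ℤ) • y with hc
  have hcm : c ∈ fib q y := corner_mem hq0 y
  have hX : ∀ w : ZLat n, ‖w - c‖ < 2 * (12 * q : ℝ) → w ∈ X := by
    intro w hw
    have h1 : c ∈ bx n (1 * 2 ^ N) := by
      rw [← pow_box' hk, ← qd_mem_bx hq0, (mem_fib hq0).mp hcm]; exact hy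
    simp only [X, bx, Fintype.mem_piFinset, Finset.mem_Ico] at h1 ⊢
    intro i
    have h2 := (abs_coord_le (w - c) i).trans_lt hw
    have h3 : |w i - c i| < 2 * (12 * q) := by exact_mod_cast h2
    have h4 : q ≤ 2 ^ N := Nat.pow_le_pow_right two_pos hk
    have h4' : (q : ℤ) ≤ 2 ^ N := by exact_mod_cast h4
    have h5 := h1 i
    rw [abs_lt] at h3
    push_cast at h5 ⊢
    constructor <;> linarith
  set b := ∑ w ∈ X, a c w * (1 - (chi c (12 * q) w : ℂ))
  refine (vr_le hq0 _ y b).trans ?_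
  have h12 : (0 : ℝ) < 12 * q := by positivity
  set M := C * (2 * n * 2 ^ n * (2 ^ n * 2) : ℝ)
  have key : ∀ x ∈ fib q y, ‖∑ w ∈ X, a x w - b‖ ^ 2 ≤
      2 * ‖∑ w ∈ X, a x w * (chi c (12 * q) w : ℂ)‖ ^ 2 + 2 * M ^ 2 := by
    intro x hx
    have hsp : ∑ w ∈ X, a x w - b = ∑ w ∈ X, a x w * (chi c (12 * q) w : ℂ) +
        ∑ w ∈ X, (a x w - a c w) * (1 - (chi c (12 * q) w : ℂ)) := by
      simp only [b]; rw [← Finset.sum_sub_distrib, ← Finset.sum_add_distrib]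
      exact Finset.sum_congr rfl fun w _ => by ring
    have hfar : ‖∑ w ∈ X, (a x w - a c w) * (1 - (chi c (12 * q) w : ℂ))‖ ≤ M := by
      have hcx : ‖c - x‖ ≤ q := by
        have := fib_dist_le hcm hx
        simpa using this
      have h1 : ‖∑ w ∈ X, (a x w - a c w) * (1 - (chi c (12 * q) w : ℂ))‖ ≤
          ∑ w ∈ X with 12 * (q : ℝ) ≤ ‖w - c‖, C * ((12 * q) / ‖w - c‖ ^ (n + 1)) := by
        rw [Finset.sum_filter]
        refine (norm_sum_le _ _).trans (Finset.sum_le_sum fun w _ => ?_)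
        split_ifs with hw
        · rw [norm_mul]
          have hchi : ‖(1 - (chi c (12 * q) w : ℂ))‖ ≤ 1 := by
            have e : (1 - (chi c (12 * q) w : ℂ)) = ((1 - chi c (12 * q) w : ℝ) : ℂ) := by push_cast; rfl
            rw [e, Complex.norm_real, Real.norm_eq_abs, abs_le]
            have := chi_nonneg c (12 * q) w
            have := chi_le_one c (12 * q) w
            constructor <;> linarith
          have hr := ha.reg c x w (by rw [norm_sub_rev c w]; linarith)
          rw [norm_sub_rev] at hr
          calc _ ≤ ‖a x w - a c w‖ * 1 := by gcongr
            _ ≤ C * ‖c - x‖ / ‖c - w‖ ^ (n + 1) := by rw [mul_one]; exact hr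
            _ ≤ C * (12 * q) / ‖w - c‖ ^ (n + 1) := by
              rw [norm_sub_rev c w]; gcongr; linarith
            _ = _ := by ring
        · rw [chi_eq_one h12 (not_le.mp hw).le]; simp
      refine h1.trans ?_
      rw [← Finset.mul_sum]
      simp only [M]
      gcongr
      exact far_sum n hn (12 * q) (by linarith) c _ (fun w hw => (Finset.mem_filter.mp hw).2)
    rw [hsp]
    have h := norm_add_le (∑ w ∈ X, a x w * (chi c (12 * q) w : ℂ))
      (∑ w ∈ X, (a x w - a c w) * (1 - (chi c (12 * q) w : ℂ)))
    set u := ‖∑ w ∈ X, a x w * (chi c (12 * q) w : ℂ)‖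
    have hu : 0 ≤ u := norm_nonneg _
    calc _ ≤ (u + M) ^ 2 := by gcongr; linarith
      _ ≤ _ := by nlinarith [sq_nonneg (u - M)]
  have ht := ha.test c (12 * q) (by linarith) X hX (fib q y)
  calc _ ≤ ∑ x ∈ fib q y, (2 * ‖∑ w ∈ X, a x w * (chi c (12 * q) w : ℂ)‖ ^ 2 + 2 * M ^ 2) :=
        Finset.sum_le_sum key
    _ = 2 * ∑ x ∈ fib q y, ‖∑ w ∈ X, a x w * (chi c (12 * q) w : ℂ)‖ ^ 2 + (q : ℝ) ^ n * (2 * M ^ 2) := by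
        rw [Finset.sum_add_distrib, Finset.mul_sum, Finset.sum_const, card_fib, nsmul_eq_mul]; push_cast; rfl
    _ ≤ 2 * (C * (12 * q) ^ n) + (q : ℝ) ^ n * (2 * M ^ 2) := by gcongr
    _ = _ := by rw [mul_pow]; ring

lemma schur {n : ℕ} (hn : 1 ≤ n) : ∃ C : ℝ, 0 < C ∧ ∀ (S T : Finset (ZLat n)) (x y : ZLat n → ℝ),
    ∑ z ∈ S, ∑ w ∈ T, x z * kap n (z - w) * y w ≤ C * (∑ z ∈ S, x z ^ 2 + ∑ w ∈ T, y w ^ 2) := by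
  obtain ⟨C, hC, h⟩ := kap_sum n hn
  refine ⟨C, hC, fun S T x y => ?_⟩
  calc ∑ z ∈ S, ∑ w ∈ T, x z * kap n (z - w) * y w
      ≤ ∑ z ∈ S, ∑ w ∈ T, (x z ^ 2 * kap n (w - z) + y w ^ 2 * kap n (z - w)) := by
        refine Finset.sum_le_sum fun z _ => Finset.sum_le_sum fun w _ => ?_
        rw [kap_neg n w z]
        have := kap_nonneg n (z - w)
        nlinarith [sq_nonneg (x z - y w), mul_nonneg this (sq_nonneg (x z - y w)),
          mul_nonneg this (sq_nonneg (x z)), mul_nonneg this (sq_nonneg (y w))]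
    _ = ∑ z ∈ S, x z ^ 2 * ∑ w ∈ T, kap n (w - z) + ∑ w ∈ T, y w ^ 2 * ∑ z ∈ S, kap n (z - w) := by
        simp_rw [Finset.sum_add_distrib]
        congr 1
        · simp_rw [Finset.mul_sum]
        · rw [Finset.sum_comm]; simp_rw [Finset.mul_sum]
    _ ≤ ∑ z ∈ S, x z ^ 2 * C + ∑ w ∈ T, y w ^ 2 * C := by
        gcongr with z hz w hw
        · exact h T z
        · exact h S w
    _ = _ := by rw [← Finset.sum_mul, ← Finset.sum_mul]; ring

lemma far_level {n : ℕ} (hn : 1 ≤ n) : ∃ C : ℝ, 0 < C ∧ ∀ (j R : ℕ) (X : Finset (ZLat n))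
    (x : ZLat n → ℝ) (H : ZLat n → ℂ), bx n (2 ^ j * R) ⊆ X → (∀ y, y ∉ bx n R → H y = 0) →
    ∑ z ∈ bx n (2 ^ j * R), ∑ w ∈ X, x z * kap n (z - w) * ‖H (qd (2 ^ j) w) - H (qd (2 ^ j) z)‖ ≤
      C * ((9 / 10) ^ j * (∑ z ∈ bx n (2 ^ j * R), x z ^ 2 + ((2 : ℝ) ^ j) ^ n * ∑ y ∈ bx n R, ‖H y‖ ^ 2)) := by
  classical
  obtain ⟨C1, hC1, h1⟩ := kap_sum n hn
  obtain ⟨C2, hC2, h2⟩ := kap_perim n hn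
  refine ⟨C1 + 4 * C2, by positivity, ?_⟩
  intro j R X x H hX hH
  have hq : 0 < 2 ^ j := by positivity
  set q := 2 ^ j with hqd
  set Y := bx n (q * R) with hY
  set lam : ℝ := (9 / 10) ^ j with hlam
  have hl : 0 < lam := by positivity
  let I : ZLat n → ZLat n → ℝ := fun z w => if qd q w = qd q z then 0 else kap n (z - w)
  have hI0 : ∀ z w, 0 ≤ I z w := fun z w => by
    simp only [I]; split_ifs; exacts [le_rfl, kap_nonneg _ _]
  have hIs : ∀ z w, I z w = I w z := fun z w => by
    simp only [I]; rw [kap_neg n z w]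
    by_cases h : qd q w = qd q z
    · rw [if_pos h, if_pos h.symm]
    · rw [if_neg h, if_neg (Ne.symm h)]
  let S : ℝ := ∑ z ∈ X, ∑ w ∈ X, I z w * ‖H (qd q z)‖ ^ 2
  have hS : S ≤ C2 * lam ^ 2 * (((2 : ℝ) ^ j) ^ n * ∑ y ∈ bx n R, ‖H y‖ ^ 2) := by
    have e1 : S = ∑ z ∈ Y, ∑ w ∈ X, I z w * ‖H (qd q z)‖ ^ 2 := by
      symm
      apply Finset.sum_subset hX
      intro z _ hz
      rw [hY, ← qd_mem_bx hq] at hz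
      simp [hH _ hz]
    rw [e1, hY, sum_bx_fib hq, Finset.mul_sum, Finset.mul_sum]
    apply Finset.sum_le_sum
    intro y hy
    have h3 := h2 j y X
    have e2 : ∑ z ∈ fib q y, ∑ w ∈ X, I z w * ‖H (qd q z)‖ ^ 2 =
        ‖H y‖ ^ 2 * ∑ z ∈ fib q y, ∑ w ∈ X with w ∉ fib q y, kap n (w - z) := by
      rw [Finset.mul_sum]
      refine Finset.sum_congr rfl fun z hz => ?_
      have hz' := (mem_fib hq).mp hz
      rw [Finset.sum_filter, Finset.mul_sum]
      refine Finset.sum_congr rfl fun w _ => ?_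
      simp only [I, hz', mem_fib hq]
      by_cases hw : qd q w = y
      · simp [hw]
      · simp only [hw, if_false, not_false_eq_true, if_true]; rw [kap_neg]; ring
    rw [e2]
    calc _ ≤ ‖H y‖ ^ 2 * (C2 * (((2 : ℝ) ^ j) ^ n * (81 / 100) ^ j)) := by gcongr
      _ = _ := by
        have : ((81 : ℝ) / 100) ^ j = lam ^ 2 := by
          rw [hlam, ← pow_mul, mul_comm, pow_mul]; norm_num
        rw [this]; ring
  have hS0 : ∀ z w, I z w * ‖H (qd q w) - H (qd q z)‖ ^ 2 ≤
      2 * (I w z * ‖H (qd q w)‖ ^ 2) + 2 * (I z w * ‖H (qd q z)‖ ^ 2) := by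
    intro z w
    rw [hIs w z]
    have h := norm_sub_le (H (qd q w)) (H (qd q z))
    have h3 : ‖H (qd q w) - H (qd q z)‖ ^ 2 ≤ 2 * ‖H (qd q w)‖ ^ 2 + 2 * ‖H (qd q z)‖ ^ 2 := by
      calc _ ≤ (‖H (qd q w)‖ + ‖H (qd q z)‖) ^ 2 := by gcongr
        _ ≤ _ := by nlinarith [sq_nonneg (‖H (qd q w)‖ - ‖H (qd q z)‖)]
    nlinarith [mul_le_mul_of_nonneg_left h3 (hI0 z w)]
  have hd : ∀ z w, x z * kap n (z - w) * ‖H (qd q w) - H (qd q z)‖ ≤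
      lam * (x z ^ 2 * kap n (w - z)) + lam⁻¹ * (I z w * ‖H (qd q w) - H (qd q z)‖ ^ 2) := by
    intro z w
    have hk := kap_nonneg n (z - w)
    rw [kap_neg n w z]
    by_cases hzw : qd q w = qd q z
    · rw [hzw]; simp; positivity
    · simp only [I, hzw, if_false]
      set d := ‖H (qd q w) - H (qd q z)‖
      have : x z * d ≤ lam * x z ^ 2 + lam⁻¹ * d ^ 2 := by
        have h5 : 0 ≤ lam⁻¹ * (lam * x z - d) ^ 2 := by positivity
        have h6 : lam⁻¹ * (lam * x z - d) ^ 2 = lam * x z ^ 2 - 2 * (x z * d) + lam⁻¹ * d ^ 2 := by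
          field_simp
          ring
        have h7 : 0 ≤ lam * x z ^ 2 := by positivity
        have h8 : 0 ≤ lam⁻¹ * d ^ 2 := by positivity
        nlinarith
      nlinarith [mul_le_mul_of_nonneg_left this hk]
  have hT : ∑ z ∈ Y, ∑ w ∈ X, I z w * ‖H (qd q w) - H (qd q z)‖ ^ 2 ≤ 4 * S := by
    calc _ ≤ ∑ z ∈ X, ∑ w ∈ X, I z w * ‖H (qd q w) - H (qd q z)‖ ^ 2 :=
          Finset.sum_le_sum_of_subset_of_nonneg hX fun z _ _ =>
            Finset.sum_nonneg fun w _ => mul_nonneg (hI0 _ _) (sq_nonneg _)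
      _ ≤ ∑ z ∈ X, ∑ w ∈ X, (2 * (I w z * ‖H (qd q w)‖ ^ 2) + 2 * (I z w * ‖H (qd q z)‖ ^ 2)) :=
          Finset.sum_le_sum fun z _ => Finset.sum_le_sum fun w _ => hS0 z w
      _ = 2 * S + 2 * S := by
          simp_rw [Finset.sum_add_distrib, ← Finset.mul_sum]
          congr 2
          rw [Finset.sum_comm]
      _ = _ := by ring
  calc _ ≤ ∑ z ∈ Y, ∑ w ∈ X, (lam * (x z ^ 2 * kap n (w - z)) +
          lam⁻¹ * (I z w * ‖H (qd q w) - H (qd q z)‖ ^ 2)) :=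
        Finset.sum_le_sum fun z _ => Finset.sum_le_sum fun w _ => hd z w
    _ = lam * ∑ z ∈ Y, x z ^ 2 * ∑ w ∈ X, kap n (w - z) +
        lam⁻¹ * ∑ z ∈ Y, ∑ w ∈ X, I z w * ‖H (qd q w) - H (qd q z)‖ ^ 2 := by
        simp_rw [Finset.sum_add_distrib, Finset.mul_sum]
    _ ≤ lam * ∑ z ∈ Y, x z ^ 2 * C1 + lam⁻¹ * (4 * (C2 * lam ^ 2 * (((2 : ℝ) ^ j) ^ n * ∑ y ∈ bx n R, ‖H y‖ ^ 2))) := by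
        gcongr with z hz
        · exact h1 X z
        · exact hT.trans (by gcongr)
    _ = lam * (C1 * ∑ z ∈ Y, x z ^ 2 + 4 * C2 * (((2 : ℝ) ^ j) ^ n * ∑ y ∈ bx n R, ‖H y‖ ^ 2)) := by
        rw [← Finset.sum_mul]; field_simp
    _ ≤ lam * ((C1 + 4 * C2) * ∑ z ∈ Y, x z ^ 2 + (C1 + 4 * C2) * (((2 : ℝ) ^ j) ^ n * ∑ y ∈ bx n R, ‖H y‖ ^ 2)) := by
        gcongr <;> linarith
    _ = _ := by ring

/-- martingale difference pieces -/
def hh {n : ℕ} (N : ℕ) (f : ZLat n → ℂ) (l : ℕ) (z : ZLat n) : ℂ :=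
  if l < N then av (2 ^ l) f z - av (2 ^ (l + 1)) f (qd 2 z) else av (2 ^ l) f z

def en {n : ℕ} (N : ℕ) (f : ZLat n → ℂ) (l : ℕ) : ℝ :=
  ((2 : ℝ) ^ l) ^ n * ∑ z ∈ bx n (1 * 2 ^ (N - l)), ‖hh N f l z‖ ^ 2

lemma en_nonneg {n : ℕ} (N : ℕ) (f : ZLat n → ℂ) (l : ℕ) : 0 ≤ en N f l := by
  unfold en; positivity

lemma av_supp {n : ℕ} {N l : ℕ} (hl : l ≤ N) {f : ZLat n → ℂ} (hf : ∀ x, x ∉ bx n (1 * 2 ^ N) → f x = 0)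
    {z : ZLat n} (hz : z ∉ bx n (1 * 2 ^ (N - l))) : av (2 ^ l) f z = 0 := by
  have hq : 0 < 2 ^ l := by positivity
  unfold av
  rw [Finset.sum_eq_zero, mul_zero]
  intro x hx
  apply hf
  rwa [← pow_box' hl, ← qd_mem_bx hq, (mem_fib hq).mp hx]

lemma qd2_mem {n : ℕ} {N l m : ℕ} (hl : l < N) {z : ZLat n} :
    qd 2 z ∈ bx n (m * 2 ^ (N - (l + 1))) ↔ z ∈ bx n (m * 2 ^ (N - l)) := by
  rw [qd_mem_bx two_pos, pow_box hl]

lemma hh_supp {n : ℕ} {N l : ℕ} (hl : l ≤ N) {f : ZLat n → ℂ} (hf : ∀ x, x ∉ bx n (1 * 2 ^ N) → f x = 0)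
    {z : ZLat n} (hz : z ∉ bx n (1 * 2 ^ (N - l))) : hh N f l z = 0 := by
  unfold hh
  rw [av_supp hl hf hz]
  split_ifs with h
  · rw [av_supp h hf (by rwa [qd2_mem h]), sub_zero]
  · rfl

lemma en_lt {n : ℕ} {N l : ℕ} (hl : l < N) (f : ZLat n → ℂ) : en N f l =
    ((2 : ℝ) ^ l) ^ n * ∑ z ∈ bx n (1 * 2 ^ (N - l)), ‖av (2 ^ l) f z‖ ^ 2 -
    ((2 : ℝ) ^ (l + 1)) ^ n * ∑ z ∈ bx n (1 * 2 ^ (N - (l + 1))), ‖av (2 ^ (l + 1)) f z‖ ^ 2 := by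
  have hq : 0 < 2 ^ l := by positivity
  have h : ∑ z ∈ bx n (1 * 2 ^ (N - l)), ‖hh N f l z‖ ^ 2 =
      ∑ z ∈ bx n (1 * 2 ^ (N - l)), ‖av (2 ^ l) f z‖ ^ 2 -
      (2 : ℝ) ^ n * ∑ z ∈ bx n (1 * 2 ^ (N - (l + 1))), ‖av (2 ^ (l + 1)) f z‖ ^ 2 := by
    rw [← pow_box hl, sum_bx_fib two_pos, sum_bx_fib two_pos, Finset.mul_sum, ← Finset.sum_sub_distrib]
    refine Finset.sum_congr rfl fun y _ => ?_
    have hv := variance_id _ _ _ (av (2 ^ (l + 1)) f y) (card_av two_pos (av (2 ^ l) f) y)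
    rw [← av_mul hq two_pos, card_fib, ← pow_succ] at hv
    simp only [sub_self, norm_zero] at hv
    push_cast at hv
    rw [← sub_eq_zero] at hv ⊢
    rw [← hv]
    have : ∀ z ∈ fib 2 y, ‖hh N f l z‖ ^ 2 = ‖av (2 ^ l) f z - av (2 ^ (l + 1)) f y‖ ^ 2 := by
      intro z hz
      rw [hh, if_pos hl, (mem_fib two_pos).mp hz]
    rw [Finset.sum_congr rfl this]; ring
  rw [en, h, pow_succ (2 : ℝ), mul_pow]; ring

lemma en_sum {n : ℕ} (N : ℕ) (f : ZLat n → ℂ) :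
    ∑ l ∈ Finset.range (N + 1), en N f l = ∑ x ∈ bx n (1 * 2 ^ N), ‖f x‖ ^ 2 := by
  rw [Finset.sum_range_succ, Finset.sum_congr rfl (fun l hl => en_lt (Finset.mem_range.mp hl) f),
    Finset.sum_range_sub' (fun l => ((2 : ℝ) ^ l) ^ n * ∑ z ∈ bx n (1 * 2 ^ (N - l)), ‖av (2 ^ l) f z‖ ^ 2)]
  simp [en, hh, av_one]

/-- The coarse function as a sum of martingale differences -/
lemma av_tele {n : ℕ} (N : ℕ) (f : ZLat n → ℂ) (i k : ℕ) (hk : k + i = N) (z : ZLat n) :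
    av (2 ^ k) f z = ∑ l ∈ Finset.range (i + 1), hh N f (k + l) (qd (2 ^ l) z) := by
  induction i generalizing k z with
  | zero => simp [hh, qd_one, ← hk]
  | succ i ih =>
    rw [Finset.sum_range_succ']
    have h := ih (k + 1) (by omega) (qd 2 z)
    have e : ∀ l, hh N f (k + (l + 1)) (qd (2 ^ (l + 1)) z) = hh N f (k + 1 + l) (qd (2 ^ l) (qd 2 z)) := by
      intro l
      rw [qd_qd, ← pow_succ']
      congr 1; omega
    simp_rw [e]
    rw [← h]
    simp only [pow_zero, qd_one, add_zero]
    rw [hh, if_pos (by omega)]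
    ring

lemma geo_sum {n N : ℕ} (f g : ZLat n → ℂ) :
    ∑ k ∈ Finset.range N, ∑ l ∈ Finset.range (N - k), ((9 : ℝ) / 10) ^ (l + 1) * (en N g k + en N f (k + 1 + l)) ≤
      10 * (∑ x ∈ bx n (1 * 2 ^ N), ‖f x‖ ^ 2 + ∑ x ∈ bx n (1 * 2 ^ N), ‖g x‖ ^ 2) := by
  have geo : ∀ M : ℕ, ∑ l ∈ Finset.range M, ((9 : ℝ) / 10) ^ (l + 1) ≤ 10 := by
    intro M
    have h := geom_sum_eq (show ((9 : ℝ) / 10) ≠ 1 by norm_num) M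
    simp_rw [pow_succ]
    rw [← Finset.sum_mul, h]
    have : (0 : ℝ) < (9 / 10) ^ M := by positivity
    rw [div_mul_eq_mul_div, div_le_iff_of_neg (by norm_num)]
    nlinarith
  simp_rw [mul_add, Finset.sum_add_distrib]
  rw [add_comm]
  gcongr
  · have e : ∀ k ∈ Finset.range N, ∑ l ∈ Finset.range (N - k), ((9 : ℝ) / 10) ^ (l + 1) * en N f (k + 1 + l) =
        ∑ m ∈ Finset.range (N + 1), if k < m then ((9 : ℝ) / 10) ^ (m - k) * en N f m else 0 := by
      intro k hk
      rw [← Finset.sum_filter]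
      refine Finset.sum_bij (fun l _ => k + 1 + l) ?_ ?_ ?_ ?_
      · intro l hl; simp at hl hk ⊢; omega
      · intro l _ l' _ h; simpa using h
      · intro m hm; simp at hm hk
        exact ⟨m - k - 1, by simp; omega, by omega⟩
      · intro l _; rw [show k + 1 + l - k = l + 1 by omega]
    rw [Finset.sum_congr rfl e, Finset.sum_comm, ← en_sum, Finset.mul_sum]
    refine Finset.sum_le_sum fun m hm => ?_
    calc ∑ k ∈ Finset.range N, (if k < m then ((9 : ℝ) / 10) ^ (m - k) * en N f m else 0)
        = (∑ k ∈ Finset.range N with k < m, ((9 : ℝ) / 10) ^ (m - k)) * en N f m := by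
          rw [Finset.sum_filter, Finset.sum_mul]
          exact Finset.sum_congr rfl fun k _ => by split_ifs <;> simp
      _ = (∑ l ∈ Finset.range m, ((9 : ℝ) / 10) ^ (l + 1)) * en N f m := by
          congr 1
          have : (Finset.range N).filter (· < m) = Finset.range m := by
            ext k; simp at hm ⊢; omega
          rw [this, ← Finset.sum_range_reflect]
          refine Finset.sum_congr rfl fun k hk => ?_
          simp at hk
          congr 1; omega
      _ ≤ _ := mul_le_mul_of_nonneg_right (geo m) (en_nonneg _ _ _)
  · rw [← en_sum N g, Finset.sum_range_succ, mul_add, Finset.mul_sum]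
    have := en_nonneg N g N
    have h2 : ∑ k ∈ Finset.range N, ∑ l ∈ Finset.range (N - k), ((9 : ℝ) / 10) ^ (l + 1) * en N g k ≤
        ∑ k ∈ Finset.range N, 10 * en N g k := by
      refine Finset.sum_le_sum fun k _ => ?_
      rw [← Finset.sum_mul]
      exact mul_le_mul_of_nonneg_right (geo _) (en_nonneg _ _ _)
    linarith

def frm {n : ℕ} (N : ℕ) (a : ZLat n → ZLat n → ℂ) (k : ℕ) (u v : ZLat n → ℂ) : ℂ :=
  (2 ^ k : ℂ) ^ n * ∑ z ∈ bx n (26 * 2 ^ (N - k)), ∑ w ∈ bx n (26 * 2 ^ (N - k)),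
    lev a (2 ^ k) z w * u w * v z

lemma lev_swap {n : ℕ} (a : ZLat n → ZLat n → ℂ) (q : ℕ) (z w : ZLat n) :
    lev (fun x y => a y x) q z w = lev a q w z := by
  unfold lev; rw [Finset.sum_comm]

lemma frm_swap {n N : ℕ} (a : ZLat n → ZLat n → ℂ) (k : ℕ) (u v : ZLat n → ℂ) :
    frm N (fun x y => a y x) k v u = frm N a k u v := by
  unfold frm
  rw [Finset.sum_comm]
  simp_rw [lev_swap]
  congr 1
  exact Finset.sum_congr rfl fun z _ => Finset.sum_congr rfl fun w _ => by ring

lemma frm_add_left {n N : ℕ} (a : ZLat n → ZLat n → ℂ) (k : ℕ) (u u' v : ZLat n → ℂ) :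
    frm N a k (fun z => u z + u' z) v = frm N a k u v + frm N a k u' v := by
  unfold frm
  rw [← mul_add, ← Finset.sum_add_distrib]
  simp_rw [← Finset.sum_add_distrib]
  congr 1
  exact Finset.sum_congr rfl fun z _ => Finset.sum_congr rfl fun w _ => by ring

lemma frm_add_right {n N : ℕ} (a : ZLat n → ZLat n → ℂ) (k : ℕ) (u v v' : ZLat n → ℂ) :
    frm N a k u (fun z => v z + v' z) = frm N a k u v + frm N a k u v' := by
  unfold frm
  rw [← mul_add, ← Finset.sum_add_distrib]
  simp_rw [← Finset.sum_add_distrib]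
  congr 1
  exact Finset.sum_congr rfl fun z _ => Finset.sum_congr rfl fun w _ => by ring

lemma lev_succ {n q : ℕ} (hq : 0 < q) (a : ZLat n → ZLat n → ℂ) (z w : ZLat n) :
    lev a (q * 2) z w = ((2 : ℂ) ^ n)⁻¹ * ∑ z' ∈ fib 2 z, ∑ w' ∈ fib 2 w, lev a q z' w' := by
  have e : ∑ x ∈ fib (q * 2) z, ∑ y ∈ fib (q * 2) w, a x y =
      ∑ z' ∈ fib 2 z, ∑ w' ∈ fib 2 w, ∑ x ∈ fib q z', ∑ y ∈ fib q w', a x y := by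
    rw [sum_fib_fib hq two_pos]
    refine Finset.sum_congr rfl fun z' _ => ?_
    symm
    rw [Finset.sum_comm]
    refine Finset.sum_congr rfl fun x _ => ?_
    rw [sum_fib_fib hq two_pos]
  unfold lev
  rw [e]
  simp_rw [← Finset.mul_sum]
  rw [← mul_assoc]
  congr 1
  push_cast
  rw [mul_pow, mul_inv, mul_comm]

lemma frm_succ {n N k : ℕ} (hk : k < N) (a : ZLat n → ZLat n → ℂ) (u v : ZLat n → ℂ) :
    frm N a k (fun z => u (qd 2 z)) (fun z => v (qd 2 z)) = frm N a (k + 1) u v := by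
  have hq : 0 < 2 ^ k := by positivity
  unfold frm
  rw [← pow_box hk, sum_bx_fib two_pos]
  simp_rw [sum_bx_fib two_pos]
  rw [pow_succ (2 : ℂ), mul_pow, mul_assoc]
  congr 1
  rw [Finset.mul_sum]
  refine Finset.sum_congr rfl fun z _ => ?_
  rw [Finset.sum_comm, Finset.mul_sum]
  refine Finset.sum_congr rfl fun w _ => ?_
  rw [pow_succ 2 k, lev_succ hq]
  have h2 : (2 : ℂ) ^ n ≠ 0 := pow_ne_zero _ two_ne_zero
  rw [mul_assoc ((2 : ℂ) ^ n)⁻¹, mul_assoc ((2 : ℂ) ^ n)⁻¹, mul_inv_cancel_left₀ h2, Finset.sum_mul, Finset.sum_mul]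
  refine Finset.sum_congr rfl fun z' hz' => ?_
  rw [Finset.sum_mul, Finset.sum_mul]
  refine Finset.sum_congr rfl fun w' hw' => ?_
  rw [(mem_fib two_pos).mp hz', (mem_fib two_pos).mp hw']

lemma hh_mean {n N k : ℕ} (hk : k < N) (g : ZLat n → ℂ) (y : ZLat n) : ∑ z ∈ fib 2 y, hh N g k z = 0 := by
  have hq : 0 < 2 ^ k := by positivity
  have e : ∀ z ∈ fib 2 y, hh N g k z = av (2 ^ k) g z - av (2 ^ (k + 1)) g y := by
    intro z hz; rw [hh, if_pos hk, (mem_fib two_pos).mp hz]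
  rw [Finset.sum_congr rfl e, Finset.sum_sub_distrib, ← card_av two_pos, Finset.sum_const, pow_succ,
    av_mul hq two_pos, nsmul_eq_mul, sub_self]

lemma frm_tl {n N k : ℕ} (hk : k < N) (a : ZLat n → ZLat n → ℂ) (u g : ZLat n → ℂ) :
    frm N a k u (hh N g k) = (2 ^ k : ℂ) ^ n * ∑ z ∈ bx n (26 * 2 ^ (N - k)), ∑ w ∈ bx n (26 * 2 ^ (N - k)),
      tl a (2 ^ k) z w * u w * hh N g k z := by
  unfold frm
  congr 1
  rw [Finset.sum_comm, Finset.sum_comm (f := fun z w => tl a (2 ^ k) z w * u w * hh N g k z)]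
  refine Finset.sum_congr rfl fun w _ => ?_
  rw [← sub_eq_zero, ← Finset.sum_sub_distrib, ← pow_box hk, sum_bx_fib two_pos]
  refine Finset.sum_eq_zero fun y _ => ?_
  have e : ∀ z ∈ fib 2 y, lev a (2 ^ k) z w * u w * hh N g k z - tl a (2 ^ k) z w * u w * hh N g k z =
      (((2 : ℂ) ^ n)⁻¹ * ∑ z' ∈ fib 2 y, lev a (2 ^ k) z' w) * u w * hh N g k z := by
    intro z hz
    rw [tl, (mem_fib two_pos).mp hz]; ring
  rw [Finset.sum_congr rfl e, ← Finset.mul_sum, hh_mean hk, mul_zero]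

lemma sum_lev {n N k : ℕ} (hk : k ≤ N) (a : ZLat n → ZLat n → ℂ) (z : ZLat n) :
    ∑ w ∈ bx n (26 * 2 ^ (N - k)), lev a (2 ^ k) z w =
      av (2 ^ k) (fun x => ∑ w ∈ bx n (26 * 2 ^ N), a x w) z := by
  have hq : 0 < 2 ^ k := by positivity
  unfold lev av
  rw [← Finset.mul_sum, Finset.sum_comm]
  push_cast
  congr 1
  refine Finset.sum_congr rfl fun x _ => ?_
  rw [← pow_box' hk, sum_bx_fib hq]

lemma sum_tl {n N k : ℕ} (hk : k < N) (a : ZLat n → ZLat n → ℂ) (z : ZLat n) :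
    ∑ w ∈ bx n (26 * 2 ^ (N - k)), tl a (2 ^ k) z w =
      av (2 ^ k) (fun x => ∑ w ∈ bx n (26 * 2 ^ N), a x w) z -
      av (2 ^ (k + 1)) (fun x => ∑ w ∈ bx n (26 * 2 ^ N), a x w) (qd 2 z) := by
  have hq : 0 < 2 ^ k := by positivity
  unfold tl
  rw [Finset.sum_sub_distrib, sum_lev hk.le, ← Finset.mul_sum, Finset.sum_comm, pow_succ, av_mul hq two_pos]
  simp_rw [sum_lev hk.le]
  congr 1

lemma bx_mono {n R R' : ℕ} (h : R ≤ R') : bx n R ⊆ bx n R' := by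
  intro x hx
  simp only [bx, Fintype.mem_piFinset, Finset.mem_Ico] at hx ⊢
  intro i; have := hx i; omega

lemma sum_hh {n N k : ℕ} (hk : k ≤ N) {f : ZLat n → ℂ} (hf : ∀ x, x ∉ bx n (1 * 2 ^ N) → f x = 0)
    (P : ZLat n → ℝ) (hP : ∀ z, hh N f k z = 0 → P z = 0) :
    ∑ z ∈ bx n (26 * 2 ^ (N - k)), P z = ∑ z ∈ bx n (1 * 2 ^ (N - k)), P z := by
  symm
  apply Finset.sum_subset (bx_mono (by omega))
  intro z _ hz
  exact hP z (hh_supp hk hf hz)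

lemma norm_two_pow (k n : ℕ) : ‖((2 : ℂ) ^ k) ^ n‖ = ((2 : ℝ) ^ k) ^ n := by simp

lemma dd_bound {n : ℕ} (hn : 1 ≤ n) {C : ℝ} (hC : 0 < C) : ∃ C' : ℝ, 0 < C' ∧
    ∀ a : ZLat n → ZLat n → ℂ, DCZ n C a → ∀ N k, k < N → ∀ f g : ZLat n → ℂ,
    (∀ x, x ∉ bx n (1 * 2 ^ N) → f x = 0) → (∀ x, x ∉ bx n (1 * 2 ^ N) → g x = 0) →
    ‖frm N a k (hh N f k) (hh N g k)‖ ≤ C' * (en N f k + en N g k) := by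
  obtain ⟨C1, hC1, h1⟩ := tl_bound hn hC
  obtain ⟨C2, hC2, h2⟩ := schur hn
  refine ⟨C1 * C2, by positivity, ?_⟩
  intro a ha N k hk f g hf hg
  rw [frm_tl hk, norm_mul, norm_two_pow]
  set X := bx n (26 * 2 ^ (N - k)) with hX
  have h3 := h2 X X (fun z => ‖hh N g k z‖) (fun z => ‖hh N f k z‖)
  have h4 : ‖∑ z ∈ X, ∑ w ∈ X, tl a (2 ^ k) z w * hh N f k w * hh N g k z‖ ≤
      C1 * ∑ z ∈ X, ∑ w ∈ X, ‖hh N g k z‖ * kap n (z - w) * ‖hh N f k w‖ := by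
    rw [Finset.mul_sum]
    refine (norm_sum_le _ _).trans (Finset.sum_le_sum fun z _ => ?_)
    rw [Finset.mul_sum]
    refine (norm_sum_le _ _).trans (Finset.sum_le_sum fun w _ => ?_)
    rw [norm_mul, norm_mul]
    calc _ ≤ C1 * kap n (z - w) * ‖hh N f k w‖ * ‖hh N g k z‖ := by
          gcongr; exact h1 a ha _ (by positivity) z w
      _ = _ := by ring
  rw [hX, sum_hh hk.le hg (fun z => ‖hh N g k z‖ ^ 2) (by intro z h; simp [h]),
    sum_hh hk.le hf (fun z => ‖hh N f k z‖ ^ 2) (by intro z h; simp [h]), ← hX] at h3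
  calc _ ≤ ((2 : ℝ) ^ k) ^ n * (C1 * (C2 * (∑ z ∈ bx n (1 * 2 ^ (N - k)), ‖hh N g k z‖ ^ 2 +
        ∑ z ∈ bx n (1 * 2 ^ (N - k)), ‖hh N f k z‖ ^ 2))) := by
        gcongr; exact h4.trans (by gcongr)
    _ = _ := by unfold en; ring

lemma de_bound {n : ℕ} (hn : 1 ≤ n) {C : ℝ} (hC : 0 < C) : ∃ C' : ℝ, 0 < C' ∧
    ∀ a : ZLat n → ZLat n → ℂ, DCZ n C a → ∀ N, ∀ f g : ZLat n → ℂ,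
    (∀ x, x ∉ bx n (1 * 2 ^ N) → f x = 0) → (∀ x, x ∉ bx n (1 * 2 ^ N) → g x = 0) →
    ∑ k ∈ Finset.range N, ‖frm N a k (fun z => av (2 ^ (k + 1)) f (qd 2 z)) (hh N g k)‖ ≤
      C' * (∑ x ∈ bx n (1 * 2 ^ N), ‖f x‖ ^ 2 + ∑ x ∈ bx n (1 * 2 ^ N), ‖g x‖ ^ 2) := by
  obtain ⟨C1, hC1, h1⟩ := tl_bound hn hC
  obtain ⟨C2, hC2, h2⟩ := far_level hn
  obtain ⟨C3, hC3, h3⟩ := osc_bound hn hC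
  refine ⟨1 + 4 * C3 + C1 * C2 * 10, by positivity, ?_⟩
  intro a ha N f g hf hg
  set t : ZLat n → ℂ := fun x => ∑ w ∈ bx n (26 * 2 ^ N), a x w with htdef
  have hcar := carleson hC3 N t (fun k hk y hy => h3 a ha N k hk y hy) f
  have hgeo := geo_sum (N := N) f g
  have heng : ∑ k ∈ Finset.range N, en N g k ≤ ∑ x ∈ bx n (1 * 2 ^ N), ‖g x‖ ^ 2 := by
    rw [← en_sum N g, Finset.sum_range_succ]
    linarith [en_nonneg N g N]
  have step : ∀ k ∈ Finset.range N, ‖frm N a k (fun z => av (2 ^ (k + 1)) f (qd 2 z)) (hh N g k)‖ ≤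
      en N g k + ((2 : ℝ) ^ k) ^ n * ∑ z ∈ bx n (1 * 2 ^ (N - k)),
        ‖av (2 ^ k) t z - av (2 ^ (k + 1)) t (qd 2 z)‖ ^ 2 * ‖av (2 ^ (k + 1)) f (qd 2 z)‖ ^ 2
      + C1 * C2 * ∑ l ∈ Finset.range (N - k), ((9 : ℝ) / 10) ^ (l + 1) * (en N g k + en N f (k + 1 + l)) := by
    intro k hk'
    have hk := Finset.mem_range.mp hk'
    rw [frm_tl hk]
    set X := bx n (26 * 2 ^ (N - k)) with hX
    set Y := bx n (1 * 2 ^ (N - k)) with hY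
    have hYX : Y ⊆ X := bx_mono (by omega)
    set u : ZLat n → ℂ := fun z => av (2 ^ (k + 1)) f (qd 2 z) with hu
    set b : ZLat n → ℂ := fun z => av (2 ^ k) t z - av (2 ^ (k + 1)) t (qd 2 z) with hb
    have e1 : ∑ z ∈ X, ∑ w ∈ X, tl a (2 ^ k) z w * u w * hh N g k z =
        ∑ z ∈ Y, (b z * u z * hh N g k z + ∑ w ∈ X, tl a (2 ^ k) z w * (u w - u z) * hh N g k z) := by
      rw [← Finset.sum_subset hYX (f := fun z => ∑ w ∈ X, tl a (2 ^ k) z w * u w * hh N g k z)]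
      · refine Finset.sum_congr rfl fun z _ => ?_
        have : b z = ∑ w ∈ X, tl a (2 ^ k) z w := (sum_tl hk a z).symm
        rw [this, Finset.sum_mul, Finset.sum_mul, ← Finset.sum_add_distrib]
        exact Finset.sum_congr rfl fun w _ => by ring
      · intro z _ hz; simp [hh_supp hk.le hg hz]
    have e2 : ∀ z w, ‖u w - u z‖ ≤ ∑ l ∈ Finset.range (N - k),
        ‖hh N f (k + 1 + l) (qd (2 ^ (l + 1)) w) - hh N f (k + 1 + l) (qd (2 ^ (l + 1)) z)‖ := by
      intro z w
      have e3 : ∀ z, u z = ∑ l ∈ Finset.range (N - k), hh N f (k + 1 + l) (qd (2 ^ (l + 1)) z) := by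
        intro z
        simp only [hu]
        rw [av_tele N f (N - k - 1) (k + 1) (by omega), show N - k - 1 + 1 = N - k by omega]
        refine Finset.sum_congr rfl fun l _ => ?_
        rw [qd_qd, ← pow_succ']
      rw [e3, e3, ← Finset.sum_sub_distrib]
      exact norm_sum_le _ _
    have far : ∑ z ∈ Y, ∑ w ∈ X, ‖hh N g k z‖ * kap n (z - w) * ‖u w - u z‖ ≤
        C2 * ∑ l ∈ Finset.range (N - k), ((9 : ℝ) / 10) ^ (l + 1) * (∑ z ∈ Y, ‖hh N g k z‖ ^ 2 +
          ((2 : ℝ) ^ (l + 1)) ^ n * ∑ y ∈ bx n (1 * 2 ^ (N - (k + 1 + l))), ‖hh N f (k + 1 + l) y‖ ^ 2) := by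
      calc _ ≤ ∑ z ∈ Y, ∑ w ∈ X, ‖hh N g k z‖ * kap n (z - w) * ∑ l ∈ Finset.range (N - k),
            ‖hh N f (k + 1 + l) (qd (2 ^ (l + 1)) w) - hh N f (k + 1 + l) (qd (2 ^ (l + 1)) z)‖ := by
            gcongr with z hz w hw
            · exact mul_nonneg (norm_nonneg _) (kap_nonneg _ _)
            · exact e2 z w
        _ = ∑ l ∈ Finset.range (N - k), ∑ z ∈ Y, ∑ w ∈ X, ‖hh N g k z‖ * kap n (z - w) *
            ‖hh N f (k + 1 + l) (qd (2 ^ (l + 1)) w) - hh N f (k + 1 + l) (qd (2 ^ (l + 1)) z)‖ := by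
            symm
            rw [Finset.sum_comm]
            refine Finset.sum_congr rfl fun z _ => ?_
            rw [Finset.sum_comm]
            refine Finset.sum_congr rfl fun w _ => ?_
            rw [Finset.mul_sum]
        _ ≤ _ := by
            rw [Finset.mul_sum]
            refine Finset.sum_le_sum fun l hl => ?_
            have hl' := Finset.mem_range.mp hl
            have hR : 2 ^ (l + 1) * (1 * 2 ^ (N - (k + 1 + l))) = 1 * 2 ^ (N - k) := by
              rw [one_mul, one_mul, ← pow_add]; congr 1; omega
            have h4 := h2 (l + 1) (1 * 2 ^ (N - (k + 1 + l))) X (fun z => ‖hh N g k z‖) (hh N f (k + 1 + l))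
              (by rw [hR]; exact hYX) (fun y hy => hh_supp (by omega) hf hy)
            rw [hR] at h4
            exact h4
    have para : ∀ z, ‖b z * u z * hh N g k z‖ ≤ ‖hh N g k z‖ ^ 2 + ‖b z‖ ^ 2 * ‖u z‖ ^ 2 := by
      intro z
      rw [norm_mul, norm_mul]
      nlinarith [sq_nonneg (‖b z‖ * ‖u z‖ - ‖hh N g k z‖), sq_nonneg (‖b z‖ * ‖u z‖), sq_nonneg ‖hh N g k z‖]
    rw [e1, norm_mul, norm_two_pow]
    have tot : ‖∑ z ∈ Y, (b z * u z * hh N g k z + ∑ w ∈ X, tl a (2 ^ k) z w * (u w - u z) * hh N g k z)‖ ≤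
        ∑ z ∈ Y, ‖hh N g k z‖ ^ 2 + ∑ z ∈ Y, ‖b z‖ ^ 2 * ‖u z‖ ^ 2 +
        C1 * ∑ z ∈ Y, ∑ w ∈ X, ‖hh N g k z‖ * kap n (z - w) * ‖u w - u z‖ := by
      rw [Finset.mul_sum, ← Finset.sum_add_distrib, ← Finset.sum_add_distrib]
      refine (norm_sum_le _ _).trans (Finset.sum_le_sum fun z _ => ?_)
      refine (norm_add_le _ _).trans (add_le_add (para z) ?_)
      rw [Finset.mul_sum]
      refine (norm_sum_le _ _).trans (Finset.sum_le_sum fun w _ => ?_)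
      rw [norm_mul, norm_mul]
      calc _ ≤ C1 * kap n (z - w) * ‖u w - u z‖ * ‖hh N g k z‖ := by
            gcongr; exact h1 a ha _ (by positivity) z w
        _ = _ := by ring
    calc _ ≤ ((2 : ℝ) ^ k) ^ n * (∑ z ∈ Y, ‖hh N g k z‖ ^ 2 + ∑ z ∈ Y, ‖b z‖ ^ 2 * ‖u z‖ ^ 2 +
        C1 * (C2 * ∑ l ∈ Finset.range (N - k), ((9 : ℝ) / 10) ^ (l + 1) * (∑ z ∈ Y, ‖hh N g k z‖ ^ 2 +
          ((2 : ℝ) ^ (l + 1)) ^ n * ∑ y ∈ bx n (1 * 2 ^ (N - (k + 1 + l))), ‖hh N f (k + 1 + l) y‖ ^ 2))) := by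
          gcongr
          exact tot.trans (by gcongr)
      _ = _ := by
          rw [mul_add, mul_add]
          congr 1
          rw [show ∀ s : ℝ, ((2 : ℝ) ^ k) ^ n * (C1 * (C2 * s)) = C1 * C2 * (((2 : ℝ) ^ k) ^ n * s) from fun s => by ring]
          congr 1
          rw [Finset.mul_sum]
          refine Finset.sum_congr rfl fun l _ => ?_
          simp only [en]
          rw [show k + 1 + l = k + (l + 1) by omega, pow_add (2 : ℝ) k (l + 1), mul_pow]
          ring
  refine (Finset.sum_le_sum step).trans ?_
  rw [Finset.sum_add_distrib, Finset.sum_add_distrib, ← Finset.mul_sum]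
  have h5 := mul_le_mul_of_nonneg_left hgeo (mul_pos hC1 hC2).le
  have hF : 0 ≤ ∑ x ∈ bx n (1 * 2 ^ N), ‖f x‖ ^ 2 := by positivity
  have hG : 0 ≤ ∑ x ∈ bx n (1 * 2 ^ N), ‖g x‖ ^ 2 := by positivity
  nlinarith [mul_nonneg hC3.le hG]

lemma top_bound {n : ℕ} (hn : 1 ≤ n) {C : ℝ} (hC : 0 < C) : ∃ C' : ℝ, 0 < C' ∧
    ∀ a : ZLat n → ZLat n → ℂ, DCZ n C a → ∀ N, ∀ f g : ZLat n → ℂ,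
    (∀ x, x ∉ bx n (1 * 2 ^ N) → f x = 0) → (∀ x, x ∉ bx n (1 * 2 ^ N) → g x = 0) →
    ‖frm N a N (hh N f N) (hh N g N)‖ ≤ C' * (en N f N + en N g N) := by
  obtain ⟨C1, hC1, h1⟩ := lev_near hn hC 52
  refine ⟨C1 * 52 ^ n, by positivity, ?_⟩
  intro a ha N f g hf hg
  unfold frm
  rw [norm_mul, norm_two_pow]
  set X := bx n (26 * 2 ^ (N - N)) with hX
  have hcard : (X.card : ℝ) = 52 ^ n := by
    simp [hX, bx, Fintype.card_piFinset]
  have h4 : ‖∑ z ∈ X, ∑ w ∈ X, lev a (2 ^ N) z w * hh N f N w * hh N g N z‖ ≤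
      ∑ z ∈ X, ∑ w ∈ X, C1 * (‖hh N f N w‖ ^ 2 + ‖hh N g N z‖ ^ 2) := by
    refine (norm_sum_le _ _).trans (Finset.sum_le_sum fun z hz => ?_)
    refine (norm_sum_le _ _).trans (Finset.sum_le_sum fun w hw => ?_)
    have hd : ‖z - w‖ ≤ (52 : ℕ) := by
      rw [pi_norm_le_iff_of_nonneg (by positivity)]
      intro i
      simp only [hX, bx, Fintype.mem_piFinset, Finset.mem_Ico] at hz hw
      have h5 := hz i
      have h6 := hw i
      rw [Pi.sub_apply, Int.norm_eq_abs]
      simp at h5 h6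
      have : |z i - w i| ≤ 52 := by rw [abs_le]; constructor <;> linarith
      exact_mod_cast this
    rw [norm_mul, norm_mul]
    have h7 := h1 a ha (2 ^ N) (by positivity) z w hd
    calc _ ≤ C1 * ‖hh N f N w‖ * ‖hh N g N z‖ := by gcongr
      _ = C1 * (‖hh N f N w‖ * ‖hh N g N z‖) := by ring
      _ ≤ _ := by
        gcongr
        nlinarith [sq_nonneg (‖hh N f N w‖ - ‖hh N g N z‖), sq_nonneg ‖hh N f N w‖, sq_nonneg ‖hh N g N z‖]
  have h5 : ∑ z ∈ X, ∑ w ∈ X, C1 * (‖hh N f N w‖ ^ 2 + ‖hh N g N z‖ ^ 2) =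
      C1 * 52 ^ n * (∑ z ∈ X, ‖hh N f N z‖ ^ 2 + ∑ z ∈ X, ‖hh N g N z‖ ^ 2) := by
    simp_rw [← Finset.mul_sum, Finset.sum_add_distrib, Finset.sum_const, nsmul_eq_mul, ← Finset.mul_sum]
    rw [hcard]; ring
  rw [h5, hX, sum_hh le_rfl hg (fun z => ‖hh N g N z‖ ^ 2) (by intro z h; simp [h]),
    sum_hh le_rfl hf (fun z => ‖hh N f N z‖ ^ 2) (by intro z h; simp [h]), ← hX] at h4
  calc _ ≤ _ := mul_le_mul_of_nonneg_left h4 (by positivity)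
    _ = _ := by unfold en; ring

lemma disc_pre {n : ℕ} (hn : 1 ≤ n) {C : ℝ} (hC : 0 < C) : ∃ C' : ℝ, 0 < C' ∧
    ∀ a : ZLat n → ZLat n → ℂ, DCZ n C a → DCZ n C (fun x y => a y x) → ∀ N, ∀ f g : ZLat n → ℂ,
    (∀ x, x ∉ bx n (1 * 2 ^ N) → f x = 0) → (∀ x, x ∉ bx n (1 * 2 ^ N) → g x = 0) →
    ‖∑ x ∈ bx n (1 * 2 ^ N), ∑ y ∈ bx n (1 * 2 ^ N), a x y * f y * g x‖ ≤
      C' * (∑ x ∈ bx n (1 * 2 ^ N), ‖f x‖ ^ 2 + ∑ x ∈ bx n (1 * 2 ^ N), ‖g x‖ ^ 2) := by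
  obtain ⟨C1, hC1, h1⟩ := dd_bound hn hC
  obtain ⟨C2, hC2, h2⟩ := de_bound hn hC
  obtain ⟨C3, hC3, h3⟩ := top_bound hn hC
  refine ⟨C1 + 2 * C2 + C3, by positivity, ?_⟩
  intro a ha ha' N f g hf hg
  have hbot : ∑ x ∈ bx n (1 * 2 ^ N), ∑ y ∈ bx n (1 * 2 ^ N), a x y * f y * g x =
      frm N a 0 (av (2 ^ 0) f) (av (2 ^ 0) g) := by
    have hYX : bx n (1 * 2 ^ N) ⊆ bx n (26 * 2 ^ N) := bx_mono (by omega)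
    simp only [frm, pow_zero, one_pow, one_mul, Nat.sub_zero, av_one]
    rw [one_mul] at hYX hf hg
    rw [Finset.sum_subset hYX]
    · refine Finset.sum_congr rfl fun x _ => ?_
      rw [Finset.sum_subset hYX]
      · refine Finset.sum_congr rfl fun y _ => ?_
        simp [lev, fib_one]
      · intro y _ hy; simp [hf y hy]
    · intro x _ hx; simp [hg x hx]
  have htop : frm N a N (av (2 ^ N) f) (av (2 ^ N) g) = frm N a N (hh N f N) (hh N g N) := by
    have : ∀ f : ZLat n → ℂ, av (2 ^ N) f = hh N f N := by
      intro f; ext z; simp [hh]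
    rw [this, this]
  have hstep : ∀ k ∈ Finset.range N, frm N a k (av (2 ^ k) f) (av (2 ^ k) g) -
      frm N a (k + 1) (av (2 ^ (k + 1)) f) (av (2 ^ (k + 1)) g) =
      frm N a k (hh N f k) (hh N g k) + frm N a k (fun z => av (2 ^ (k + 1)) f (qd 2 z)) (hh N g k) +
      frm N (fun x y => a y x) k (fun z => av (2 ^ (k + 1)) g (qd 2 z)) (hh N f k) := by
    intro k hk'
    have hk := Finset.mem_range.mp hk'
    have e : ∀ f : ZLat n → ℂ, av (2 ^ k) f = fun z => hh N f k z + av (2 ^ (k + 1)) f (qd 2 z) := by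
      intro f; ext z; simp [hh, hk]
    rw [e f, e g, frm_add_left, frm_add_right, frm_add_right, frm_succ hk, frm_swap a k (hh N f k)]
    ring
  have htel := Finset.sum_range_sub' (fun k => frm N a k (av (2 ^ k) f) (av (2 ^ k) g)) N
  rw [Finset.sum_congr rfl hstep, Finset.sum_add_distrib, Finset.sum_add_distrib] at htel
  have e : ∀ (p q r s t : ℂ), p + q + r = s - t → s = p + q + r + t := by
    intro p q r s t h; linear_combination -h
  rw [hbot, e _ _ _ _ _ htel, htop]
  set F := ∑ x ∈ bx n (1 * 2 ^ N), ‖f x‖ ^ 2 with hF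
  set G := ∑ x ∈ bx n (1 * 2 ^ N), ‖g x‖ ^ 2 with hG
  have i1 : ‖∑ k ∈ Finset.range N, frm N a k (hh N f k) (hh N g k)‖ ≤
      C1 * (∑ k ∈ Finset.range N, en N f k + ∑ k ∈ Finset.range N, en N g k) := by
    rw [← Finset.sum_add_distrib, Finset.mul_sum]
    exact (norm_sum_le _ _).trans (Finset.sum_le_sum fun k hk =>
      h1 a ha N k (Finset.mem_range.mp hk) f g hf hg)
  have i2 := (norm_sum_le _ _).trans (h2 a ha N f g hf hg)
  have i3 := (norm_sum_le _ _).trans (h2 _ ha' N g f hg hf)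
  have i4 := h3 a ha N f g hf hg
  have sF := en_sum N f
  have sG := en_sum N g
  rw [Finset.sum_range_succ, ← hF] at sF
  rw [Finset.sum_range_succ, ← hG] at sG
  have pF := en_nonneg N f N
  have pG := en_nonneg N g N
  have qF : 0 ≤ ∑ k ∈ Finset.range N, en N f k := Finset.sum_nonneg fun k _ => en_nonneg _ _ _
  have qG : 0 ≤ ∑ k ∈ Finset.range N, en N g k := Finset.sum_nonneg fun k _ => en_nonneg _ _ _
  have j1 : C1 * (∑ k ∈ Finset.range N, en N f k + ∑ k ∈ Finset.range N, en N g k) ≤ C1 * (F + G) := by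
    gcongr <;> linarith
  have j4 : C3 * (en N f N + en N g N) ≤ C3 * (F + G) := by gcongr <;> linarith
  refine (norm_add_le _ _).trans ?_
  refine (add_le_add_left (norm_add_le _ _) _).trans ?_
  refine (add_le_add_left (add_le_add_left (norm_add_le _ _) _) _).trans ?_
  linarith

abbrev EE (n : ℕ) := EuclideanSpace ℝ (Fin n)

def eta (t : ℝ) : ℝ := Real.smoothTransition (t + 1) - Real.smoothTransition t

lemma eta_nonneg (t : ℝ) : 0 ≤ eta t := by
  unfold eta
  rcases le_total t 0 with h | h
  · rw [Real.smoothTransition.zero_of_nonpos h, sub_zero]; exact Real.smoothTransition.nonneg _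
  · rw [Real.smoothTransition.one_of_one_le (by linarith : 1 ≤ t + 1)]
    linarith [Real.smoothTransition.le_one t]

lemma eta_le_one (t : ℝ) : eta t ≤ 1 := by
  unfold eta
  linarith [Real.smoothTransition.le_one (t + 1), Real.smoothTransition.nonneg t]

lemma eta_zero {t : ℝ} (h : 1 ≤ |t|) : eta t = 0 := by
  unfold eta
  rcases le_abs.mp h with h | h
  · rw [Real.smoothTransition.one_of_one_le h, Real.smoothTransition.one_of_one_le (by linarith), sub_self]
  · rw [Real.smoothTransition.zero_of_nonpos (by linarith), Real.smoothTransition.zero_of_nonpos (by linarith), sub_self]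

lemma eta_contDiff : ContDiff ℝ 1 eta := by
  unfold eta
  exact (Real.smoothTransition.contDiff.comp (contDiff_id.add contDiff_const)).sub Real.smoothTransition.contDiff

lemma eta_compact : HasCompactSupport eta := by
  apply HasCompactSupport.of_support_subset_isCompact (isCompact_Icc (a := (-1 : ℝ)) (b := 1))
  intro t ht
  by_contra h
  apply ht
  apply eta_zero
  rw [Set.mem_Icc, ← abs_le, not_le] at h
  exact h.le

lemma eta_lip : ∃ L : ℝ, 0 < L ∧ ∀ s t, |eta s - eta t| ≤ L * |s - t| := by
  obtain ⟨C, hC⟩ := eta_contDiff.lipschitzWith_of_hasCompactSupport eta_compact one_ne_zero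
  refine ⟨C + 1, by positivity, fun s t => ?_⟩
  have := hC.dist_le_mul s t
  rw [Real.dist_eq, Real.dist_eq] at this
  nlinarith [abs_nonneg (s - t)]

lemma eta_sum_pre (t : ℝ) (a b : ℤ) (h : a ≤ b) : ∑ j ∈ Finset.Icc a b, eta (t - j) =
    Real.smoothTransition (t - a + 1) - Real.smoothTransition (t - b) := by
  induction b, h using Int.leInduction with
  | base => simp [eta]
  | succ b hb ih =>
    have : Finset.Icc a (b + 1) = insert (b + 1) (Finset.Icc a b) := by
      ext j; simp only [Finset.mem_Icc, Finset.mem_insert]; omega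
    rw [this, Finset.sum_insert (by simp), ih, eta]
    push_cast
    rw [show t - ((b : ℝ) + 1) + 1 = t - b by ring]; ring

lemma eta_sum {t : ℝ} {a b : ℤ} (ha : a ≤ t) (hb : t ≤ b) : ∑ j ∈ Finset.Icc a b, eta (t - j) = 1 := by
  have : a ≤ b := by exact_mod_cast ha.trans hb
  rw [eta_sum_pre t a b this, Real.smoothTransition.one_of_one_le (by linarith),
    Real.smoothTransition.zero_of_nonpos (by linarith), sub_zero]

def ph {n : ℕ} (ε : ℝ) (y : ZLat n) (x : EE n) : ℝ := ∏ i, eta (x i / ε - y i)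

def cbox {n : ℕ} (lo hi : ZLat n) : Finset (ZLat n) := Fintype.piFinset fun i => Finset.Icc (lo i) (hi i)

lemma ph_sum {n : ℕ} {ε : ℝ} {x : EE n} {lo hi : ZLat n} (h : ∀ i, (lo i : ℝ) ≤ x i / ε ∧ x i / ε ≤ hi i) :
    ∑ y ∈ cbox lo hi, ph ε y x = 1 := by
  unfold ph cbox
  rw [← Finset.prod_univ_sum (fun i => Finset.Icc (lo i) (hi i)) (fun i j => eta (x i / ε - (j : ℝ)))]
  exact Finset.prod_eq_one fun i _ => eta_sum (h i).1 (h i).2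

lemma ph_nonneg {n : ℕ} (ε : ℝ) (y : ZLat n) (x : EE n) : 0 ≤ ph ε y x :=
  Finset.prod_nonneg fun _ _ => eta_nonneg _

lemma ph_le_one {n : ℕ} (ε : ℝ) (y : ZLat n) (x : EE n) : ph ε y x ≤ 1 :=
  Finset.prod_le_one (fun _ _ => eta_nonneg _) fun _ _ => eta_le_one _

lemma ph_zero {n : ℕ} {ε : ℝ} {y : ZLat n} {x : EE n} (i : Fin n) (h : 1 ≤ |x i / ε - y i|) : ph ε y x = 0 :=
  Finset.prod_eq_zero (Finset.mem_univ i) (eta_zero h)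

lemma ph_sum_le {n : ℕ} (ε : ℝ) (x : EE n) (S : Finset (ZLat n)) : ∑ y ∈ S, ph ε y x ≤ 1 := by
  classical
  rw [← ph_sum (lo := fun i => ⌊x i / ε⌋) (hi := fun i => ⌈x i / ε⌉)
    (fun i => ⟨Int.floor_le _, Int.le_ceil _⟩)]
  have : ∑ y ∈ S, ph ε y x = ∑ y ∈ S with y ∈ cbox (fun i => ⌊x i / ε⌋) (fun i => ⌈x i / ε⌉), ph ε y x := by
    rw [Finset.sum_filter]
    refine Finset.sum_congr rfl fun y _ => ?_
    split_ifs with h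
    · rfl
    · by_contra h0
      apply h
      rw [cbox, Fintype.mem_piFinset]
      intro i
      have h1 : |x i / ε - y i| < 1 := by
        by_contra h2; exact h0 (ph_zero i (not_lt.mp h2))
      rw [abs_lt] at h1
      rw [Finset.mem_Icc]
      constructor
      · have : ((⌊x i / ε⌋ : ℤ) : ℝ) < y i + 1 := by linarith [Int.floor_le (x i / ε)]
        have : ⌊x i / ε⌋ < y i + 1 := by exact_mod_cast this
        omega
      · have : (y i : ℝ) - 1 < ((⌈x i / ε⌉ : ℤ) : ℝ) := by linarith [Int.le_ceil (x i / ε)]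
        have : y i - 1 < ⌈x i / ε⌉ := by exact_mod_cast this
        omega
  rw [this]
  apply Finset.sum_le_sum_of_subset_of_nonneg
  · intro y hy; exact (Finset.mem_filter.mp hy).2
  · intro y _ _; exact ph_nonneg _ _ _

lemma ph_contDiff {n : ℕ} (ε : ℝ) (y : ZLat n) : ContDiff ℝ 1 (ph ε y : EE n → ℝ) := by
  unfold ph
  apply contDiff_prod
  intro i _
  apply eta_contDiff.comp
  apply ContDiff.sub _ contDiff_const
  apply ContDiff.div_const
  fun_prop

def cube {n : ℕ} (c : EE n) (s : ℝ) : Set (EE n) := {x | ∀ i, |x i - c i| ≤ s}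

lemma cube_closed {n : ℕ} (c : EE n) (s : ℝ) : IsClosed (cube c s) := by
  unfold cube
  simp only [Set.ofPred_forall]
  apply isClosed_iInter
  intro i
  apply isClosed_le _ continuous_const
  fun_prop

lemma coord_le_norm {n : ℕ} (x : EE n) (i : Fin n) : |x i| ≤ ‖x‖ := by
  have := PiLp.norm_apply_le x i
  simpa using this

lemma norm_le_coord {n : ℕ} {x : EE n} {s : ℝ} (hs : 0 ≤ s) (h : ∀ i, |x i| ≤ s) : ‖x‖ ≤ √n * s := by
  rw [EuclideanSpace.norm_eq]
  calc √(∑ i, ‖x i‖ ^ 2) ≤ √(∑ i : Fin n, s ^ 2) := by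
        apply Real.sqrt_le_sqrt
        gcongr with i
        exact h i
    _ = √n * s := by simp [Real.sqrt_sq hs]

lemma cube_sub_ball {n : ℕ} (c : EE n) {s : ℝ} (hs : 0 ≤ s) : cube c s ⊆ closedBall c (√n * s) := by
  intro x hx
  rw [mem_closedBall, dist_eq_norm]
  exact norm_le_coord hs hx

lemma cube_compact {n : ℕ} (c : EE n) {s : ℝ} (hs : 0 ≤ s) : IsCompact (cube c s) :=
  (isCompact_closedBall c _).of_isClosed_subset (cube_closed c s) (cube_sub_ball c hs)

/-- lattice point embedded in space -/
def lp0 {n : ℕ} (ε : ℝ) (y : ZLat n) : EE n := WithLp.toLp 2 fun i => ε * (y i : ℝ)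

lemma lp0_apply {n : ℕ} (ε : ℝ) (y : ZLat n) (i : Fin n) : lp0 ε y i = ε * (y i : ℝ) := rfl

lemma ph_supp {n : ℕ} {ε : ℝ} (hε : 0 < ε) {y : ZLat n} {x : EE n} (h : ph ε y x ≠ 0) : x ∈ cube (lp0 ε y) ε := by
  intro i
  have h1 : |x i / ε - y i| < 1 := by
    by_contra h2; exact h (ph_zero i (not_lt.mp h2))
  rw [lp0_apply]
  have : x i - ε * y i = ε * (x i / ε - y i) := by field_simp
  rw [this, abs_mul, abs_of_pos hε]
  nlinarith

lemma ph_lip {n : ℕ} {L : ℝ} (hL : 0 < L) (h : ∀ s t, |eta s - eta t| ≤ L * |s - t|) {ε : ℝ} (hε : 0 < ε)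
    (y : ZLat n) (x : EE n) (i : Fin n) (t : ℝ) :
    |ph ε y (x + t • EuclideanSpace.single i 1) - ph ε y x| ≤ L / ε * |t| := by
  classical
  unfold ph
  rw [← Finset.mul_prod_erase _ _ (Finset.mem_univ i), ← Finset.mul_prod_erase _ (fun i => eta (x i / ε - y i)) (Finset.mem_univ i)]
  have e : ∏ j ∈ Finset.univ.erase i, eta ((x + t • EuclideanSpace.single i 1 : EE n) j / ε - y j) =
      ∏ j ∈ Finset.univ.erase i, eta (x j / ε - y j) := by
    refine Finset.prod_congr rfl fun j hj => ?_
    have : j ≠ i := (Finset.mem_erase.mp hj).1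
    simp [this]
  rw [e, ← sub_mul, abs_mul]
  have h1 : |∏ j ∈ Finset.univ.erase i, eta (x j / ε - y j)| ≤ 1 := by
    rw [abs_of_nonneg (Finset.prod_nonneg fun _ _ => eta_nonneg _)]
    exact Finset.prod_le_one (fun _ _ => eta_nonneg _) fun _ _ => eta_le_one _
  have h2 := h ((x + t • EuclideanSpace.single i 1 : EE n) i / ε - y i) (x i / ε - y i)
  have e2 : ((x + t • EuclideanSpace.single i 1 : EE n) i / ε - y i) - (x i / ε - y i) = t / ε := by
    simp; ring
  rw [e2, abs_div, abs_of_pos hε] at h2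
  calc _ ≤ |eta ((x + t • EuclideanSpace.single i 1 : EE n) i / ε - y i) - eta (x i / ε - y i)| * 1 := by gcongr
    _ ≤ _ := by rw [mul_one]; refine h2.trans (le_of_eq ?_); ring

lemma dir_bound {n : ℕ} {f : EE n → ℂ} {x v : EE n} (hf : DifferentiableAt ℝ f x) {C : ℝ} (hC : 0 ≤ C)
    {s : ℝ} (hs : 0 < s) (h : ∀ t : ℝ, |t| < s → ‖f (x + t • v) - f x‖ ≤ C * |t|) : ‖fderiv ℝ f x v‖ ≤ C := by
  rw [← hf.lineDeriv_eq_fderiv]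
  unfold lineDeriv
  apply norm_deriv_le_of_lip' hC
  filter_upwards [Metric.ball_mem_nhds (0 : ℝ) hs] with t ht
  have := h t (by simpa using ht)
  simpa using this

/-- complex combination of the partition functions -/
def comb {n : ℕ} (ε : ℝ) (S : Finset (ZLat n)) (c : ZLat n → ℂ) (x : EE n) : ℂ := ∑ y ∈ S, c y * (ph ε y x : ℂ)

lemma phc_contDiff {n : ℕ} (ε : ℝ) (y : ZLat n) : ContDiff ℝ 1 (fun x : EE n => (ph ε y x : ℂ)) :=
  Complex.ofRealCLM.contDiff.comp (ph_contDiff ε y)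

lemma comb_contDiff {n : ℕ} (ε : ℝ) (S : Finset (ZLat n)) (c : ZLat n → ℂ) : ContDiff ℝ 1 (comb ε S c) := by
  unfold comb
  apply ContDiff.sum
  intro y _
  exact contDiff_const.mul (phc_contDiff ε y)

lemma comb_norm {n : ℕ} (ε : ℝ) (S : Finset (ZLat n)) (c : ZLat n → ℂ) {M : ℝ} (hM : 0 ≤ M) (hc : ∀ y, ‖c y‖ ≤ M) (x : EE n) :
    ‖comb ε S c x‖ ≤ M := by
  unfold comb
  calc _ ≤ ∑ y ∈ S, M * ph ε y x := by
        refine (norm_sum_le _ _).trans (Finset.sum_le_sum fun y _ => ?_)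
        rw [norm_mul, Complex.norm_real, Real.norm_of_nonneg (ph_nonneg _ _ _)]
        gcongr
        · exact ph_nonneg _ _ _
        · exact hc y
    _ ≤ M := by
        rw [← Finset.mul_sum]
        exact mul_le_of_le_one_right hM (ph_sum_le ε x S)

lemma comb_deriv {n : ℕ} {L : ℝ} (hL : 0 < L) (h : ∀ s t, |eta s - eta t| ≤ L * |s - t|) {ε : ℝ} (hε : 0 < ε)
    (S : Finset (ZLat n)) (c : ZLat n → ℂ) (hcS : ∀ y, y ∉ S → c y = 0) {δ : ℝ} (hδ : 0 ≤ δ)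
    (hc : ∀ y y', ‖y - y'‖ ≤ 2 → ‖c y - c y'‖ ≤ δ) (x : EE n) (i : Fin n) :
    ‖fderiv ℝ (comb ε S c) x (EuclideanSpace.single i 1)‖ ≤ 5 ^ n * δ * L / ε := by
  classical
  apply dir_bound ((comb_contDiff ε S c).differentiable one_ne_zero x) (by positivity) hε
  intro t ht
  set y0 : ZLat n := fun j => ⌊x j / ε⌋ with hy0
  set B : Finset (ZLat n) := cbox (fun j => y0 j - 2) (fun j => y0 j + 2) with hB
  set x' := x + t • EuclideanSpace.single i (1 : ℝ) with hx'
  have hcoord : ∀ j, |x' j / ε - x j / ε| < 1 := by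
    intro j
    by_cases hj : j = i
    · subst hj
      have : x' j / ε - x j / ε = t / ε := by simp [hx']; ring
      rw [this, abs_div, abs_of_pos hε, div_lt_one hε]; exact ht
    · simp [hx', hj]
  have hfl : ∀ j, (y0 j : ℝ) ≤ x j / ε ∧ x j / ε < y0 j + 1 := fun j => ⟨Int.floor_le _, Int.lt_floor_add_one _⟩
  have hBx : ∑ y ∈ B, ph ε y x = 1 := by
    apply ph_sum
    intro j
    have := hfl j
    push_cast
    constructor <;> linarith
  have hBx' : ∑ y ∈ B, ph ε y x' = 1 := by
    apply ph_sum
    intro j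
    have := hfl j
    have h2 := abs_lt.mp (hcoord j)
    push_cast
    constructor <;> linarith
  have hnB : ∀ y, y ∉ B → ph ε y x = 0 ∧ ph ε y x' = 0 := by
    intro y hy
    rw [hB, cbox, Fintype.mem_piFinset] at hy
    push Not at hy
    obtain ⟨j, hj⟩ := hy
    rw [Finset.mem_Icc, not_and_or, not_le, not_le] at hj
    have h1 := hfl j
    have h2 := abs_lt.mp (hcoord j)
    rcases hj with hj | hj
    · have h3 : y j + 3 ≤ y0 j := by omega
      have h4 : (y j : ℝ) + 3 ≤ y0 j := by exact_mod_cast h3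
      exact ⟨ph_zero j (by rw [le_abs]; left; linarith), ph_zero j (by rw [le_abs]; left; linarith)⟩
    · have h3 : y0 j + 3 ≤ y j := by omega
      have h4 : (y0 j : ℝ) + 3 ≤ y j := by exact_mod_cast h3
      exact ⟨ph_zero j (by rw [le_abs]; right; linarith), ph_zero j (by rw [le_abs]; right; linarith)⟩
  have hS : ∀ z : EE n, (∀ y, y ∉ B → ph ε y z = 0) → ∑ y ∈ B, ph ε y z = 1 →
      comb ε S c z = ∑ y ∈ B, (c y - c y0) * (ph ε y z : ℂ) + c y0 := by
    intro z hz hz1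
    have e1 : comb ε S c z = ∑ y ∈ S ∪ B, c y * (ph ε y z : ℂ) := by
      unfold comb
      apply Finset.sum_subset Finset.subset_union_left
      intro y _ hy; rw [hcS y hy, zero_mul]
    have e2 : ∑ y ∈ B, c y * (ph ε y z : ℂ) = ∑ y ∈ S ∪ B, c y * (ph ε y z : ℂ) := by
      apply Finset.sum_subset Finset.subset_union_right
      intro y _ hy; rw [hz y hy]; simp
    rw [e1, ← e2]
    simp_rw [sub_mul]
    rw [Finset.sum_sub_distrib, ← Finset.mul_sum, ← Complex.ofReal_sum, hz1]
    simp
  rw [hS x' (fun y hy => (hnB y hy).2) hBx', hS x (fun y hy => (hnB y hy).1) hBx, add_sub_add_right_eq_sub,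
    ← Finset.sum_sub_distrib]
  calc _ ≤ ∑ y ∈ B, δ * (L / ε * |t|) := by
        refine (norm_sum_le _ _).trans (Finset.sum_le_sum fun y hy => ?_)
        rw [← mul_sub, norm_mul, ← Complex.ofReal_sub, Complex.norm_real]
        gcongr
        · apply hc
          rw [pi_norm_le_iff_of_nonneg (by norm_num)]
          intro j
          rw [hB, cbox, Fintype.mem_piFinset] at hy
          have := Finset.mem_Icc.mp (hy j)
          rw [Pi.sub_apply, Int.norm_eq_abs]
          have h3 : |y j - y0 j| ≤ 2 := by rw [abs_le]; constructor <;> linarith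
          exact_mod_cast h3
        · exact ph_lip hL h hε y x i t
    _ = (B.card : ℝ) * (δ * (L / ε * |t|)) := by rw [Finset.sum_const, nsmul_eq_mul]
    _ = _ := by
        have : B.card = 5 ^ n := by
          rw [hB, cbox, Fintype.card_piFinset]
          simp only [Int.card_Icc]
          have : ∀ j, (y0 j + 2 + 1 - (y0 j - 2)).toNat = 5 := fun j => by omega
          simp [this]
        rw [this]; push_cast; ring

abbrev LL (n : ℕ) := Lp ℂ 2 (volume : Measure (EE n))

def CC {n : ℕ} (f : EE n → ℂ) : Prop := ContDiff ℝ 1 f ∧ HasCompactSupport f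

lemma CC.memLp {n : ℕ} {f : EE n → ℂ} (h : CC f) : MemLp f 2 (volume : Measure (EE n)) :=
  h.1.continuous.memLp_of_hasCompactSupport h.2

lemma CC.add {n : ℕ} {f g : EE n → ℂ} (h : CC f) (h' : CC g) : CC (f + g) := ⟨h.1.add h'.1, h.2.add h'.2⟩

lemma CC.smul {n : ℕ} {f : EE n → ℂ} (c : ℂ) (h : CC f) : CC (c • f) :=
  ⟨contDiff_const.smul h.1, h.2.smul_left (f := fun _ => c)⟩

lemma CC.sub {n : ℕ} {f g : EE n → ℂ} (h : CC f) (h' : CC g) : CC (f - g) := by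
  have := h.add (h'.smul (-1))
  rwa [neg_one_smul, ← sub_eq_add_neg] at this

lemma CC.zero {n : ℕ} : CC (0 : EE n → ℂ) := ⟨contDiff_const, HasCompactSupport.zero⟩

lemma CC.sum {n : ℕ} {ι : Type*} (S : Finset ι) {f : ι → EE n → ℂ} (h : ∀ i, CC (f i)) : CC (∑ i ∈ S, f i) := by
  classical
  induction S using Finset.induction_on with
  | empty => simpa using CC.zero
  | insert a s ha ih => rw [Finset.sum_insert ha]; exact (h a).add ih

lemma CC.integrable {n : ℕ} {f : EE n → ℂ} (h : CC f) : Integrable f (volume : Measure (EE n)) :=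
  h.1.continuous.integrable_of_hasCompactSupport h.2

open Classical in
def toL {n : ℕ} (f : EE n → ℂ) : LL n := if h : MemLp f 2 (volume : Measure (EE n)) then h.toLp f else 0

lemma toL_eq {n : ℕ} {f : EE n → ℂ} (h : MemLp f 2 (volume : Measure (EE n))) : toL f = h.toLp f := by
  unfold toL; rw [dif_pos h]

lemma toL_ae {n : ℕ} {f : EE n → ℂ} (h : CC f) : (toL f : EE n → ℂ) =ᵐ[volume] f := by
  rw [toL_eq h.memLp]; exact h.memLp.coeFn_toLp

lemma toL_add {n : ℕ} {f g : EE n → ℂ} (h : CC f) (h' : CC g) : toL (f + g) = toL f + toL g := by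
  rw [toL_eq h.memLp, toL_eq h'.memLp, toL_eq (h.add h').memLp]; rfl

lemma toL_smul {n : ℕ} {f : EE n → ℂ} (c : ℂ) (h : CC f) : toL (c • f) = c • toL f := by
  rw [toL_eq h.memLp, toL_eq (h.smul c).memLp]; rfl

lemma toL_sub {n : ℕ} {f g : EE n → ℂ} (h : CC f) (h' : CC g) : toL (f - g) = toL f - toL g := by
  rw [toL_eq h.memLp, toL_eq h'.memLp, toL_eq (h.sub h').memLp]; rfl

lemma toL_sum {n : ℕ} {ι : Type*} (S : Finset ι) {f : ι → EE n → ℂ} (h : ∀ i, CC (f i)) :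
    toL (∑ i ∈ S, f i) = ∑ i ∈ S, toL (f i) := by
  classical
  induction S using Finset.induction_on with
  | empty =>
    simp only [Finset.sum_empty]
    rw [toL_eq CC.zero.memLp]; rfl
  | insert a s ha ih => rw [Finset.sum_insert ha, Finset.sum_insert ha, toL_add (h a) (CC.sum s h), ih]

lemma inner_toL {n : ℕ} {g : EE n → ℂ} (hg : CC g) (h : LL n) :
    inner ℂ (toL g) h = ∫ x, h x * (starRingEnd ℂ) (g x) := by
  rw [L2.inner_def]
  apply integral_congr_ae
  filter_upwards [toL_ae hg] with x hx
  rw [hx, RCLike.inner_apply]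

lemma inner_toL' {n : ℕ} {g : EE n → ℂ} (hg : CC g) (h : LL n) :
    inner ℂ h (toL g) = ∫ x, g x * (starRingEnd ℂ) (h x) := by
  rw [L2.inner_def]
  apply integral_congr_ae
  filter_upwards [toL_ae hg] with x hx
  rw [hx, RCLike.inner_apply]

lemma toL_norm_sq {n : ℕ} {g : EE n → ℂ} (hg : CC g) : ‖toL g‖ ^ 2 = ∫ x, ‖g x‖ ^ 2 := by
  have h := inner_toL hg (toL g)
  rw [inner_self_eq_norm_sq_to_K] at h
  have h2 : ∫ x, (toL g) x * (starRingEnd ℂ) (g x) = ((∫ x, ‖g x‖ ^ 2 : ℝ) : ℂ) := by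
    rw [← integral_complex_ofReal]
    apply integral_congr_ae
    filter_upwards [toL_ae hg] with x hx
    rw [hx, Complex.mul_conj, Complex.normSq_eq_norm_sq]
  rw [h2] at h
  apply Complex.ofReal_injective
  rw [← h]; push_cast; rfl

lemma ph_tsupp {n : ℕ} {ε : ℝ} (hε : 0 < ε) (y : ZLat n) : tsupport (fun x : EE n => (ph ε y x : ℂ)) ⊆ cube (lp0 ε y) ε := by
  apply closure_minimal _ (cube_closed _ _)
  intro x hx
  apply ph_supp hε
  intro h0
  apply hx
  simp [h0]

def phc {n : ℕ} (ε : ℝ) (y : ZLat n) : EE n → ℂ := fun x => (ph ε y x : ℂ)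

lemma phc_CC {n : ℕ} {ε : ℝ} (hε : 0 < ε) (y : ZLat n) : CC (phc ε y : EE n → ℂ) :=
  ⟨phc_contDiff ε y, (cube_compact (lp0 ε y) hε.le).of_isClosed_subset (isClosed_tsupport _) (ph_tsupp hε y)⟩

lemma comb_eq {n : ℕ} (ε : ℝ) (S : Finset (ZLat n)) (c : ZLat n → ℂ) : comb ε S c = ∑ y ∈ S, c y • phc ε y := by
  ext x
  simp [comb, phc]

lemma comb_CC {n : ℕ} {ε : ℝ} (hε : 0 < ε) (S : Finset (ZLat n)) (c : ZLat n → ℂ) : CC (comb ε S c) := by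
  rw [comb_eq]; exact CC.sum S fun y => (phc_CC hε y).smul _

def I0 (n : ℕ) : ℝ := ∫ x : EE n, ph 1 0 x

lemma ph_integrable {n : ℕ} {ε : ℝ} (hε : 0 < ε) (y : ZLat n) : Integrable (ph ε y : EE n → ℝ) := by
  have := (phc_CC hε y).integrable.re
  simpa [phc] using this

lemma ph_scale {n : ℕ} {ε : ℝ} (hε : 0 < ε) (y : ZLat n) (x : EE n) : ph ε y x = ph 1 0 (ε⁻¹ • x - lp0 1 y) := by
  unfold ph
  refine Finset.prod_congr rfl fun i _ => ?_
  congr 1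
  simp [lp0_apply]
  ring

lemma ph_integral {n : ℕ} {ε : ℝ} (hε : 0 < ε) (y : ZLat n) : ∫ x : EE n, ph ε y x = ε ^ n * I0 n := by
  simp_rw [ph_scale hε y]
  rw [Measure.integral_comp_inv_smul volume (fun x : EE n => ph 1 0 (x - lp0 1 y)) ε]
  rw [integral_sub_right_eq_self (fun x : EE n => ph 1 0 x)]
  simp [I0, abs_of_pos hε]

lemma I0_pos (n : ℕ) : 0 < I0 n := by
  unfold I0
  have hc : Continuous (ph 1 0 : EE n → ℝ) := (ph_contDiff 1 0).continuous
  apply hc.integral_pos_of_hasCompactSupport_nonneg_nonzero (x := 0)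
  · apply HasCompactSupport.of_support_subset_isCompact (cube_compact (lp0 1 (0 : ZLat n)) zero_le_one)
    intro x hx
    exact ph_supp one_pos hx
  · exact fun x => ph_nonneg _ _ _
  · unfold ph
    rw [Finset.prod_ne_zero_iff]
    intro i _
    simp [eta, Real.smoothTransition.one_of_one_le, Real.smoothTransition.zero_of_nonpos]

lemma comb_l2 {n : ℕ} {ε : ℝ} (hε : 0 < ε) (S : Finset (ZLat n)) (c : ZLat n → ℂ) :
    ‖toL (comb ε S c)‖ ^ 2 ≤ ε ^ n * I0 n * ∑ y ∈ S, ‖c y‖ ^ 2 := by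
  rw [toL_norm_sq (comb_CC hε S c)]
  calc ∫ x, ‖comb ε S c x‖ ^ 2 ≤ ∫ x, ∑ y ∈ S, ‖c y‖ ^ 2 * ph ε y x := by
        apply integral_mono_of_nonneg
        · exact Filter.Eventually.of_forall fun x => by positivity
        · exact integrable_finsetSum S fun y _ => (ph_integrable hε y).const_mul _
        · refine Filter.Eventually.of_forall fun x => ?_
          show ‖∑ y ∈ S, c y * (ph ε y x : ℂ)‖ ^ 2 ≤ ∑ y ∈ S, ‖c y‖ ^ 2 * ph ε y x
          calc ‖∑ y ∈ S, c y * (ph ε y x : ℂ)‖ ^ 2 ≤ (∑ y ∈ S, (‖c y‖ * √(ph ε y x)) * √(ph ε y x)) ^ 2 := by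
                gcongr
                refine (norm_sum_le _ _).trans (Finset.sum_le_sum fun y _ => ?_)
                rw [norm_mul, Complex.norm_real, Real.norm_of_nonneg (ph_nonneg _ _ _), mul_assoc,
                  Real.mul_self_sqrt (ph_nonneg _ _ _)]
            _ ≤ (∑ y ∈ S, (‖c y‖ * √(ph ε y x)) ^ 2) * ∑ y ∈ S, √(ph ε y x) ^ 2 :=
                Finset.sum_mul_sq_le_sq_mul_sq _ _ _
            _ = (∑ y ∈ S, ‖c y‖ ^ 2 * ph ε y x) * ∑ y ∈ S, ph ε y x := by
                simp_rw [mul_pow, Real.sq_sqrt (ph_nonneg _ _ _)]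
            _ ≤ (∑ y ∈ S, ‖c y‖ ^ 2 * ph ε y x) * 1 := by
                apply mul_le_mul_of_nonneg_left (ph_sum_le _ _ _)
                exact Finset.sum_nonneg fun y _ => mul_nonneg (by positivity) (ph_nonneg _ _ _)
            _ = _ := mul_one _
    _ = _ := by
      rw [integral_finsetSum S fun y _ => (ph_integrable hε y).const_mul _]
      simp_rw [integral_const_mul, ph_integral hε]
      rw [← Finset.sum_mul, mul_comm]

lemma bessel {n : ℕ} {ε : ℝ} (hε : 0 < ε) (S : Finset (ZLat n)) (h : LL n) :
    ∑ y ∈ S, ‖inner ℂ (toL (phc ε y)) h‖ ^ 2 ≤ ε ^ n * I0 n * ‖h‖ ^ 2 := by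
  set c : ZLat n → ℂ := fun y => inner ℂ (toL (phc ε y)) h with hc
  set Q := ∑ y ∈ S, ‖c y‖ ^ 2 with hQ
  have hQ0 : 0 ≤ Q := Finset.sum_nonneg fun _ _ => by positivity
  have h1 : inner ℂ (toL (comb ε S c)) h = (Q : ℂ) := by
    rw [comb_eq, toL_sum S fun y => (phc_CC hε y).smul _, sum_inner, hQ]
    push_cast
    refine Finset.sum_congr rfl fun y _ => ?_
    rw [toL_smul _ (phc_CC hε y), inner_smul_left]
    show (starRingEnd ℂ) (c y) * c y = _
    rw [mul_comm, Complex.mul_conj, Complex.normSq_eq_norm_sq]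
    push_cast; rfl
  have h2 : Q ≤ ‖toL (comb ε S c)‖ * ‖h‖ := by
    have := norm_inner_le_norm (𝕜 := ℂ) (toL (comb ε S c)) h
    rwa [h1, Complex.norm_real, Real.norm_of_nonneg hQ0] at this
  have h3 := comb_l2 hε S c
  have h4 : Q ^ 2 ≤ (ε ^ n * I0 n * Q) * ‖h‖ ^ 2 := by
    calc Q ^ 2 ≤ (‖toL (comb ε S c)‖ * ‖h‖) ^ 2 := by gcongr
      _ = ‖toL (comb ε S c)‖ ^ 2 * ‖h‖ ^ 2 := by ring
      _ ≤ _ := by gcongr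
  show Q ≤ _
  rcases hQ0.eq_or_lt with h0 | h0
  · rw [← h0]; have := I0_pos n; positivity
  · nlinarith

structure CZO {n : ℕ} (T S : (EE n → ℂ) →ₗ[ℂ] LL n) (A : ℝ) (K : EE n → EE n → ℂ) : Prop where
  pos : 0 < A
  adj : ∀ f g : EE n → ℂ, CC f → CC g → inner ℂ (toL g) (T f) = inner ℂ (S g) (toL f)
  bump : ∀ r : ℝ, 0 < r → ∀ ω, IsBump n r ω →
        ‖T ω‖ ≤ A * r ^ ((n : ℝ) / 2) ∧ ‖S ω‖ ≤ A * r ^ ((n : ℝ) / 2)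
  kc : ContDiffOn ℝ 1 (fun p : EE n × EE n => K p.1 p.2) {p | p.1 ≠ p.2}
  rep : ∀ F, CC F → ∀ᵐ x ∂(volume : Measure (EE n)), x ∉ tsupport F →
            (T F : EE n → ℂ) x = ∫ y, K x y * F y
  size : ∀ x y, x ≠ y → ‖K x y‖ ≤ A / ‖x - y‖ ^ n
  der : ∀ i : Fin n, ∀ x y, x ≠ y →
          ‖fderiv ℝ (fun x' => K x' y) x (EuclideanSpace.single i 1)‖ ≤ A / ‖x - y‖ ^ (n + 1) ∧
          ‖fderiv ℝ (fun y' => K x y') y (EuclideanSpace.single i 1)‖ ≤ A / ‖x - y‖ ^ (n + 1)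

lemma bump_gen {n : ℕ} {T S : (EE n → ℂ) →ₗ[ℂ] LL n} {A : ℝ} {K : EE n → EE n → ℂ} (h : CZO T S A K)
    {f : EE n → ℂ} (hf : ContDiff ℝ 1 f) {c : EE n} {r : ℝ} (hr : 0 < r) (hs : tsupport f ⊆ closedBall c r)
    {M : ℝ} (hM : 0 < M) (hb : ∀ x, ‖f x‖ ≤ M)
    (hd : ∀ (i : Fin n) x, ‖fderiv ℝ f x (EuclideanSpace.single i 1)‖ ≤ M / r) :
    ‖T f‖ ^ 2 ≤ M ^ 2 * A ^ 2 * r ^ n ∧ ‖S f‖ ^ 2 ≤ M ^ 2 * A ^ 2 * r ^ n := by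
  have hMc : (M : ℂ) ≠ 0 := by exact_mod_cast hM.ne'
  have hB : IsBump n r ((M : ℂ)⁻¹ • f) := by
    refine ⟨contDiff_const.smul hf, ⟨c, ?_⟩, ?_, ?_⟩
    · refine (closure_mono ?_).trans hs
      intro x hx
      simp only [Function.mem_support, Pi.smul_apply, smul_eq_mul] at hx ⊢
      exact right_ne_zero_of_mul hx
    · intro x
      simp only [Pi.smul_apply, norm_smul, norm_inv, Complex.norm_real, Real.norm_of_nonneg hM.le]
      rw [inv_mul_le_iff₀ hM, mul_one]; exact hb x
    · intro i x
      rw [fderiv_const_smul (hf.differentiable one_ne_zero x)]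
      simp only [smul_apply, norm_smul, norm_inv, Complex.norm_real, Real.norm_of_nonneg hM.le]
      rw [inv_mul_le_iff₀ hM, mul_one_div]; exact hd i x
  have hf' : f = (M : ℂ) • ((M : ℂ)⁻¹ • f) := by rw [smul_smul, mul_inv_cancel₀ hMc, one_smul]
  obtain ⟨h1, h2⟩ := h.bump r hr _ hB
  have hrn : (r ^ ((n : ℝ) / 2)) ^ 2 = r ^ n := by
    rw [← Real.rpow_natCast, ← Real.rpow_mul hr.le]
    simp
  have key : ∀ v : LL n, ‖v‖ ≤ A * r ^ ((n : ℝ) / 2) → ‖(M : ℂ) • v‖ ^ 2 ≤ M ^ 2 * A ^ 2 * r ^ n := by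
    intro v hv
    rw [norm_smul, Complex.norm_real, Real.norm_of_nonneg hM.le, mul_pow, mul_assoc, ← hrn, ← mul_pow A]
    gcongr
  clear hB
  generalize (M : ℂ)⁻¹ • f = w at hf' h1 h2
  rw [hf', map_smul, map_smul]
  exact ⟨key _ h1, key _ h2⟩

def eL : ℝ := eta_lip.choose
lemma eL_pos : 0 < eL := eta_lip.choose_spec.1
lemma eL_lip : ∀ s t, |eta s - eta t| ≤ eL * |s - t| := eta_lip.choose_spec.2

lemma comb_tsupp {n : ℕ} {ε : ℝ} (hε : 0 < ε) (Y : Finset (ZLat n)) (c : ZLat n → ℂ) (c0 : ZLat n) {R : ℝ}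
    (hc : ∀ y, c y ≠ 0 → ‖y - c0‖ ≤ R) : tsupport (comb ε Y c) ⊆ cube (lp0 ε c0) (ε * (R + 1)) := by
  apply closure_minimal _ (cube_closed _ _)
  intro x hx
  obtain ⟨y, hy, hy2⟩ := Finset.exists_ne_zero_of_sum_ne_zero hx
  have h1 := hc y (left_ne_zero_of_mul hy2)
  have h2 : ph ε y x ≠ 0 := fun h0 => right_ne_zero_of_mul hy2 (by simp [h0])
  intro i
  have h3 := ph_supp hε h2 i
  have h4 : |((y i : ℝ) - c0 i)| ≤ R := by
    have := abs_coord_le (y - c0) i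
    simp only [Pi.sub_apply] at this
    push_cast at this
    linarith
  rw [lp0_apply] at h3 ⊢
  have : x i - ε * c0 i = (x i - ε * y i) + ε * (y i - c0 i) := by ring
  rw [this]
  refine (abs_add_le _ _).trans ?_
  rw [abs_mul, abs_of_pos hε]
  nlinarith

def BM (n : ℕ) : ℝ := (1 + 6 * 5 ^ n * eL * √n) ^ 2 * (3 * √n) ^ n

lemma comb_bound {n : ℕ} (hn : 1 ≤ n) {T S : (EE n → ℂ) →ₗ[ℂ] LL n} {A : ℝ} {K : EE n → EE n → ℂ} (h : CZO T S A K)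
    {ε : ℝ} (hε : 0 < ε) {ρ : ℝ} (hρ : 1 ≤ ρ) (Y : Finset (ZLat n)) (c : ZLat n → ℂ) (c0 : ZLat n)
    (hY : ∀ y, y ∉ Y → c y = 0) (h1 : ∀ y, ‖c y‖ ≤ 1) (hs : ∀ y, c y ≠ 0 → ‖y - c0‖ ≤ 2 * ρ)
    (hδ : ∀ y y', ‖y - y'‖ ≤ 2 → ‖c y - c y'‖ ≤ 2 / ρ) :
    ‖T (comb ε Y c)‖ ^ 2 ≤ BM n * A ^ 2 * (ε * ρ) ^ n ∧ ‖S (comb ε Y c)‖ ^ 2 ≤ BM n * A ^ 2 * (ε * ρ) ^ n := by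
  have hρ0 : 0 < ρ := by linarith
  have hn1 : 1 ≤ √(n : ℝ) := by rw [Real.one_le_sqrt]; exact_mod_cast hn
  have hL := eL_pos
  set M := 1 + 6 * 5 ^ n * eL * √n with hM
  have hMpos : 0 < M := by positivity
  have e : BM n * A ^ 2 * (ε * ρ) ^ n = M ^ 2 * A ^ 2 * (√n * (ε * (3 * ρ))) ^ n := by
    unfold BM
    rw [← hM, mul_pow, mul_pow, mul_pow, mul_pow, mul_pow]; ring
  rw [e]
  apply bump_gen h (comb_contDiff ε Y c) (c := lp0 ε c0) (by positivity) _ hMpos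
  · intro x
    have h3 : (0 : ℝ) ≤ 6 * 5 ^ n * eL * √n := by positivity
    have := comb_norm ε Y c zero_le_one h1 x
    linarith
  · intro i x
    refine (comb_deriv hL eL_lip hε Y c hY (by positivity) hδ x i).trans ?_
    rw [div_le_div_iff₀ hε (by positivity)]
    have : 5 ^ n * (2 / ρ) * eL * (√n * (ε * (3 * ρ))) = (6 * 5 ^ n * eL * √n) * ε := by field_simp; ring
    rw [this]; gcongr; linarith
  · refine (comb_tsupp hε Y c c0 hs).trans (Set.Subset.trans ?_ (cube_sub_ball _ (by positivity)))
    intro x hx i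
    refine (hx i).trans ?_
    gcongr; linarith

lemma phc_comb {n : ℕ} (ε : ℝ) (y : ZLat n) : comb ε {y} (fun z => if z = y then 1 else 0) = phc ε y := by
  ext x; simp [comb, phc]

lemma phc_bound {n : ℕ} (hn : 1 ≤ n) {T S : (EE n → ℂ) →ₗ[ℂ] LL n} {A : ℝ} {K : EE n → EE n → ℂ} (h : CZO T S A K)
    {ε : ℝ} (hε : 0 < ε) (y : ZLat n) : ‖T (phc ε y)‖ ^ 2 ≤ BM n * A ^ 2 * ε ^ n := by
  have := (comb_bound hn h hε le_rfl {y} (fun z => if z = y then 1 else 0) y ?_ ?_ ?_ ?_).1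
  · rwa [phc_comb, mul_one] at this
  · intro z hz; simp at hz; simp [hz]
  · intro z; split_ifs <;> simp
  · intro z hz
    have : z = y := by by_contra h0; simp [h0] at hz
    simp [this]
  · intro z z' _
    split_ifs <;> norm_num

lemma phc_norm_sq {n : ℕ} {ε : ℝ} (hε : 0 < ε) (y : ZLat n) : ‖toL (phc ε y)‖ ^ 2 ≤ ε ^ n * I0 n := by
  have := comb_l2 hε {y} (fun z => if z = y then 1 else 0)
  rw [phc_comb] at this
  simpa using this

lemma clm_bound {n : ℕ} (L : EE n →L[ℝ] ℂ) {C : ℝ} (hC : 0 ≤ C) (h : ∀ i, ‖L (EuclideanSpace.single i 1)‖ ≤ C) :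
    ‖L‖ ≤ n * C := by
  apply ContinuousLinearMap.opNorm_le_bound _ (by positivity)
  intro z
  have hz : z = ∑ i, z i • EuclideanSpace.single i (1 : ℝ) := by
    ext j
    simp [Finset.sum_apply, Pi.single_apply]
  conv_lhs => rw [hz]
  rw [map_sum]
  refine (norm_sum_le _ _).trans ?_
  calc ∑ i, ‖L (z i • EuclideanSpace.single i (1 : ℝ))‖ ≤ ∑ i : Fin n, C * ‖z‖ := by
        refine Finset.sum_le_sum fun i _ => ?_
        rw [map_smul, norm_smul, mul_comm]
        exact mul_le_mul (h i) (by simpa using coord_le_norm z i) (norm_nonneg _) hC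
    _ = _ := by simp; ring

section
variable {n : ℕ} {T S : (EE n → ℂ) →ₗ[ℂ] LL n} {A : ℝ} {K : EE n → EE n → ℂ}

lemma k_at (h : CZO T S A K) {x y : EE n} (hxy : x ≠ y) : ContDiffAt ℝ 1 (fun p : EE n × EE n => K p.1 p.2) (x, y) := by
  apply h.kc.contDiffAt
  apply IsOpen.mem_nhds _ hxy
  exact isOpen_ne_fun continuous_fst continuous_snd

lemma k_diffx (h : CZO T S A K) {x y : EE n} (hxy : x ≠ y) : DifferentiableAt ℝ (fun x' => K x' y) x :=
  ((k_at h hxy).differentiableAt one_ne_zero).comp (f := fun x' => (x', y)) x (by fun_prop)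

lemma k_diffy (h : CZO T S A K) {x y : EE n} (hxy : x ≠ y) : DifferentiableAt ℝ (fun y' => K x y') y :=
  ((k_at h hxy).differentiableAt one_ne_zero).comp (f := fun y' => (x, y')) y (by fun_prop)

lemma k_mvx (h : CZO T S A K) {Q : Set (EE n)} (hQ : Convex ℝ Q) {v : EE n} {s : ℝ} (hs : 0 < s)
    (hv : ∀ w ∈ Q, s ≤ ‖w - v‖) {u u0 : EE n} (hu : u ∈ Q) (hu0 : u0 ∈ Q) :
    ‖K u v - K u0 v‖ ≤ n * (A / s ^ (n + 1)) * ‖u - u0‖ := by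
  have hA := h.pos
  have hne : ∀ w ∈ Q, w ≠ v := by
    rintro w hw rfl
    have := hv w hw
    simp at this; linarith
  refine hQ.norm_image_sub_le_of_norm_fderiv_le (f := fun x' => K x' v) (𝕜 := ℝ) (fun w hw => k_diffx h (hne w hw)) (fun w hw => ?_) hu0 hu
  apply clm_bound _ (by positivity)
  intro i
  refine (h.der i w v (hne w hw)).1.trans ?_
  have := hv w hw
  gcongr

lemma k_mvy (h : CZO T S A K) {Q : Set (EE n)} (hQ : Convex ℝ Q) {v : EE n} {s : ℝ} (hs : 0 < s)
    (hv : ∀ w ∈ Q, s ≤ ‖w - v‖) {u u0 : EE n} (hu : u ∈ Q) (hu0 : u0 ∈ Q) :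
    ‖K v u - K v u0‖ ≤ n * (A / s ^ (n + 1)) * ‖u - u0‖ := by
  have hA := h.pos
  have hne : ∀ w ∈ Q, v ≠ w := by
    rintro w hw rfl
    have := hv v hw
    simp at this; linarith
  refine hQ.norm_image_sub_le_of_norm_fderiv_le (f := fun x' => K v x') (𝕜 := ℝ) (fun w hw => k_diffy h (hne w hw)) (fun w hw => ?_) hu0 hu
  apply clm_bound _ (by positivity)
  intro i
  refine (h.der i v w (hne w hw)).2.trans ?_
  have := hv w hw
  rw [norm_sub_rev] at this
  gcongr

lemma k_integrable (h : CZO T S A K) {F : EE n → ℂ} (hF : CC F) {u : EE n} (hu : u ∉ tsupport F) :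
    Integrable (fun v => K u v * F v) (volume : Measure (EE n)) := by
  apply Continuous.integrable_of_hasCompactSupport
  · rw [continuous_iff_continuousAt]
    intro v
    by_cases hv : v = u
    · subst hv
      have : (fun w => K v w * F w) =ᶠ[nhds v] fun _ => 0 := by
        filter_upwards [(isClosed_tsupport F).isOpen_compl.mem_nhds hu] with w hw
        rw [image_eq_zero_of_notMem_tsupport hw, mul_zero]
      exact this.continuousAt
    · exact (k_diffy h (Ne.symm hv)).continuousAt.mul hF.1.continuous.continuousAt
  · exact hF.2.mul_left

lemma g_bound (h : CZO T S A K) {F : EE n → ℂ} (hF : CC F) {u : EE n} (hu : u ∉ tsupport F) {κ : ℂ}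
    (hκ : κ * ∫ v, F v = 0) {D : ℝ} (hD : ∀ v, F v ≠ 0 → ‖K u v - κ‖ ≤ D) :
    ‖∫ v, K u v * F v‖ ≤ D * ∫ v, ‖F v‖ := by
  have e : ∫ v, K u v * F v = ∫ v, (K u v - κ) * F v := by
    simp_rw [sub_mul]
    rw [integral_sub (k_integrable h hF hu) (hF.integrable.const_mul _), integral_const_mul, hκ, sub_zero]
  rw [e, ← integral_const_mul]
  apply norm_integral_le_of_norm_le (hF.integrable.norm.const_mul _)
  refine Filter.Eventually.of_forall fun v => ?_
  rw [norm_mul]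
  by_cases hv : F v = 0
  · simp [hv]
  · gcongr; exact hD v hv

lemma g_diff (h : CZO T S A K) {F : EE n → ℂ} (hF : CC F) {u u0 : EE n} (hu : u ∉ tsupport F) (hu0 : u0 ∉ tsupport F)
    {D : ℝ} (hD : ∀ v, F v ≠ 0 → ‖K u v - K u0 v‖ ≤ D) :
    ‖(∫ v, K u v * F v) - ∫ v, K u0 v * F v‖ ≤ D * ∫ v, ‖F v‖ := by
  rw [← integral_sub (k_integrable h hF hu) (k_integrable h hF hu0), ← integral_const_mul]
  apply norm_integral_le_of_norm_le (hF.integrable.norm.const_mul _)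
  refine Filter.Eventually.of_forall fun v => ?_
  rw [← sub_mul, norm_mul]
  by_cases hv : F v = 0
  · simp [hv]
  · gcongr; exact hD v hv

lemma pair_bound (h : CZO T S A K) {F G : EE n → ℂ} (hF : CC F) (hG : CC G) {κ : ℂ}
    (hκ : κ * ∫ u, (starRingEnd ℂ) (G u) = 0) {B : ℝ}
    (hB : ∀ u, G u ≠ 0 → u ∉ tsupport F ∧ ‖(∫ v, K u v * F v) - κ‖ ≤ B) :
    ‖(inner ℂ (toL G) (T F) : ℂ)‖ ≤ B * ∫ u, ‖G u‖ := by
  have hi : Integrable (fun x => (T F) x * (starRingEnd ℂ) (G x)) (volume : Measure (EE n)) := by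
    refine (L2.integrable_inner (𝕜 := ℂ) (toL G) (T F)).congr ?_
    filter_upwards [toL_ae hG] with x hx
    rw [hx, RCLike.inner_apply]
  have hGi : Integrable (fun x => (starRingEnd ℂ) (G x)) (volume : Measure (EE n)) := by
    have := (Complex.conjCLE.toContinuousLinearMap.integrable_comp hG.integrable)
    exact this
  have e : inner ℂ (toL G) (T F) = ∫ x, ((T F) x - κ) * (starRingEnd ℂ) (G x) := by
    rw [inner_toL hG]
    simp_rw [sub_mul]
    rw [integral_sub hi (hGi.const_mul _), integral_const_mul, hκ, sub_zero]
  rw [e, ← integral_const_mul]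
  apply norm_integral_le_of_norm_le (hG.integrable.norm.const_mul _)
  filter_upwards [h.rep F hF] with x hx
  rw [norm_mul, RCLike.norm_conj]
  by_cases hv : G x = 0
  · simp [hv]
  · obtain ⟨h1, h2⟩ := hB x hv
    rw [hx h1]
    gcongr
end

lemma phc_int {n : ℕ} {ε : ℝ} (hε : 0 < ε) (y : ZLat n) : ∫ x, phc ε y x = ((ε ^ n * I0 n : ℝ) : ℂ) := by
  rw [← ph_integral hε y, ← integral_complex_ofReal]; rfl

lemma phc_int_norm {n : ℕ} {ε : ℝ} (hε : 0 < ε) (y : ZLat n) : ∫ x, ‖phc ε y x‖ = ε ^ n * I0 n := by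
  rw [← ph_integral hε y]
  congr 1; ext x
  simp [phc, abs_of_nonneg (ph_nonneg ε y x)]

lemma phcd_int {n : ℕ} {ε : ℝ} (hε : 0 < ε) (y y' : ZLat n) : ∫ x, (phc ε y - phc ε y') x = 0 := by
  simp only [Pi.sub_apply]
  rw [integral_sub (phc_CC hε y).integrable (phc_CC hε y').integrable, phc_int hε, phc_int hε, sub_self]

lemma phcd_int_norm {n : ℕ} {ε : ℝ} (hε : 0 < ε) (y y' : ZLat n) :
    ∫ x, ‖(phc ε y - phc ε y') x‖ ≤ 2 * (ε ^ n * I0 n) := by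
  calc ∫ x, ‖(phc ε y - phc ε y') x‖ ≤ ∫ x, (‖phc ε y x‖ + ‖phc ε y' x‖) := by
        apply integral_mono ((phc_CC hε y).sub (phc_CC hε y')).integrable.norm
          ((phc_CC hε y).integrable.norm.add (phc_CC hε y').integrable.norm)
        intro x
        exact norm_sub_le _ _
    _ = _ := by
        rw [integral_add (phc_CC hε y).integrable.norm (phc_CC hε y').integrable.norm, phc_int_norm hε, phc_int_norm hε]
        ring

lemma cube_convex {n : ℕ} (c : EE n) (s : ℝ) : Convex ℝ (cube c s) := by
  intro x hx y hy a b ha hb hab i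
  have h1 := hx i
  have h2 := hy i
  have : (a • x + b • y) i - c i = a * (x i - c i) + b * (y i - c i) := by
    have : c i = (a + b) * c i := by rw [hab, one_mul]
    simp only [PiLp.add_apply, PiLp.smul_apply, smul_eq_mul]
    linear_combination (-1 : ℝ) * this
  rw [this]
  refine (abs_add_le _ _).trans ?_
  rw [abs_mul, abs_mul, abs_of_nonneg ha, abs_of_nonneg hb]
  have : s = a * s + b * s := by rw [← add_mul, hab, one_mul]
  rw [this]
  gcongr

/-- separation of cubes -/
lemma cube_sep {n : ℕ} (hn : 1 ≤ n) {ε : ℝ} (hε : 0 < ε) {x y : ZLat n} {p q : ℝ} {w v : EE n} (hw : w ∈ cube (lp0 ε x) (ε * p))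
    (hv : v ∈ cube (lp0 ε y) (ε * q)) : ε * (‖x - y‖ - p - q) ≤ ‖w - v‖ := by
  haveI : Nonempty (Fin n) := ⟨⟨0, hn⟩⟩
  obtain ⟨i, hi⟩ : ∃ i, ‖(x - y) i‖ = ‖x - y‖ := by
    obtain ⟨i, hi⟩ := Finite.exists_max fun i => ‖(x - y) i‖
    exact ⟨i, le_antisymm (norm_le_pi_norm _ i) ((pi_norm_le_iff_of_nonempty _).2 hi)⟩
  rw [Int.norm_eq_abs, Pi.sub_apply] at hi
  push_cast at hi
  have h1 := hw i
  have h2 := hv i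
  rw [lp0_apply] at h1 h2
  have h3 := coord_le_norm (w - v) i
  rw [PiLp.sub_apply] at h3
  have h4 : ε * |(x i : ℝ) - y i| = |(w i - v i) - (w i - ε * x i) + (v i - ε * y i)| := by
    rw [← abs_of_pos hε, ← abs_mul, abs_of_pos hε]; congr 1; ring
  have h5 := abs_add_le ((w i - v i) - (w i - ε * x i)) (v i - ε * y i)
  have h6 := abs_sub (w i - v i) (w i - ε * x i)
  rw [hi] at h4
  nlinarith

def am {n : ℕ} (T : (EE n → ℂ) →ₗ[ℂ] LL n) (A ε : ℝ) (x y : ZLat n) : ℂ :=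
  inner ℂ (toL (phc ε x)) (T (phc ε y)) / ((A * ε ^ n : ℝ) : ℂ)

def CD (n : ℕ) : ℝ := 5 ^ n * √(I0 n * BM n) + 5 ^ n * I0 n ^ 2 + n * √n * 2 ^ (n + 3) * I0 n ^ 2 + I0 n * BM n

lemma BM_nonneg (n : ℕ) : 0 ≤ BM n := by unfold BM; positivity

lemma CD_pos (n : ℕ) : 0 < CD n := by
  unfold CD
  have := BM_nonneg n
  have := I0_pos n
  positivity

lemma CD_ge (n : ℕ) : 5 ^ n * √(I0 n * BM n) ≤ CD n ∧ 5 ^ n * I0 n ^ 2 ≤ CD n ∧ n * √n * 2 ^ (n + 3) * I0 n ^ 2 ≤ CD n ∧ I0 n * BM n ≤ CD n := by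
  unfold CD
  have h1 := BM_nonneg n
  have h2 := I0_pos n
  have a1 : 0 ≤ 5 ^ n * √(I0 n * BM n) := by positivity
  have a2 : 0 ≤ 5 ^ n * I0 n ^ 2 := by positivity
  have a3 : 0 ≤ n * √n * 2 ^ (n + 3) * I0 n ^ 2 := by positivity
  have a4 : 0 ≤ I0 n * BM n := by positivity
  refine ⟨?_, ?_, ?_, ?_⟩ <;> linarith

lemma phc_mem {n : ℕ} {ε : ℝ} (hε : 0 < ε) {y : ZLat n} {x : EE n} (h : phc ε y x ≠ 0) : x ∈ cube (lp0 ε y) (ε * 1) := by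
  rw [mul_one]
  apply ph_supp hε
  intro h0; apply h; simp [phc, h0]

lemma phc_tmem {n : ℕ} {ε : ℝ} (hε : 0 < ε) {y : ZLat n} {x : EE n} (h : x ∈ tsupport (phc ε y)) : x ∈ cube (lp0 ε y) (ε * 1) := by
  rw [mul_one]
  exact ph_tsupp hε y h

lemma phcd_tmem {n : ℕ} {ε : ℝ} (hε : 0 < ε) {y y' : ZLat n} {x : EE n} (h : x ∈ tsupport (phc ε y - phc ε y')) :
    x ∈ cube (lp0 ε y) (ε * (1 + ‖y - y'‖)) := by
  have hs : tsupport (phc ε y - phc ε y') ⊆ cube (lp0 ε y) (ε * (1 + ‖y - y'‖)) := by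
    apply closure_minimal _ (cube_closed _ _)
    intro z hz
    have h0 : phc ε y z ≠ 0 ∨ phc ε y' z ≠ 0 := by
      by_contra hc
      push Not at hc
      apply hz
      simp [hc.1, hc.2]
    rcases h0 with h0 | h0
    · intro i
      refine (phc_mem hε h0 i).trans ?_
      gcongr
      linarith [norm_nonneg (y - y')]
    · intro i
      have h1 := phc_mem hε h0 i
      have h2 := abs_coord_le (y - y') i
      rw [lp0_apply] at h1 ⊢
      have : z i - ε * y i = (z i - ε * y' i) - ε * ((y - y') i : ℤ) := by
        rw [Pi.sub_apply]; push_cast; ring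
      rw [this]
      refine (abs_sub _ _).trans ?_
      rw [abs_mul, abs_of_pos hε]
      nlinarith
  exact hs h

section
variable {n : ℕ} {T S : (EE n → ℂ) →ₗ[ℂ] LL n} {A : ℝ} {K : EE n → EE n → ℂ}

lemma am_size (hn : 1 ≤ n) (h : CZO T S A K) {ε : ℝ} (hε : 0 < ε) (x y : ZLat n) :
    ‖am T A ε x y‖ ≤ CD n * ((1 + ‖x - y‖) ^ n)⁻¹ := by
  have hA := h.pos
  have hI := I0_pos n
  have hB := BM_nonneg n
  have hd := norm_nonneg (x - y)
  unfold am
  rw [norm_div, Complex.norm_real, Real.norm_of_nonneg (by positivity), div_le_iff₀ (by positivity)]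
  rcases lt_or_ge ‖x - y‖ 4 with hlt | hge
  · have h1 : ‖(inner ℂ (toL (phc ε x)) (T (phc ε y)) : ℂ)‖ ≤ √(I0 n * BM n) * (A * ε ^ n) := by
      refine (norm_inner_le_norm _ _).trans ?_
      refine (pow_le_pow_iff_left₀ (by positivity) (by positivity) two_ne_zero).1 ?_
      rw [mul_pow, mul_pow, Real.sq_sqrt (by positivity)]
      calc _ ≤ (ε ^ n * I0 n) * (BM n * A ^ 2 * ε ^ n) :=
            mul_le_mul (phc_norm_sq hε x) (phc_bound hn h hε y) (by positivity) (by positivity)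
        _ = _ := by ring
    refine h1.trans ?_
    gcongr
    calc √(I0 n * BM n) = (5 ^ n * √(I0 n * BM n)) * (5 ^ n)⁻¹ := by field_simp
      _ ≤ CD n * ((1 + ‖x - y‖) ^ n)⁻¹ := by
        have := (CD_ge n).1
        have := CD_pos n
        gcongr
        linarith
  · have key := pair_bound h (F := phc ε y) (G := phc ε x) (phc_CC hε y) (phc_CC hε x) (κ := 0) (by simp)
      (B := A / (ε * (‖x - y‖ - 1 - 1)) ^ n * (ε ^ n * I0 n)) ?_
    · refine key.trans ?_
      rw [phc_int_norm hε]
      have e : A / (ε * (‖x - y‖ - 1 - 1)) ^ n * (ε ^ n * I0 n) * (ε ^ n * I0 n) =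
        (I0 n ^ 2 * ((‖x - y‖ - 1 - 1) ^ n)⁻¹) * (A * ε ^ n) := by
        have : ‖x - y‖ - 1 - 1 ≠ 0 := by linarith
        rw [mul_pow]; field_simp
      rw [e]
      refine mul_le_mul_of_nonneg_right ?_ (by positivity)
      calc I0 n ^ 2 * ((‖x - y‖ - 1 - 1) ^ n)⁻¹ ≤ I0 n ^ 2 * (((1 + ‖x - y‖) / 5) ^ n)⁻¹ := by
            gcongr; linarith
        _ = (5 ^ n * I0 n ^ 2) * ((1 + ‖x - y‖) ^ n)⁻¹ := by
            rw [div_pow]; field_simp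
        _ ≤ _ := by
          gcongr; exact (CD_ge n).2.1
    · intro u hu
      have hu1 := phc_mem hε hu
      have hpos : 0 < ε * (‖x - y‖ - 1 - 1) := mul_pos hε (by linarith)
      have hu2 : u ∉ tsupport (phc ε y) := by
        intro h2
        have := cube_sep hn hε hu1 (phc_tmem hε h2)
        rw [sub_self, norm_zero] at this
        linarith
      refine ⟨hu2, ?_⟩
      rw [sub_zero, ← phc_int_norm hε y]
      apply g_bound h (phc_CC hε y) hu2 (κ := 0) (by simp)
      intro v hv
      have := cube_sep hn hε hu1 (phc_mem hε hv)
      rw [sub_zero]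
      have hne : u ≠ v := by
        rintro rfl; rw [sub_self, norm_zero] at this; linarith
      refine (h.size u v hne).trans ?_
      gcongr

/-- arithmetic for the regularity estimates -/
lemma reg_arith {n : ℕ} {A ε m d : ℝ} (hA : 0 < A) (hε : 0 < ε) (hm : 1 ≤ m) (hd : 0 < d) :
    n * (A / (ε * (d / 2)) ^ (n + 1)) * (√n * (ε * (1 + m))) * (2 * (ε ^ n * I0 n)) * (ε ^ n * I0 n) ≤
      CD n * m / d ^ (n + 1) * (A * ε ^ n) := by
  have hI := I0_pos n
  calc n * (A / (ε * (d / 2)) ^ (n + 1)) * (√n * (ε * (1 + m))) * (2 * (ε ^ n * I0 n)) * (ε ^ n * I0 n) ≤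
        n * (A / (ε * (d / 2)) ^ (n + 1)) * (√n * (ε * (m + m))) * (2 * (ε ^ n * I0 n)) * (ε ^ n * I0 n) := by gcongr
    _ = (n * √n * 2 ^ (n + 3) * I0 n ^ 2) * m / d ^ (n + 1) * (A * ε ^ n) := by
      rw [mul_pow, div_pow]; field_simp; ring
    _ ≤ _ := by
      gcongr; exact (CD_ge n).2.2.1

lemma lat_one_le {x x' : ZLat n} (hne : x ≠ x') : 1 ≤ ‖x - x'‖ := one_le_norm_lat (sub_ne_zero.2 hne)

lemma am_regx (hn : 1 ≤ n) (h : CZO T S A K) {ε : ℝ} (hε : 0 < ε) (x x' y : ZLat n)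
    (hd : 2 * ‖x - x'‖ + 10 ≤ ‖x - y‖) :
    ‖am T A ε x y - am T A ε x' y‖ ≤ CD n * ‖x - x'‖ / ‖x - y‖ ^ (n + 1) := by
  have hA := h.pos
  have hI := I0_pos n
  rcases eq_or_ne x x' with rfl | hne
  · simp
  have hm := lat_one_le hne
  have hdp : 0 < ‖x - y‖ := by linarith
  have e : am T A ε x y - am T A ε x' y = inner ℂ (toL (phc ε x - phc ε x')) (T (phc ε y)) / ((A * ε ^ n : ℝ) : ℂ) := by
    unfold am
    rw [toL_sub (phc_CC hε x) (phc_CC hε x'), inner_sub_left, sub_div]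
  rw [e, norm_div, Complex.norm_real, Real.norm_of_nonneg (by positivity), div_le_iff₀ (by positivity)]
  have sep : ∀ w ∈ cube (lp0 ε x) (ε * (1 + ‖x - x'‖)), ∀ v ∈ cube (lp0 ε y) (ε * 1), ε * (‖x - y‖ / 2) ≤ ‖w - v‖ := by
    intro w hw v hv
    refine le_trans ?_ (cube_sep hn hε hw hv)
    gcongr; linarith
  have hsp : 0 < ε * (‖x - y‖ / 2) := by positivity
  have hns : ∀ w ∈ cube (lp0 ε x) (ε * (1 + ‖x - x'‖)), w ∉ tsupport (phc ε y) := by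
    intro w hw hw2
    have := sep w hw w (phc_tmem hε hw2)
    rw [sub_self, norm_zero] at this; linarith
  have hu0 : lp0 ε x ∈ cube (lp0 ε x) (ε * (1 + ‖x - x'‖)) := by
    intro i; rw [sub_self, abs_zero]; positivity
  have key := pair_bound h (F := phc ε y) (G := phc ε x - phc ε x') (phc_CC hε y) ((phc_CC hε x).sub (phc_CC hε x'))
      (κ := ∫ v, K (lp0 ε x) v * phc ε y v) (by rw [integral_conj, phcd_int hε, map_zero, mul_zero])
      (B := n * (A / (ε * (‖x - y‖ / 2)) ^ (n + 1)) * (√n * (ε * (1 + ‖x - x'‖))) * (ε ^ n * I0 n)) ?_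
  · refine key.trans (le_trans ?_ (reg_arith hA hε hm hdp))
    refine (mul_le_mul_of_nonneg_left (phcd_int_norm hε x x') (by positivity)).trans (le_of_eq ?_)
    ring
  · intro u hu
    have hu1 := phcd_tmem hε (subset_tsupport _ hu)
    refine ⟨hns u hu1, ?_⟩
    rw [← phc_int_norm hε y]
    apply g_diff h (phc_CC hε y) (hns u hu1) (hns _ hu0)
    intro v hv
    refine (k_mvx h (cube_convex _ _) hsp (fun w hw => sep w hw v (phc_mem hε hv)) hu1 hu0).trans ?_
    gcongr
    have := cube_sub_ball _ (by positivity) hu1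
    rwa [mem_closedBall, dist_eq_norm] at this

lemma am_regy (hn : 1 ≤ n) (h : CZO T S A K) {ε : ℝ} (hε : 0 < ε) (x x' y : ZLat n)
    (hd : 2 * ‖x - x'‖ + 10 ≤ ‖x - y‖) :
    ‖am T A ε y x - am T A ε y x'‖ ≤ CD n * ‖x - x'‖ / ‖x - y‖ ^ (n + 1) := by
  have hA := h.pos
  have hI := I0_pos n
  rcases eq_or_ne x x' with rfl | hne
  · simp
  have hm := lat_one_le hne
  have hdp : 0 < ‖x - y‖ := by linarith
  have e : am T A ε y x - am T A ε y x' = inner ℂ (toL (phc ε y)) (T (phc ε x - phc ε x')) / ((A * ε ^ n : ℝ) : ℂ) := by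
    unfold am
    rw [map_sub, inner_sub_right, sub_div]
  rw [e, norm_div, Complex.norm_real, Real.norm_of_nonneg (by positivity), div_le_iff₀ (by positivity)]
  have sep : ∀ w ∈ cube (lp0 ε x) (ε * (1 + ‖x - x'‖)), ∀ v ∈ cube (lp0 ε y) (ε * 1), ε * (‖x - y‖ / 2) ≤ ‖w - v‖ := by
    intro w hw v hv
    refine le_trans ?_ (cube_sep hn hε hw hv)
    gcongr; linarith
  have hsp : 0 < ε * (‖x - y‖ / 2) := by positivity
  have hu0 : lp0 ε x ∈ cube (lp0 ε x) (ε * (1 + ‖x - x'‖)) := by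
    intro i; rw [sub_self, abs_zero]; positivity
  have key := pair_bound h (F := phc ε x - phc ε x') (G := phc ε y) ((phc_CC hε x).sub (phc_CC hε x')) (phc_CC hε y)
      (κ := 0) (by simp)
      (B := n * (A / (ε * (‖x - y‖ / 2)) ^ (n + 1)) * (√n * (ε * (1 + ‖x - x'‖))) * (2 * (ε ^ n * I0 n))) ?_
  · refine key.trans (le_trans ?_ (reg_arith hA hε hm hdp))
    rw [phc_int_norm hε]
  · intro u hu
    have hu1 := phc_mem hε hu
    have hns : u ∉ tsupport (phc ε x - phc ε x') := by
      intro hw2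
      have := sep u (phcd_tmem hε hw2) u hu1
      rw [sub_self, norm_zero] at this; linarith
    refine ⟨hns, ?_⟩
    rw [sub_zero]
    refine (g_bound h ((phc_CC hε x).sub (phc_CC hε x')) hns (κ := K u (lp0 ε x)) (by rw [phcd_int hε, mul_zero])
      (D := n * (A / (ε * (‖x - y‖ / 2)) ^ (n + 1)) * (√n * (ε * (1 + ‖x - x'‖)))) ?_).trans
      (mul_le_mul_of_nonneg_left (phcd_int_norm hε x x') (by positivity))
    intro v hv
    have hv1 := phcd_tmem hε (subset_tsupport _ hv)
    refine (k_mvy h (cube_convex _ _) hsp (fun w hw => sep w hw u hu1) hv1 hu0).trans ?_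
    gcongr
    have := cube_sub_ball _ (by positivity) hv1
    rwa [mem_closedBall, dist_eq_norm] at this
end

lemma chi_lip {n : ℕ} (c : ZLat n) {ρ : ℝ} (hρ : 0 < ρ) (y y' : ZLat n) : |chi c ρ y - chi c ρ y'| ≤ ‖y - y'‖ / ρ := by
  unfold chi
  refine (abs_max_sub_max_le_max _ _ _ _).trans ?_
  rw [sub_self, abs_zero]
  refine max_le (by positivity) ?_
  refine (abs_min_sub_min_le_max _ _ _ _).trans ?_
  rw [sub_self, abs_zero]
  refine max_le (by positivity) ?_
  have : 2 - ‖y - c‖ / ρ - (2 - ‖y' - c‖ / ρ) = (‖y' - c‖ - ‖y - c‖) / ρ := by ring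
  rw [this, abs_div, abs_of_pos hρ]
  gcongr
  refine (abs_norm_sub_norm_le _ _).trans ?_
  rw [sub_sub_sub_cancel_right, norm_sub_rev]

section
variable {n : ℕ} {T S : (EE n → ℂ) →ₗ[ℂ] LL n} {A : ℝ} {K : EE n → EE n → ℂ}

lemma map_comb (U : (EE n → ℂ) →ₗ[ℂ] LL n) (ε : ℝ) (Y : Finset (ZLat n)) (c : ZLat n → ℂ) :
    U (comb ε Y c) = ∑ y ∈ Y, c y • U (phc ε y) := by
  rw [comb_eq, map_sum]; simp_rw [map_smul]

lemma chi_comb_bound (hn : 1 ≤ n) (h : CZO T S A K) {ε : ℝ} (hε : 0 < ε) (c : ZLat n) {ρ : ℝ} (hρ : 1 ≤ ρ) (Y : Finset (ZLat n))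
    (hY : ∀ y, ‖y - c‖ < 2 * ρ → y ∈ Y) :
    ‖T (comb ε Y fun y => (chi c ρ y : ℂ))‖ ^ 2 ≤ BM n * A ^ 2 * (ε * ρ) ^ n ∧
    ‖S (comb ε Y fun y => (chi c ρ y : ℂ))‖ ^ 2 ≤ BM n * A ^ 2 * (ε * ρ) ^ n := by
  have hρ0 : 0 < ρ := by linarith
  apply comb_bound hn h hε hρ Y _ c
  · intro y hy
    rw [chi_eq_zero hρ0, Complex.ofReal_zero]
    by_contra h0; exact hy (hY y (not_le.1 h0))
  · exact chi_norm_le c ρ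
  · intro y hy
    by_contra h0
    apply hy
    rw [chi_eq_zero hρ0 (not_le.1 h0).le, Complex.ofReal_zero]
  · intro y y' hyy
    rw [← Complex.ofReal_sub, Complex.norm_real]
    refine (chi_lip c hρ0 y y').trans ?_
    gcongr

lemma am_test (h : CZO T S A K) {ε : ℝ} (hε : 0 < ε) {ρ : ℝ} (hρ : 1 ≤ ρ) (b : ZLat n → ℂ) (v : LL n)
    (hv : ‖v‖ ^ 2 ≤ BM n * A ^ 2 * (ε * ρ) ^ n) (hb : ∀ x, ‖b x‖ = ‖(inner ℂ (toL (phc ε x)) v : ℂ)‖ / (A * ε ^ n))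
    (Sx : Finset (ZLat n)) : ∑ x ∈ Sx, ‖b x‖ ^ 2 ≤ CD n * ρ ^ n := by
  have hA := h.pos
  have hI := I0_pos n
  have hρ0 : 0 < ρ := by linarith
  simp_rw [hb, div_pow]
  rw [← Finset.sum_div, div_le_iff₀ (by positivity)]
  refine (bessel hε Sx v).trans ?_
  calc ε ^ n * I0 n * ‖v‖ ^ 2 ≤ ε ^ n * I0 n * (BM n * A ^ 2 * (ε * ρ) ^ n) := by gcongr
    _ = (I0 n * BM n) * ρ ^ n * (A * ε ^ n) ^ 2 := by rw [mul_pow ε ρ]; ring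
    _ ≤ _ := by gcongr; exact (CD_ge n).2.2.2

lemma am_dcz (hn : 1 ≤ n) (h : CZO T S A K) {ε : ℝ} (hε : 0 < ε) : DCZ n (CD n) (am T A ε) where
  size := am_size hn h hε
  reg := am_regx hn h hε
  test := by
    intro c ρ hρ Y hY Sx
    have hA := h.pos
    apply am_test h hε hρ (fun x => ∑ y ∈ Y, am T A ε x y * (chi c ρ y : ℂ)) _ (chi_comb_bound hn h hε c hρ Y hY).1
    intro x
    rw [map_comb, inner_sum, ← Real.norm_of_nonneg (show 0 ≤ A * ε ^ n by positivity), ← Complex.norm_real, ← norm_div, Finset.sum_div]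
    congr 1
    refine Finset.sum_congr rfl fun y _ => ?_
    rw [inner_smul_right]; unfold am; ring

lemma am_dcz' (hn : 1 ≤ n) (h : CZO T S A K) {ε : ℝ} (hε : 0 < ε) : DCZ n (CD n) (fun x y => am T A ε y x) where
  size := by
    intro x y
    rw [norm_sub_rev]; exact am_size hn h hε y x
  reg := am_regy hn h hε
  test := by
    intro c ρ hρ Y hY Sx
    have hA := h.pos
    apply am_test h hε hρ (fun x => ∑ y ∈ Y, am T A ε y x * (chi c ρ y : ℂ)) _ (chi_comb_bound hn h hε c hρ Y hY).2
    intro x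
    rw [← norm_inner_symm, map_comb, sum_inner, ← Real.norm_of_nonneg (show 0 ≤ A * ε ^ n by positivity), ← Complex.norm_real, ← norm_div, Finset.sum_div]
    congr 1
    refine Finset.sum_congr rfl fun y _ => ?_
    rw [inner_smul_left, Complex.conj_ofReal, ← h.adj _ _ (phc_CC hε x) (phc_CC hε y)]; unfold am; ring

/-- discrete bound transferred to combinations -/
lemma comb_pair (hn : 1 ≤ n) : ∃ C' : ℝ, 0 < C' ∧ ∀ (T S : (EE n → ℂ) →ₗ[ℂ] LL n) (A : ℝ) (K : EE n → EE n → ℂ),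
    CZO T S A K → ∀ ε : ℝ, 0 < ε → ∀ (N : ℕ) (f g : ZLat n → ℂ),
    (∀ x, x ∉ bx n (1 * 2 ^ N) → f x = 0) → (∀ x, x ∉ bx n (1 * 2 ^ N) → g x = 0) →
    ‖(inner ℂ (toL (comb ε (bx n (1 * 2 ^ N)) g)) (T (comb ε (bx n (1 * 2 ^ N)) f)) : ℂ)‖ ≤
      C' * A * ε ^ n * (∑ x ∈ bx n (1 * 2 ^ N), ‖f x‖ ^ 2 + ∑ x ∈ bx n (1 * 2 ^ N), ‖g x‖ ^ 2) := by
  obtain ⟨C', hC', H⟩ := disc_pre hn (CD_pos n)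
  refine ⟨C', hC', fun T S A K h ε hε N f g hf hg => ?_⟩
  have hA := h.pos
  have h1 := H _ (am_dcz hn h hε) (am_dcz' hn h hε) N f (fun x => (starRingEnd ℂ) (g x)) hf (fun x hx => by
    show (starRingEnd ℂ) (g x) = 0
    rw [hg x hx, map_zero])
  simp only [RCLike.norm_conj] at h1
  have e : inner ℂ (toL (comb ε (bx n (1 * 2 ^ N)) g)) (T (comb ε (bx n (1 * 2 ^ N)) f)) =
      ((A * ε ^ n : ℝ) : ℂ) * ∑ x ∈ bx n (1 * 2 ^ N), ∑ y ∈ bx n (1 * 2 ^ N), am T A ε x y * f y * (starRingEnd ℂ) (g x) := by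
    rw [map_comb, comb_eq, toL_sum _ fun y => (phc_CC hε y).smul _, sum_inner, Finset.mul_sum]
    refine Finset.sum_congr rfl fun x _ => ?_
    rw [inner_sum, Finset.mul_sum]
    refine Finset.sum_congr rfl fun y _ => ?_
    rw [toL_smul _ (phc_CC hε x), inner_smul_left, inner_smul_right]
    unfold am
    have : ((A * ε ^ n : ℝ) : ℂ) ≠ 0 := by
      rw [Ne, Complex.ofReal_eq_zero]; positivity
    field_simp
  rw [e, norm_mul, Complex.norm_real, Real.norm_of_nonneg (by positivity)]
  calc _ ≤ A * ε ^ n * (C' * (∑ x ∈ bx n (1 * 2 ^ N), ‖f x‖ ^ 2 + ∑ x ∈ bx n (1 * 2 ^ N), ‖g x‖ ^ 2)) := by gcongr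
    _ = _ := by ring
end

def fb {n : ℕ} (ε : ℝ) (f : EE n → ℂ) (y : ZLat n) : ℂ := inner ℂ (toL (phc ε y)) (toL f) / ((ε ^ n * I0 n : ℝ) : ℂ)

section
variable {n : ℕ} {f : EE n → ℂ} {ε : ℝ}

lemma fb_sub (hf : CC f) (hε : 0 < ε) (y : ZLat n) (w : ℂ) {D : ℝ} (hD : ∀ u, phc ε y u ≠ 0 → ‖f u - w‖ ≤ D) :
    ‖fb ε f y - w‖ ≤ D := by
  have hI := I0_pos n
  have hV : 0 < ε ^ n * I0 n := by positivity
  have hVc : ((ε ^ n * I0 n : ℝ) : ℂ) ≠ 0 := by exact_mod_cast hV.ne'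
  have hi : Integrable (fun u => f u * phc ε y u) (volume : Measure (EE n)) :=
    (hf.1.continuous.mul (phc_CC hε y).1.continuous).integrable_of_hasCompactSupport hf.2.mul_right
  have e : fb ε f y - w = (∫ u, (f u - w) * phc ε y u) / ((ε ^ n * I0 n : ℝ) : ℂ) := by
    unfold fb
    rw [eq_div_iff hVc, sub_mul, div_mul_cancel₀ _ hVc, inner_toL (phc_CC hε y), ← phc_int hε y, ← integral_const_mul]
    simp_rw [sub_mul]
    rw [integral_sub hi ((phc_CC hε y).integrable.const_mul _)]
    congr 1
    apply integral_congr_ae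
    filter_upwards [toL_ae hf] with x hx
    rw [hx]; congr 1
    exact Complex.conj_ofReal _
  rw [e, norm_div, Complex.norm_real, Real.norm_of_nonneg hV.le, div_le_iff₀ hV, ← phc_int_norm hε y, ← integral_const_mul]
  apply norm_integral_le_of_norm_le ((phc_CC hε y).integrable.norm.const_mul _)
  refine Filter.Eventually.of_forall fun u => ?_
  rw [norm_mul]
  by_cases hv : phc ε y u = 0
  · simp [hv]
  · gcongr; exact hD u hv

lemma fb_l2 (hε : 0 < ε) (S : Finset (ZLat n)) : ε ^ n * ∑ y ∈ S, ‖fb ε f y‖ ^ 2 ≤ ‖toL f‖ ^ 2 / I0 n := by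
  have hI := I0_pos n
  have hV : 0 < ε ^ n * I0 n := by positivity
  have h := bessel hε S (toL f)
  unfold fb
  simp_rw [norm_div, Complex.norm_real, Real.norm_of_nonneg hV.le, div_pow]
  rw [← Finset.sum_div, le_div_iff₀ hI]
  have h2 : ε ^ n * (((∑ y ∈ S, ‖(inner ℂ (toL (phc ε y)) (toL f) : ℂ)‖ ^ 2) / (ε ^ n * I0 n) ^ 2)) * I0 n =
    (∑ y ∈ S, ‖(inner ℂ (toL (phc ε y)) (toL f) : ℂ)‖ ^ 2) / (ε ^ n * I0 n) := by field_simp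
  rw [h2, div_le_iff₀ hV, mul_comm]
  exact h

lemma fb_near (hf : CC f) (hε : 0 < ε) {Λ : ℝ} (hΛ : 0 ≤ Λ) (hl : ∀ u v, ‖f u - f v‖ ≤ Λ * ‖u - v‖) (y : ZLat n) {z : EE n} {t : ℝ}
    (ht : 0 ≤ t) (hz : z ∈ cube (lp0 ε y) (ε * t)) : ‖fb ε f y - f z‖ ≤ Λ * (√n * (ε * (1 + t))) := by
  apply fb_sub hf hε
  intro u hu
  refine (hl u z).trans ?_
  gcongr
  apply norm_le_coord (by positivity)
  intro i
  have h1 := phc_mem hε hu i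
  have h2 := hz i
  have : (u - z) i = (u i - lp0 ε y i) - (z i - lp0 ε y i) := by simp
  rw [this]
  refine (abs_sub _ _).trans ?_
  linarith

lemma mem_bx {R : ℕ} {x : ZLat n} : x ∈ bx n R ↔ ∀ i, -(R : ℤ) ≤ x i ∧ x i < R := by
  simp only [bx, Fintype.mem_piFinset, Finset.mem_Ico]

lemma lp0_cube (hε : 0 < ε) {y y' : ZLat n} {t : ℝ} (h : ‖y - y'‖ ≤ t) : lp0 ε y ∈ cube (lp0 ε y') (ε * t) := by
  intro i
  have h2 := abs_coord_le (y - y') i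
  rw [lp0_apply, lp0_apply, ← mul_sub, abs_mul, abs_of_pos hε]
  rw [Pi.sub_apply] at h2; push_cast at h2
  gcongr; linarith

lemma approx (hn : 1 ≤ n) {T S : (EE n → ℂ) →ₗ[ℂ] LL n} {A : ℝ} {K : EE n → EE n → ℂ} (h : CZO T S A K) (hf : CC f) :
    ∃ B : ℝ, 0 ≤ B ∧ ∀ ε : ℝ, 0 < ε → ε ≤ 1 → ∃ N0 : ℕ, ∀ N, N0 ≤ N →
      (∀ x, x ∉ bx n (1 * 2 ^ N) → fb ε f x = 0) ∧ ‖T (comb ε (bx n (1 * 2 ^ N)) (fb ε f))‖ ≤ B ∧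
      ‖toL f - toL (comb ε (bx n (1 * 2 ^ N)) (fb ε f))‖ ≤ B * ε := by
  have hA := h.pos
  obtain ⟨Λ', hΛ'⟩ := hf.1.lipschitzWith_of_hasCompactSupport hf.2 one_ne_zero
  obtain ⟨Λ, hΛ, hl⟩ : ∃ Λ : ℝ, 0 ≤ Λ ∧ ∀ u v, ‖f u - f v‖ ≤ Λ * ‖u - v‖ :=
    ⟨Λ', Λ'.2, fun u v => by simpa [dist_eq_norm] using hΛ'.dist_le_mul u v⟩
  obtain ⟨M0', hM0'⟩ := hf.1.continuous.bounded_above_of_compact_support hf.2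
  obtain ⟨M0, hM0p, hM0⟩ : ∃ M0 : ℝ, 0 < M0 ∧ ∀ x, ‖f x‖ ≤ M0 := ⟨|M0'| + 1, by positivity, fun x => by
    linarith [hM0' x, le_abs_self M0']⟩
  obtain ⟨R', hR'⟩ := hf.2.isCompact.isBounded.subset_closedBall (0 : EE n)
  obtain ⟨R, hR, hRf⟩ : ∃ R : ℝ, 0 < R ∧ ∀ x, f x ≠ 0 → ∀ i, |x i| ≤ R := ⟨|R'| + 1, by positivity, fun x hx i => by
    have := hR' (subset_tsupport _ hx)
    rw [mem_closedBall, dist_zero_right] at this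
    linarith [coord_le_norm x i, le_abs_self R']⟩
  have hL := eL_pos
  have hn1 : 1 ≤ √(n : ℝ) := by rw [Real.one_le_sqrt]; exact_mod_cast hn
  set r := √(n : ℝ) * (R + 2) with hr
  have hr0 : 0 < r := by positivity
  set M := M0 + 5 ^ n * (Λ * (√n * 4)) * eL * r with hM
  have hMp : 0 < M := by positivity
  set vol := (volume : Measure (EE n)).real (cube (lp0 1 (0 : ZLat n)) (R + 2)) with hvol
  have hvol0 : 0 ≤ vol := measureReal_nonneg
  set B1 := √(M ^ 2 * A ^ 2 * r ^ n) with hB1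
  set B2 := √((Λ * (√n * 2)) ^ 2 * vol) with hB2
  refine ⟨B1 + B2, by positivity, fun ε hε hε1 => ?_⟩
  -- support of the averages
  have hsupp : ∀ y, fb ε f y ≠ 0 → ‖y‖ ≤ R / ε + 1 := by
    intro y hy
    obtain ⟨u, hu1, hu2⟩ : ∃ u, phc ε y u ≠ 0 ∧ f u ≠ 0 := by
      by_contra hc
      push Not at hc
      apply hy
      have := fb_sub hf hε y 0 (D := 0) (fun u hu => by rw [hc u hu]; simp)
      simpa using this
    rw [pi_norm_le_iff_of_nonneg (by positivity)]
    intro i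
    rw [Int.norm_eq_abs]
    have h1 := phc_mem hε hu1 i
    have h2 := hRf u hu2 i
    rw [lp0_apply] at h1
    have h3 : ε * |(y i : ℝ)| ≤ R + ε := by
      rw [← abs_of_pos hε, ← abs_mul, abs_of_pos hε]
      have : ε * (y i : ℝ) = u i - (u i - ε * y i) := by ring
      rw [this]
      refine (abs_sub _ _).trans ?_
      linarith
    have h4 : R / ε + 1 = (R + ε) / ε := by field_simp
    rw [h4, le_div_iff₀ hε]; linarith
  obtain ⟨N0, hN0⟩ := pow_unbounded_of_one_lt (R / ε + 1) (one_lt_two (α := ℝ))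
  refine ⟨N0, fun N hN => ?_⟩
  have hN1 : R / ε + 1 < 2 ^ N := hN0.trans_le (pow_le_pow_right₀ one_le_two hN)
  have hbx : ∀ x : ZLat n, x ∉ bx n (1 * 2 ^ N) → fb ε f x = 0 := by
    intro x hx
    by_contra h0
    apply hx
    have h1 := hsupp x h0
    rw [mem_bx]
    intro i
    have h2 := (abs_coord_le x i).trans (h1.trans hN1.le)
    have h3 := (abs_coord_le x i).trans_lt (h1.trans_lt hN1)
    rw [abs_lt] at h3
    rw [one_mul]
    push_cast
    constructor
    · have : (-(2 ^ N : ℤ) : ℝ) < x i := by push_cast; exact h3.1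
      have : -(2 ^ N : ℤ) < x i := by exact_mod_cast this
      exact this.le
    · exact_mod_cast h3.2
  set W := comb ε (bx n (1 * 2 ^ N)) (fb ε f) with hW
  have hWs : tsupport W ⊆ cube (lp0 1 (0 : ZLat n)) (R + 2) := by
    have h1 := comb_tsupp hε (bx n (1 * 2 ^ N)) (fb ε f) 0 (R := R / ε + 1) (fun y hy => by rw [sub_zero]; exact hsupp y hy)
    refine h1.trans ?_
    intro x hx i
    have := hx i
    simp only [lp0_apply, Pi.zero_apply, Int.cast_zero, mul_zero] at this ⊢
    refine this.trans ?_
    have : ε * (R / ε + 1 + 1) = R + 2 * ε := by field_simp; ring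
    rw [this]; linarith
  have hWc : ∀ z, ‖W z - f z‖ ≤ Λ * (√n * 2) * ε := by
    intro z
    have e1 : f z = ∑ y ∈ bx n (1 * 2 ^ N), f z * (ph ε y z : ℂ) := by
      by_cases h0 : f z = 0
      · simp [h0]
      rw [← Finset.mul_sum, ← Complex.ofReal_sum]
      have e2 : bx n (1 * 2 ^ N) = cbox (fun _ => -(2 ^ N : ℤ)) (fun _ => (2 ^ N : ℤ) - 1) := by
        ext y
        rw [mem_bx]
        simp only [cbox, Fintype.mem_piFinset, Finset.mem_Icc]
        refine forall_congr' fun i => ?_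
        push_cast
        constructor <;> rintro ⟨p, q⟩ <;> constructor <;> omega
      rw [e2, ph_sum, Complex.ofReal_one, mul_one]
      intro i
      have h1 := hRf z h0 i
      have h2 : |z i / ε| ≤ R / ε := by rw [abs_div, abs_of_pos hε]; gcongr
      rw [abs_le] at h2
      push_cast
      constructor <;> linarith
    have e3 : W z - f z = ∑ y ∈ bx n (1 * 2 ^ N), (fb ε f y - f z) * (ph ε y z : ℂ) := by
      conv_lhs => rw [e1]
      simp_rw [sub_mul]
      rw [Finset.sum_sub_distrib]; rfl
    rw [e3]
    calc _ ≤ ∑ y ∈ bx n (1 * 2 ^ N), (Λ * (√n * 2) * ε) * ph ε y z := by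
          refine (norm_sum_le _ _).trans (Finset.sum_le_sum fun y _ => ?_)
          rw [norm_mul, Complex.norm_real, Real.norm_of_nonneg (ph_nonneg _ _ _)]
          by_cases h0 : ph ε y z = 0
          · simp [h0]
          gcongr
          · exact ph_nonneg _ _ _
          have := fb_near hf hε hΛ hl y zero_le_one (z := z) (by rw [mul_one]; exact ph_supp hε h0)
          refine this.trans (le_of_eq ?_); ring
      _ = (Λ * (√n * 2) * ε) * ∑ y ∈ bx n (1 * 2 ^ N), ph ε y z := by rw [Finset.mul_sum]
      _ ≤ (Λ * (√n * 2) * ε) * 1 := by gcongr; exact ph_sum_le _ _ _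
      _ = _ := mul_one _
  refine ⟨hbx, ?_, ?_⟩
  · have h1 := (bump_gen h (comb_contDiff ε (bx n (1 * 2 ^ N)) (fb ε f)) hr0 (hWs.trans (cube_sub_ball _ (by positivity))) hMp ?_ ?_).1
    · have h2 := Real.le_sqrt_of_sq_le h1
      have : 0 ≤ B2 := Real.sqrt_nonneg _
      linarith
    · intro x
      have := comb_norm ε (bx n (1 * 2 ^ N)) (fb ε f) hM0p.le (fun y => by
        have := fb_sub hf hε y 0 (D := M0) (fun u _ => by rw [sub_zero]; exact hM0 u)
        rwa [sub_zero] at this) x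
      have : 0 ≤ 5 ^ n * (Λ * (√n * 4)) * eL * r := by positivity
      linarith
    · intro i x
      have h1 := comb_deriv hL eL_lip hε (bx n (1 * 2 ^ N)) (fb ε f) hbx (δ := Λ * (√n * 4) * ε) (by positivity) (fun y y' hyy => by
        have a1 := fb_near hf hε hΛ hl y le_rfl (z := lp0 ε y) (lp0_cube hε (by simp))
        have a2 := fb_near hf hε hΛ hl y' zero_le_two (z := lp0 ε y) (lp0_cube hε hyy)
        rw [norm_sub_rev] at a2
        refine (norm_sub_le_norm_sub_add_norm_sub _ (f (lp0 ε y)) _).trans ?_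
        refine (add_le_add a1 a2).trans (le_of_eq ?_); ring) x i
      refine h1.trans ?_
      rw [le_div_iff₀ hr0]
      have : 5 ^ n * (Λ * (√n * 4) * ε) * eL / ε * r = 5 ^ n * (Λ * (√n * 4)) * eL * r := by field_simp
      rw [this]; linarith
  · rw [← toL_sub hf (comb_CC hε _ _)]
    have h1 : ‖toL (f - W)‖ ^ 2 ≤ (B2 * ε) ^ 2 := by
      rw [toL_norm_sq (hf.sub (comb_CC hε _ _)), mul_pow, hB2, Real.sq_sqrt (by positivity)]
      have hms : MeasurableSet (cube (lp0 1 (0 : ZLat n)) (R + 2)) := (cube_closed _ _).measurableSet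
      have hfin : (volume : Measure (EE n)) (cube (lp0 1 (0 : ZLat n)) (R + 2)) ≠ ⊤ :=
        (cube_compact (lp0 1 (0 : ZLat n)) (by positivity)).measure_lt_top.ne
      calc ∫ x, ‖(f - W) x‖ ^ 2 ≤ ∫ x, (cube (lp0 1 (0 : ZLat n)) (R + 2)).indicator (fun _ => (Λ * (√n * 2) * ε) ^ 2) x := by
            apply integral_mono_of_nonneg
            · exact Filter.Eventually.of_forall fun x => by positivity
            · exact (integrable_indicator_iff hms).2 (integrableOn_const hfin)
            · refine Filter.Eventually.of_forall fun x => ?_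
              show ‖(f - W) x‖ ^ 2 ≤ _
              by_cases hx : x ∈ cube (lp0 1 (0 : ZLat n)) (R + 2)
              · rw [Set.indicator_of_mem hx]
                gcongr
                rw [Pi.sub_apply, norm_sub_rev]; exact hWc x
              · rw [Set.indicator_of_notMem hx]
                have w0 : W x = 0 := image_eq_zero_of_notMem_tsupport fun h0 => hx (hWs h0)
                have f0 : f x = 0 := by
                  by_contra h0
                  apply hx
                  intro i
                  simp only [lp0_apply, Pi.zero_apply, Int.cast_zero, mul_zero, sub_zero]
                  linarith [hRf x h0 i]
                simp [w0, f0]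
        _ = (Λ * (√n * 2)) ^ 2 * vol * ε ^ 2 := by
            rw [integral_indicator_const _ hms, smul_eq_mul, ← hvol]; ring
    have h2 := (pow_le_pow_iff_left₀ (norm_nonneg _) (by positivity) two_ne_zero).1 h1
    refine h2.trans ?_
    have : 0 ≤ B1 := Real.sqrt_nonneg _
    gcongr; linarith
end

lemma pair_main {n : ℕ} (hn : 1 ≤ n) : ∃ C : ℝ, 0 < C ∧ ∀ (T S : (EE n → ℂ) →ₗ[ℂ] LL n) (A : ℝ) (K : EE n → EE n → ℂ),
    CZO T S A K → ∀ f g : EE n → ℂ, CC f → CC g →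
    ‖(inner ℂ (toL g) (T f) : ℂ)‖ ≤ C * A * (‖toL f‖ ^ 2 + ‖toL g‖ ^ 2) := by
  obtain ⟨C', hC', H⟩ := comb_pair hn
  have hI := I0_pos n
  refine ⟨C' / I0 n, by positivity, fun T S A K h f g hf hg => ?_⟩
  have hA := h.pos
  obtain ⟨Bf, hBf, Hf⟩ := approx hn h hf
  obtain ⟨Bg, hBg, Hg⟩ := approx hn h hg
  set P := ‖S g‖ * Bf + Bg * Bf with hP
  have hP0 : 0 ≤ P := by positivity
  have main : ∀ ε : ℝ, 0 < ε → ε ≤ 1 →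
      ‖(inner ℂ (toL g) (T f) : ℂ)‖ ≤ C' / I0 n * A * (‖toL f‖ ^ 2 + ‖toL g‖ ^ 2) + P * ε := by
    intro ε hε hε1
    obtain ⟨N1, h1⟩ := Hf ε hε hε1
    obtain ⟨N2, h2⟩ := Hg ε hε hε1
    obtain ⟨f1, f2, f3⟩ := h1 (max N1 N2) (le_max_left _ _)
    obtain ⟨g1, _, g3⟩ := h2 (max N1 N2) (le_max_right _ _)
    have h3 := H T S A K h ε hε (max N1 N2) _ _ f1 g1
    have h4 := fb_l2 (f := f) hε (bx n (1 * 2 ^ (max N1 N2)))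
    have h5 := fb_l2 (f := g) hε (bx n (1 * 2 ^ (max N1 N2)))
    have hfc : CC (comb ε (bx n (1 * 2 ^ (max N1 N2))) (fb ε f)) := comb_CC hε _ _
    generalize comb ε (bx n (1 * 2 ^ (max N1 N2))) (fb ε f) = F at *
    generalize comb ε (bx n (1 * 2 ^ (max N1 N2))) (fb ε g) = G at *
    have e : inner ℂ (toL g) (T f) = inner ℂ (S g) (toL f - toL F) + (inner ℂ (toL g - toL G) (T F) + inner ℂ (toL G) (T F)) := by
      rw [inner_sub_right, inner_sub_left, h.adj f g hf hg, ← h.adj F g hfc hg]; ring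
    rw [e]
    refine (norm_add_le _ _).trans ?_
    have b1 : ‖(inner ℂ (S g) (toL f - toL F) : ℂ)‖ ≤ ‖S g‖ * (Bf * ε) :=
      (norm_inner_le_norm _ _).trans (by gcongr)
    have b2 : ‖(inner ℂ (toL g - toL G) (T F) : ℂ)‖ ≤ (Bg * ε) * Bf :=
      (norm_inner_le_norm _ _).trans (by gcongr)
    have b3 : ‖(inner ℂ (toL G) (T F) : ℂ)‖ ≤ C' / I0 n * A * (‖toL f‖ ^ 2 + ‖toL g‖ ^ 2) := by
      refine h3.trans ?_
      calc _ = C' * A * (ε ^ n * ∑ x ∈ bx n (1 * 2 ^ max N1 N2), ‖fb ε f x‖ ^ 2 + ε ^ n * ∑ x ∈ bx n (1 * 2 ^ max N1 N2), ‖fb ε g x‖ ^ 2) := by ring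
        _ ≤ C' * A * (‖toL f‖ ^ 2 / I0 n + ‖toL g‖ ^ 2 / I0 n) := by gcongr
        _ = _ := by ring
    have b4 := norm_add_le (inner ℂ (toL g - toL G) (T F)) (inner ℂ (toL G) (T F))
    have e2 : P * ε = ‖S g‖ * (Bf * ε) + (Bg * ε) * Bf := by rw [hP]; ring
    rw [e2]; linarith
  apply le_of_forall_pos_le_add
  intro δ hδ
  refine (main (min 1 (δ / (P + 1))) (by positivity) (min_le_left _ _)).trans ?_
  gcongr
  calc P * min 1 (δ / (P + 1)) ≤ P * (δ / (P + 1)) := by gcongr; exact min_le_right _ _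
    _ ≤ δ := by
      rw [mul_div_assoc', div_le_iff₀ (by positivity)]; nlinarith

lemma dense_toL (n : ℕ) : Dense {v : LL n | ∃ g, CC g ∧ toL g = v} := by
  refine (MeasureTheory.Lp.dense_hasCompactSupport_contDiff (F := ℂ) (μ := (volume : Measure (EE n))) (p := 2) (by simp)).mono ?_
  rintro v ⟨g, h1, h2, h3⟩
  have hg : CC g := ⟨h3.of_le (by exact_mod_cast le_top), h2⟩
  refine ⟨g, hg, ?_⟩
  apply Lp.ext
  exact (toL_ae hg).trans h1.symm

lemma op_main {n : ℕ} (hn : 1 ≤ n) : ∃ C : ℝ, 0 < C ∧ ∀ (T S : (EE n → ℂ) →ₗ[ℂ] LL n) (A : ℝ) (K : EE n → EE n → ℂ),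
    CZO T S A K → ∀ f : EE n → ℂ, CC f → ‖T f‖ ≤ C * A * ‖toL f‖ := by
  obtain ⟨C, hC, H⟩ := pair_main hn
  refine ⟨2 * C, by positivity, fun T S A K h f hf => ?_⟩
  have hA := h.pos
  have h1 : ∀ v : LL n, ‖(inner ℂ v (T f) : ℂ)‖ ≤ C * A * (‖toL f‖ ^ 2 + ‖v‖ ^ 2) := by
    intro v
    refine isClosed_property (p := fun v : LL n => ‖(inner ℂ v (T f) : ℂ)‖ ≤ C * A * (‖toL f‖ ^ 2 + ‖v‖ ^ 2))
      (e := Subtype.val) (dense_toL n).denseRange_val ?_ ?_ v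
    · apply isClosed_le <;> fun_prop
    · rintro ⟨_, g, hg, rfl⟩
      exact H T S A K h f g hf hg
  set D := C * A with hD
  have hD0 : 0 < D := by positivity
  have h2 := h1 (((1 / (2 * D) : ℝ) : ℂ) • T f)
  have hs : (0 : ℝ) < 1 / (2 * D) := by positivity
  rw [inner_smul_left, inner_self_eq_norm_sq_to_K, norm_smul, norm_mul, RCLike.norm_conj, Complex.norm_real,
    Real.norm_of_nonneg hs.le, norm_pow, RCLike.norm_ofReal, abs_of_nonneg (norm_nonneg _)] at h2
  have h3 : ‖T f‖ ^ 2 ≤ (2 * D * ‖toL f‖) ^ 2 := by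
    have e1 : D * (‖toL f‖ ^ 2 + (1 / (2 * D) * ‖T f‖) ^ 2) = D * ‖toL f‖ ^ 2 + ‖T f‖ ^ 2 / (4 * D) := by
      field_simp; ring
    have e2 : 1 / (2 * D) * ‖T f‖ ^ 2 = 2 * (‖T f‖ ^ 2 / (4 * D)) := by field_simp; ring
    rw [e1, e2] at h2
    have h4 : ‖T f‖ ^ 2 / (4 * D) ≤ D * ‖toL f‖ ^ 2 := by linarith
    rw [div_le_iff₀ (by positivity)] at h4
    calc _ ≤ _ := h4
      _ = _ := by ring
  have h5 := (pow_le_pow_iff_left₀ (norm_nonneg _) (by positivity) two_ne_zero).1 h3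
  calc _ ≤ _ := h5
    _ = _ := by rw [hD]; ring

def CCs (n : ℕ) : Submodule ℂ (EE n → ℂ) where
  carrier := {f | CC f}
  add_mem' := fun h h' => CC.add h h'
  zero_mem' := CC.zero
  smul_mem' := fun c _ h => CC.smul c h

def toLlin (n : ℕ) : CCs n →ₗ[ℂ] LL n where
  toFun f := toL f.1
  map_add' f g := toL_add f.2 g.2
  map_smul' c f := toL_smul c f.2

lemma ext_main {n : ℕ} (T : (EE n → ℂ) →ₗ[ℂ] LL n) {C : ℝ} (hC : 0 ≤ C) (h : ∀ f : EE n → ℂ, CC f → ‖T f‖ ≤ C * ‖toL f‖) :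
    ∃ Tbar : LL n →L[ℂ] LL n, ‖Tbar‖ ≤ C ∧ ∀ f, CC f → Tbar (toL f) = T f := by
  have hd : DenseRange (toLlin n) := by
    refine (dense_toL n).mono ?_
    rintro v ⟨g, hg, rfl⟩
    exact ⟨⟨g, hg⟩, rfl⟩
  have hb : ∀ x, ‖(T.comp (CCs n).subtype) x‖ ≤ C * ‖toLlin n x‖ := fun x => h x.1 x.2
  refine ⟨(T.comp (CCs n).subtype).extendOfNorm (toLlin n), LinearMap.opNorm_extendOfNorm_le hd hC hb, fun f hf => ?_⟩
  exact LinearMap.extendOfNorm_eq hd ⟨C, hb⟩ ⟨f, hf⟩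

/-- **A `T(1)` theorem on `ℝⁿ`.**  For every `n ≥ 1` there is `C₀ > 0` such that:
if `T` is linear on `C¹_c(ℝⁿ)` with formal adjoint `T*`, satisfies the bump estimates
`‖Tω‖₂, ‖T*ω‖₂ ≤ A r^{n/2}` for all `r`-bump functions, and is represented off the
diagonal by a kernel `K` which is `C¹` off the diagonal and satisfies the standard
Calderón–Zygmund size and first-derivative estimates with constant `A`, then `T`
extends to a bounded operator on `L²(ℝⁿ)` of norm at most `C₀ A`. -/
theorem statement_0 (n : ℕ) (hn : 1 ≤ n) :
    ∃ C₀ : ℝ, 0 < C₀ ∧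
    ∀ (T Tstar : (EuclideanSpace ℝ (Fin n) → ℂ) →ₗ[ℂ]
        Lp ℂ 2 (volume : Measure (EuclideanSpace ℝ (Fin n))))
      (A : ℝ), 0 < A →
      -- `T*` is a formal adjoint of `T` on `C¹_c`
      (∀ f g : EuclideanSpace ℝ (Fin n) → ℂ,
        ContDiff ℝ 1 f → HasCompactSupport f → ContDiff ℝ 1 g → HasCompactSupport g →
        ∫ x, (T f : EuclideanSpace ℝ (Fin n) → ℂ) x * (starRingEnd ℂ) (g x) =
          ∫ x, f x * (starRingEnd ℂ) ((Tstar g : EuclideanSpace ℝ (Fin n) → ℂ) x)) →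
      -- (i) bump estimates
      (∀ r : ℝ, 0 < r → ∀ ω, IsBump n r ω →
        ‖T ω‖ ≤ A * r ^ ((n : ℝ) / 2) ∧ ‖Tstar ω‖ ≤ A * r ^ ((n : ℝ) / 2)) →
      -- (ii), (iii) kernel representation and Calderón–Zygmund estimates
      (∃ K : EuclideanSpace ℝ (Fin n) → EuclideanSpace ℝ (Fin n) → ℂ,
        ContDiffOn ℝ 1 (fun p : EuclideanSpace ℝ (Fin n) × EuclideanSpace ℝ (Fin n) =>
          K p.1 p.2) {p | p.1 ≠ p.2} ∧
        (∀ F, ContDiff ℝ 1 F → HasCompactSupport F →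
          ∀ᵐ x ∂(volume : Measure (EuclideanSpace ℝ (Fin n))), x ∉ tsupport F →
            (T F : EuclideanSpace ℝ (Fin n) → ℂ) x = ∫ y, K x y * F y) ∧
        (∀ x y, x ≠ y → ‖K x y‖ ≤ A / ‖x - y‖ ^ n) ∧
        (∀ i : Fin n, ∀ x y, x ≠ y →
          ‖fderiv ℝ (fun x' => K x' y) x (EuclideanSpace.single i 1)‖ ≤ A / ‖x - y‖ ^ (n + 1) ∧
          ‖fderiv ℝ (fun y' => K x y') y (EuclideanSpace.single i 1)‖ ≤ A / ‖x - y‖ ^ (n + 1))) →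
      ∃ Tbar : Lp ℂ 2 (volume : Measure (EuclideanSpace ℝ (Fin n))) →L[ℂ]
          Lp ℂ 2 (volume : Measure (EuclideanSpace ℝ (Fin n))),
        ‖Tbar‖ ≤ C₀ * A ∧
        ∀ f, ContDiff ℝ 1 f → HasCompactSupport f →
          ∀ hm : MemLp f 2 (volume : Measure (EuclideanSpace ℝ (Fin n))),
            Tbar (hm.toLp f) = T f := by
  obtain ⟨C, hC, H⟩ := op_main hn
  refine ⟨C, hC, fun T S A hA hadj hbump hK => ?_⟩
  obtain ⟨K, hkc, hrep, hsize, hder⟩ := hK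
  have h : CZO T S A K :=
    { pos := hA
      adj := fun f g hf hg => by
        rw [inner_toL hg, inner_toL' hf]
        exact hadj f g hf.1 hf.2 hg.1 hg.2
      bump := hbump
      kc := hkc
      rep := fun F hF => hrep F hF.1 hF.2
      size := hsize
      der := hder }
  obtain ⟨Tbar, h1, h2⟩ := ext_main T (by positivity) (H T S A K h)
  refine ⟨Tbar, h1, fun f hf hfc hm => ?_⟩
  rw [← toL_eq hm]
  exact h2 f ⟨hf, hfc⟩
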